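/- For every dimension n ≥ 1 there exists a constant C₀ > 0 as follows. Suppose T : C¹_c(ℝⁿ) → L²(ℝⁿ) is linear and has a formal adjoint T* : C¹_c(ℝⁿ) → L²(ℝⁿ), and suppose A > 0 is such that: (i) ‖Tω‖_{L²} ≤ A r^{n/2} and ‖T*ω‖_{L²} ≤ A r^{n/2} for every r > 0 and every r-bump function ω; (ii) there is a kernel K(x,y), C¹ off the diagonal of ℝⁿ × ℝⁿ, such that for every F ∈ C¹_c(ℝⁿ) and every x outside supp F one has (TF)(x) = ∫_{ℝⁿ} K(x,y)F(y) dy; (iii) |K(x,y)| ≤ A|x−y|^{−n} for all x ≠ y, and |∂_{x_i}K(x,y)| ≤ A|x−y|^{−(n+1)} and |∂_{y_i}K(x,y)| ≤ A|x−y|^{−(n+1)} for every i = 1,…,n and all x ≠ y. Then T extends to a bounded linear operator on L²(ℝⁿ) with operator norm ‖T‖ ≤ C₀ A. -/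

import Mathlib

open MeasureTheory Metric

noncomputable section

/-- An `r`-bump function on `ℝⁿ`: a `C¹` function supported in some ball of radius `r`,
with `‖ω‖_∞ ≤ 1` and `‖∂_jω‖_∞ ≤ 1/r` for each partial derivative. -/
def IsBump (n : ℕ) (r : ℝ) (ω : EuclideanSpace ℝ (Fin n) → ℂ) : Prop :=
  ContDiff ℝ 1 ω ∧
  (∃ c : EuclideanSpace ℝ (Fin n), tsupport ω ⊆ closedBall c r) ∧
  (∀ x, ‖ω x‖ ≤ 1) ∧
  (∀ i : Fin n, ∀ x, ‖fderiv ℝ ω x (EuclideanSpace.single i 1)‖ ≤ 1 / r)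

/-!
Replace `ℝⁿ` by the lattice `ε ℤⁿ`, using a smooth partition of unity `(φ_y)` with `φ_y` supported
near `ε y`. The matrix `⟨φ_x, T φ_y⟩ / (A εⁿ)` satisfies the size and regularity bounds of a
Calderón–Zygmund kernel on `ℤⁿ`, and its action on lattice bumps is bounded because sums of the
`φ_y` with slowly varying coefficients are multiples of bump functions. All constants are
independent of `ε`, so it suffices to prove a `T(1)` theorem for finite matrices on the lattice and
to let `ε → 0`.

On the lattice, compress the matrix to the functions constant on dyadic cells of side `2 ^ k` and
telescope in `k`. Pairing two martingale differences gives a form with entries bounded by the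
summable weight `(1 + |z - w|)^{-(n+1)}`, handled by Schur's test. Pairing a difference of `g` at
scale `k` with the averages of `f` at coarser scales gives a paraproduct with symbol the row sums
of the matrix: these have bounded mean oscillation by testing on bumps, and the Carleson embedding
applies. What remains is the variation of `f` at the scales `2 ^ l` with `l > k`, felt only across
cell boundaries, which gains a factor decaying geometrically in `l - k`.
-/

/-! ### Lattice sums -/

section Lattice

variable {n : ℕ}

lemma natCast_floor_norm (m : Fin n → ℤ) : (⌊‖m‖⌋₊ : ℝ) = ‖m‖ := by
  refine le_antisymm (Nat.floor_le (norm_nonneg m)) ?_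
  refine (pi_norm_le_iff_of_nonneg (Nat.cast_nonneg _)).2 fun i => ?_
  have hi : ‖m i‖ = ((m i).natAbs : ℝ) := by rw [Int.norm_eq_abs, Nat.cast_natAbs, Int.cast_abs]
  rw [hi, Nat.cast_le]
  exact Nat.le_floor (hi ▸ norm_le_pi_norm m i)

lemma abs_apply_le_norm (m : Fin n → ℤ) (i : Fin n) : |(m i : ℝ)| ≤ ‖m‖ :=
  (Int.norm_eq_abs (m i)).symm.trans_le (norm_le_pi_norm m i)

lemma one_le_norm_of_ne_zero {m : Fin n → ℤ} (hm : m ≠ 0) : 1 ≤ ‖m‖ := by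
  have hpos : 0 < ‖m‖ := norm_pos_iff.2 hm
  rw [← natCast_floor_norm] at hpos ⊢
  exact_mod_cast hpos

/-- The ball of radius `s` about the origin for the sup norm on `ℤⁿ`, as a finite set. -/
def latticeBall (n s : ℕ) : Finset (Fin n → ℤ) := Fintype.piFinset fun _ => Finset.Icc (-(s : ℤ)) s

lemma mem_latticeBall {s : ℕ} {m : Fin n → ℤ} : m ∈ latticeBall n s ↔ ‖m‖ ≤ s := by
  rw [pi_norm_le_iff_of_nonneg (Nat.cast_nonneg s), latticeBall, Fintype.mem_piFinset]
  refine forall_congr' fun i => ?_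
  rw [Finset.mem_Icc, Int.norm_eq_abs, abs_le]
  exact_mod_cast Iff.rfl

lemma card_latticeBall (n s : ℕ) : (latticeBall n s).card = (2 * s + 1) ^ n := by
  rw [latticeBall, Fintype.card_piFinset_const, Int.card_Icc]
  congr 1
  omega

lemma card_sphere_le (S : Finset (Fin n → ℤ)) (c : Fin n → ℤ) (s : ℕ)
    (hS : ∀ m ∈ S, ‖m - c‖ = s) :
    (S.card : ℝ) ≤ 2 * (n + 1) * 2 ^ n * ((s + 1 : ℝ) ^ n / (s + 1)) := by
  classical
  let S₀ := S.map (Equiv.subRight c).toEmbedding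
  have hS₀ : ∀ m ∈ S₀, ‖m‖ = s := fun m hm => by
    obtain ⟨y, hy, rfl⟩ := Finset.mem_map.1 hm
    exact hS y hy
  have hcard : S.card = S₀.card := (Finset.card_map _).symm
  rcases s with _ | t
  · have hle : S₀.card ≤ 1 := by
      simpa [card_latticeBall] using Finset.card_le_card
        (fun m hm => mem_latticeBall.2 (hS₀ m hm).le : S₀ ⊆ latticeBall n 0)
    have h2 : (1 : ℝ) ≤ 2 ^ n := one_le_pow₀ (by norm_num)
    calc (S.card : ℝ) ≤ 1 := by exact_mod_cast hcard.trans_le hle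
      _ ≤ 2 * (n + 1) * 2 ^ n := by nlinarith [n.cast_nonneg (α := ℝ)]
      _ = _ := by simp
  · have hsub : S₀ ⊆ latticeBall n (t + 1) \ latticeBall n t := fun m hm => by
      rw [Finset.mem_sdiff, mem_latticeBall, mem_latticeBall, hS₀ m hm]
      exact ⟨le_rfl, by push_cast; linarith⟩
    have hball : latticeBall n t ⊆ latticeBall n (t + 1) := fun m hm =>
      mem_latticeBall.2 ((mem_latticeBall.1 hm).trans (by push_cast; linarith))
    have hdiff : (S.card : ℝ) ≤ (2 * t + 3 : ℝ) ^ n - (2 * t + 1 : ℝ) ^ n := by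
      have h := Finset.card_le_card hsub
      rw [← hcard, Finset.card_sdiff_of_subset hball, card_latticeBall, card_latticeBall] at h
      have h' := (Nat.cast_le (α := ℝ)).2 h
      rw [Nat.cast_sub (Nat.pow_le_pow_left (by omega) n)] at h'
      push_cast at h'
      rwa [show 2 * ((t : ℝ) + 1) + 1 = 2 * t + 3 by ring] at h'
    have hpow : (2 * t + 3 : ℝ) ^ n - (2 * t + 1 : ℝ) ^ n ≤ 2 * n * (2 * t + 3) ^ (n - 1) := by
      have h := abs_pow_sub_pow_le (2 * t + 3 : ℝ) (2 * t + 1) n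
      rw [abs_of_pos (by positivity : (0 : ℝ) < 2 * t + 3),
        abs_of_pos (by positivity : (0 : ℝ) < 2 * t + 1), max_eq_left (by linarith)] at h
      calc _ ≤ _ := le_abs_self _
        _ ≤ _ := h
        _ = _ := by rw [show (2 * t + 3 : ℝ) - (2 * t + 1) = 2 by ring, abs_two]
    have hpred : 2 * n * (2 * t + 3 : ℝ) ^ (n - 1) = 2 * n * ((2 * t + 3) ^ n / (2 * t + 3)) := by
      rcases n with _ | k
      · simp
      · rw [pow_succ (2 * t + 3 : ℝ), mul_div_cancel_right₀ _ (by positivity), Nat.add_sub_cancel]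
    calc (S.card : ℝ) ≤ 2 * n * ((2 * t + 3) ^ n / (2 * t + 3)) :=
          hdiff.trans (hpow.trans_eq hpred)
      _ ≤ 2 * (n + 1) * ((2 * (t + 2)) ^ n / (t + 2)) := by gcongr <;> linarith
      _ = _ := by push_cast; rw [mul_pow]; ring

lemma sum_radial_le (g : ℝ → ℝ) (hg : ∀ s : ℕ, 0 ≤ g s) (S : Finset (Fin n → ℤ)) (c : Fin n → ℤ)
    (R : Finset ℕ) (hS : ∀ m ∈ S, ⌊‖m - c‖⌋₊ ∈ R) :
    ∑ m ∈ S, g ‖m - c‖ ≤ 2 * (n + 1) * 2 ^ n * ∑ s ∈ R, (s + 1 : ℝ) ^ n / (s + 1) * g s := by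
  rw [← Finset.sum_fiberwise_of_maps_to hS, Finset.mul_sum]
  refine Finset.sum_le_sum fun s _ => ?_
  have hnorm : ∀ m ∈ S.filter (fun m => ⌊‖m - c‖⌋₊ = s), ‖m - c‖ = s := fun m hm => by
    rw [← natCast_floor_norm, (Finset.mem_filter.1 hm).2]
  rw [Finset.sum_congr rfl fun m hm => congrArg g (hnorm m hm), Finset.sum_const, nsmul_eq_mul,
    ← mul_assoc]
  exact mul_le_mul_of_nonneg_right (card_sphere_le _ c s hnorm) (hg s)

lemma sum_norm_div_pow_le (R : ℕ) :
    ∑ m ∈ latticeBall n R, ‖m‖ * ((1 + ‖m‖) ^ n)⁻¹ ≤ 2 * (n + 1) * 2 ^ n * (R + 1) := by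
  have hfloor : ∀ m ∈ latticeBall n R, ⌊‖m - 0‖⌋₊ ∈ Finset.range (R + 1) := fun m hm => by
    rw [sub_zero, Finset.mem_range_succ_iff]
    exact Nat.floor_le_of_le (mem_latticeBall.1 hm)
  have h := sum_radial_le (fun s => s * ((1 + s) ^ n)⁻¹) (fun s => by positivity) _ 0 _ hfloor
  simp only [sub_zero] at h
  refine h.trans (mul_le_mul_of_nonneg_left ?_ (by positivity))
  refine (Finset.sum_le_sum (g := fun _ => (1 : ℝ)) fun s _ => ?_).trans (by simp)
  rw [add_comm 1 (s : ℝ)]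
  field_simp
  linarith

lemma sum_tail_le {ρ : ℝ} (hρ : 1 ≤ ρ) (c : Fin n → ℤ) (Y : Finset (Fin n → ℤ))
    (hY : ∀ y ∈ Y, ρ ≤ ‖y - c‖) :
    ∑ y ∈ Y, ρ / ‖y - c‖ ^ (n + 1) ≤ 2 * (n + 1) * 2 ^ n * (2 ^ n * 2) := by
  classical
  let R := Y.image fun m => ⌊‖m - c‖⌋₊
  have hR : ∀ s ∈ R, ρ ≤ s := by
    intro s hs
    obtain ⟨y, hy, rfl⟩ := Finset.mem_image.1 hs
    exact (natCast_floor_norm (y - c)).symm ▸ hY y hy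
  refine (sum_radial_le (fun s => ρ / s ^ (n + 1)) (fun s => by positivity) Y c R
    fun m hm => Finset.mem_image_of_mem _ hm).trans ?_
  refine mul_le_mul_of_nonneg_left ?_ (by positivity)
  have hterm : ∀ s ∈ R, (s + 1 : ℝ) ^ n / (s + 1) * (ρ / (s : ℝ) ^ (n + 1)) ≤
      2 ^ n * ρ * ((s : ℝ) ^ 2)⁻¹ := by
    intro s hs
    have hs1 : (1 : ℝ) ≤ s := hρ.trans (hR s hs)
    calc (s + 1 : ℝ) ^ n / (s + 1) * (ρ / (s : ℝ) ^ (n + 1))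
        ≤ (2 * s : ℝ) ^ n / s * (ρ / (s : ℝ) ^ (n + 1)) := by gcongr <;> linarith
      _ = _ := by rw [pow_succ (s : ℝ), mul_pow]; field_simp
  set a := ⌈ρ⌉₊
  have ha : 1 ≤ a := Nat.one_le_ceil_iff.2 (by linarith)
  have hsq : ∑ s ∈ R, ((s : ℝ) ^ 2)⁻¹ ≤ 2 / a := by
    have hsub : R ⊆ Finset.Ioo (a - 1) (R.sup id + 1) := fun s hs => by
      have hs1 : a ≤ s := Nat.ceil_le.2 (hR s hs)
      have hs2 : s ≤ R.sup id := Finset.le_sup (f := id) hs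
      exact Finset.mem_Ioo.2 ⟨by omega, by omega⟩
    calc _ ≤ _ := Finset.sum_le_sum_of_subset_of_nonneg hsub fun _ _ _ => by positivity
      _ ≤ 2 / (((a - 1 : ℕ) : ℝ) + 1) := sum_Ioo_inv_sq_le _ _
      _ = 2 / a := by rw [Nat.cast_sub ha, Nat.cast_one, sub_add_cancel]
  calc _ ≤ ∑ s ∈ R, 2 ^ n * ρ * ((s : ℝ) ^ 2)⁻¹ := Finset.sum_le_sum hterm
    _ = 2 ^ n * (ρ * ∑ s ∈ R, ((s : ℝ) ^ 2)⁻¹) := by rw [← Finset.mul_sum, mul_assoc]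
    _ ≤ 2 ^ n * (a * (2 / a)) := by gcongr; exact Nat.le_ceil ρ
    _ = 2 ^ n * 2 := by rw [mul_div_cancel₀ _ (by positivity)]

/-- The weight `(1 + |m|)^{-(n+1)}` on `ℤⁿ`, which bounds every matrix of block differences in the
dyadic decomposition. -/
def latticeDecay (n : ℕ) (m : Fin n → ℤ) : ℝ := ((1 + ‖m‖) ^ (n + 1))⁻¹

lemma latticeDecay_nonneg (m : Fin n → ℤ) : 0 ≤ latticeDecay n m := by
  unfold latticeDecay; positivity

lemma latticeDecay_sub_comm (z w : Fin n → ℤ) :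
    latticeDecay n (z - w) = latticeDecay n (w - z) := by
  rw [latticeDecay, latticeDecay, norm_sub_rev]

lemma summable_latticeDecay_mul_sqrt (n : ℕ) :
    Summable fun m : Fin n → ℤ => latticeDecay n m * √(1 + ‖m‖) := by
  classical
  have hseries : Summable fun s : ℕ => ((s : ℝ) + 1) ^ (-(3 / 2) : ℝ) := by
    simpa using (summable_nat_add_iff (f := fun s : ℕ => (s : ℝ) ^ (-(3 / 2) : ℝ)) 1).2
      (Real.summable_nat_rpow.2 (by norm_num))
  refine summable_of_sum_le
    (c := 2 * (n + 1) * 2 ^ n * ∑' s : ℕ, ((s : ℝ) + 1) ^ (-(3 / 2) : ℝ))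
    (fun m => mul_nonneg (latticeDecay_nonneg m) (Real.sqrt_nonneg _)) fun S => ?_
  let R := S.image fun m => ⌊‖m - 0‖⌋₊
  have h := sum_radial_le (fun s => ((1 + s) ^ (n + 1))⁻¹ * √(1 + s)) (fun s => by positivity) S 0
    R fun m hm => Finset.mem_image_of_mem _ hm
  simp only [sub_zero] at h
  refine h.trans (mul_le_mul_of_nonneg_left ?_ (by positivity))
  refine le_trans (le_of_eq ?_) (hseries.sum_le_tsum R fun s _ => by positivity)
  refine Finset.sum_congr rfl fun s _ => ?_
  have hs : (0 : ℝ) < s + 1 := by positivity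
  calc (s + 1 : ℝ) ^ n / (s + 1) * (((1 + s : ℝ) ^ (n + 1))⁻¹ * √(1 + s))
      = ((s + 1 : ℝ) ^ (2 : ℝ))⁻¹ * √(s + 1) := by
        rw [add_comm 1 (s : ℝ), Real.rpow_two, pow_succ (s + 1 : ℝ) n]; field_simp
    _ = (s + 1 : ℝ) ^ (-(3 / 2) : ℝ) := by
        rw [Real.sqrt_eq_rpow, ← Real.rpow_neg hs.le, ← Real.rpow_add hs]; norm_num

lemma summable_latticeDecay (n : ℕ) : Summable (latticeDecay n) :=
  (summable_latticeDecay_mul_sqrt n).of_nonneg_of_le latticeDecay_nonneg fun m =>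
    le_mul_of_one_le_right (latticeDecay_nonneg m)
      (Real.one_le_sqrt.2 (by linarith [norm_nonneg m]))

lemma sum_latticeDecay_sub_le (S : Finset (Fin n → ℤ)) (w : Fin n → ℤ) :
    ∑ z ∈ S, latticeDecay n (z - w) ≤ ∑' m, latticeDecay n m := by
  simpa using (summable_latticeDecay n).sum_le_tsum (S.map (Equiv.subRight w).toEmbedding)
    fun m _ => latticeDecay_nonneg m

/-- Schur's test for the convolution matrix `latticeDecay`. -/
lemma sum_mul_latticeDecay_mul_le (S T : Finset (Fin n → ℤ)) (x y : (Fin n → ℤ) → ℝ) :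
    ∑ z ∈ S, ∑ w ∈ T, x z * latticeDecay n (z - w) * y w ≤
      (∑' m, latticeDecay n m) * (∑ z ∈ S, x z ^ 2 + ∑ w ∈ T, y w ^ 2) := by
  calc ∑ z ∈ S, ∑ w ∈ T, x z * latticeDecay n (z - w) * y w
      ≤ ∑ z ∈ S, ∑ w ∈ T,
          (x z ^ 2 * latticeDecay n (w - z) + y w ^ 2 * latticeDecay n (z - w)) := by
        refine Finset.sum_le_sum fun z _ => Finset.sum_le_sum fun w _ => ?_
        rw [latticeDecay_sub_comm w z, ← add_mul, mul_right_comm]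
        have hxy : x z * y w ≤ x z ^ 2 + y w ^ 2 := by
          nlinarith [sq_nonneg (x z - y w), sq_nonneg (x z), sq_nonneg (y w)]
        exact mul_le_mul_of_nonneg_right hxy (latticeDecay_nonneg _)
    _ = ∑ z ∈ S, x z ^ 2 * ∑ w ∈ T, latticeDecay n (w - z) +
          ∑ w ∈ T, y w ^ 2 * ∑ z ∈ S, latticeDecay n (z - w) := by
        simp_rw [Finset.sum_add_distrib, Finset.mul_sum]
        exact congrArg _ Finset.sum_comm
    _ ≤ ∑ z ∈ S, x z ^ 2 * ∑' m, latticeDecay n m +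
          ∑ w ∈ T, y w ^ 2 * ∑' m, latticeDecay n m := by
        gcongr
        · exact sum_latticeDecay_sub_le T _
        · exact sum_latticeDecay_sub_le S _
    _ = _ := by rw [← Finset.sum_mul, ← Finset.sum_mul]; ring

end Lattice

/-! ### Cells -/

section Cells

variable {n : ℕ}

/-- The cell `q y + [0, q)ⁿ` of side `q` in `ℤⁿ`. -/
def cell (q : ℕ) (y : Fin n → ℤ) : Finset (Fin n → ℤ) :=
  Fintype.piFinset fun i => Finset.Ico (q * y i) (q * y i + q)

/-- The index `y` of the cell `cell q y` containing `x`. -/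
def coarsen (q : ℕ) (x : Fin n → ℤ) : Fin n → ℤ := fun i => x i / (q : ℤ)

/-- The cube `[-R, R)ⁿ` in `ℤⁿ`; unlike a ball, it is a union of cells of side `q` when `q ∣ R`. -/
def box (n R : ℕ) : Finset (Fin n → ℤ) := Fintype.piFinset fun _ => Finset.Ico (-(R : ℤ)) R

lemma mem_cell_iff {q : ℕ} {x y : Fin n → ℤ} :
    x ∈ cell q y ↔ ∀ i, (q : ℤ) * y i ≤ x i ∧ x i < q * y i + q := by
  simp only [cell, Fintype.mem_piFinset, Finset.mem_Ico]

lemma mem_box {R : ℕ} {x : Fin n → ℤ} : x ∈ box n R ↔ ∀ i, -(R : ℤ) ≤ x i ∧ x i < R := by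
  simp only [box, Fintype.mem_piFinset, Finset.mem_Ico]

lemma mem_cell {q : ℕ} (hq : 0 < q) {x y : Fin n → ℤ} : x ∈ cell q y ↔ coarsen q x = y := by
  rw [mem_cell_iff, funext_iff]
  refine forall_congr' fun i => ?_
  rw [coarsen, Int.ediv_eq_iff_of_pos (by exact_mod_cast hq), mul_comm (y i)]

lemma card_cell (q : ℕ) (y : Fin n → ℤ) : (cell q y).card = q ^ n := by
  simp [cell, Fintype.card_piFinset]

lemma coarsen_coarsen (q r : ℕ) (x : Fin n → ℤ) :
    coarsen r (coarsen q x) = coarsen (q * r) x := by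
  funext i
  rw [coarsen, coarsen, coarsen, Nat.cast_mul, Int.ediv_ediv_of_nonneg (Int.natCast_nonneg q)]

lemma coarsen_one (x : Fin n → ℤ) : coarsen 1 x = x := by
  funext i; simp [coarsen]

lemma cell_one (y : Fin n → ℤ) : cell 1 y = {y} := by
  ext x; rw [mem_cell one_pos, coarsen_one, Finset.mem_singleton]

lemma smul_mem_cell {q : ℕ} (hq : 0 < q) (z : Fin n → ℤ) : (q : ℤ) • z ∈ cell q z :=
  mem_cell_iff.2 fun i => by rw [Pi.smul_apply, smul_eq_mul]; omega

lemma coarsen_mem_box {q R : ℕ} (hq : 0 < q) {x : Fin n → ℤ} :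
    coarsen q x ∈ box n R ↔ x ∈ box n (q * R) := by
  rw [mem_box, mem_box]
  refine forall_congr' fun i => ?_
  have hq' : (0 : ℤ) < q := by exact_mod_cast hq
  rw [coarsen, Int.le_ediv_iff_mul_le hq', Int.ediv_lt_iff_lt_mul hq', Nat.cast_mul,
    neg_mul, mul_comm (R : ℤ)]

lemma sum_cell_mul {M : Type*} [AddCommMonoid M] {q r : ℕ} (hq : 0 < q) (hr : 0 < r)
    (F : (Fin n → ℤ) → M) (y : Fin n → ℤ) :
    ∑ x ∈ cell (q * r) y, F x = ∑ z ∈ cell r y, ∑ x ∈ cell q z, F x := by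
  classical
  have hmaps : ∀ x, x ∈ cell (q * r) y ↔ coarsen q x ∈ cell r y := fun x => by
    rw [mem_cell (by positivity), mem_cell hr, coarsen_coarsen]
  rw [← Finset.sum_fiberwise_of_maps_to fun x hx => (hmaps x).1 hx]
  refine Finset.sum_congr rfl fun z hz => Finset.sum_congr ?_ fun _ _ => rfl
  ext x
  rw [Finset.mem_filter, mem_cell hq, hmaps, and_iff_right_of_imp fun h => h ▸ hz]

lemma sum_box_mul {M : Type*} [AddCommMonoid M] {q R : ℕ} (hq : 0 < q) (F : (Fin n → ℤ) → M) :
    ∑ x ∈ box n (q * R), F x = ∑ y ∈ box n R, ∑ x ∈ cell q y, F x := by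
  classical
  rw [← Finset.sum_fiberwise_of_maps_to fun x hx => (coarsen_mem_box hq).2 hx]
  refine Finset.sum_congr rfl fun z hz => Finset.sum_congr ?_ fun _ _ => rfl
  ext x
  rw [Finset.mem_filter, mem_cell hq, ← coarsen_mem_box hq, and_iff_right_of_imp fun h => h ▸ hz]

lemma sum_cell_translate {M : Type*} [AddCommMonoid M] {q : ℕ} (F : (Fin n → ℤ) → M)
    (y y' : Fin n → ℤ) : ∑ x ∈ cell q y', F x = ∑ x ∈ cell q y, F (x + (q : ℤ) • (y' - y)) := by
  have hmem : ∀ x, x + (q : ℤ) • (y' - y) ∈ cell q y' ↔ x ∈ cell q y := fun x => by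
    rw [mem_cell_iff, mem_cell_iff]
    refine forall_congr' fun i => ?_
    simp only [Pi.add_apply, Pi.smul_apply, Pi.sub_apply, smul_eq_mul, mul_sub]
    constructor <;> rintro ⟨h₁, h₂⟩ <;> constructor <;> linarith
  exact (Finset.sum_equiv (Equiv.addRight _) (fun x => (hmem x).symm) fun _ _ => rfl).symm

lemma norm_sub_sub_smul_le {q : ℕ} {z w x y : Fin n → ℤ} (hx : x ∈ cell q z) (hy : y ∈ cell q w) :
    ‖(x - y) - (q : ℤ) • (z - w)‖ ≤ q := by
  refine (pi_norm_le_iff_of_nonneg (Nat.cast_nonneg q)).2 fun i => ?_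
  have h : |x i - y i - (q : ℤ) * (z i - w i)| ≤ q := by
    have hxi := mem_cell_iff.1 hx i
    have hyi := mem_cell_iff.1 hy i
    rw [abs_le, mul_sub]
    constructor <;> linarith
  rw [Int.norm_eq_abs]
  exact_mod_cast h

lemma norm_natCast_smul (q : ℕ) (m : Fin n → ℤ) : ‖(q : ℤ) • m‖ = q * ‖m‖ := by
  rw [norm_smul, Int.norm_natCast]

lemma norm_sub_le_of_mem_cell {q : ℕ} {z w x y : Fin n → ℤ} (hx : x ∈ cell q z)
    (hy : y ∈ cell q w) : ‖x - y‖ ≤ q * (‖z - w‖ + 1) := by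
  have h := norm_sub_norm_le (x - y) ((q : ℤ) • (z - w))
  rw [norm_natCast_smul] at h
  linarith [norm_sub_sub_smul_le hx hy]

lemma le_norm_sub_of_mem_cell {q : ℕ} {z w x y : Fin n → ℤ} (hx : x ∈ cell q z)
    (hy : y ∈ cell q w) : q * (‖z - w‖ - 1) ≤ ‖x - y‖ := by
  have h := norm_sub_norm_le ((q : ℤ) • (z - w)) (x - y)
  rw [norm_natCast_smul, norm_sub_rev ((q : ℤ) • (z - w)) (x - y)] at h
  linarith [norm_sub_sub_smul_le hx hy]

lemma norm_sub_le_of_mem_same_cell {q : ℕ} {x y z : Fin n → ℤ} (hx : x ∈ cell q z)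
    (hy : y ∈ cell q z) : ‖x - y‖ ≤ q := by
  simpa using norm_sub_le_of_mem_cell hx hy

lemma norm_sub_le_one_of_mem_cell_two {z z' : Fin n → ℤ} (h : z' ∈ cell 2 (coarsen 2 z)) :
    ‖z - z'‖ ≤ 1 := by
  refine (pi_norm_le_iff_of_nonneg zero_le_one).2 fun i => ?_
  have hz := mem_cell_iff.1 ((mem_cell two_pos).2 rfl : z ∈ cell 2 (coarsen 2 z)) i
  have hz' := mem_cell_iff.1 h i
  have hi : |z i - z' i| ≤ 1 := abs_le.2 ⟨by omega, by omega⟩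
  rw [Int.norm_eq_abs, Pi.sub_apply]
  exact_mod_cast hi

lemma card_filter_add_notMem_Ico_le (a b t : ℤ) :
    ((Finset.Ico a b).filter fun s => s + t ∉ Finset.Ico a b).card ≤ t.natAbs := by
  have hsub : ((Finset.Ico a b).filter fun s => s + t ∉ Finset.Ico a b) ⊆
      if 0 ≤ t then Finset.Ico (b - t) b else Finset.Ico a (a - t) := by
    intro s hs
    rw [Finset.mem_filter, Finset.mem_Ico, Finset.mem_Ico] at hs
    split_ifs <;> rw [Finset.mem_Ico] <;> omega
  refine (Finset.card_le_card hsub).trans ?_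
  split_ifs <;> rw [Int.card_Ico] <;> omega

lemma card_filter_add_notMem_cell_le {q : ℕ} (hq : 0 < q) (y m : Fin n → ℤ) :
    (((cell q y).filter fun z => z + m ∉ cell q y).card : ℝ) ≤ n * ‖m‖ * ((q : ℝ) ^ n / q) := by
  classical
  let I : Fin n → Finset ℤ := fun i => Finset.Ico (q * y i) (q * y i + q)
  let E : Fin n → Finset ℤ := fun i => (I i).filter fun s => s + m i ∉ I i
  let A : Fin n → Finset (Fin n → ℤ) := fun i => Fintype.piFinset (Function.update I i (E i))
  have hsub : ((cell q y).filter fun z => z + m ∉ cell q y) ⊆ Finset.univ.biUnion A := by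
    intro z hz
    obtain ⟨hz, hzm⟩ := Finset.mem_filter.1 hz
    obtain ⟨i, hi⟩ := not_forall.1 (mt Fintype.mem_piFinset.2 hzm)
    refine Finset.mem_biUnion.2 ⟨i, Finset.mem_univ i, ?_⟩
    simp only [A]
    rw [Fintype.piFinset_update_eq_filter_piFinset_mem I i (Finset.filter_subset _ _)]
    exact Finset.mem_filter.2 ⟨hz, Finset.mem_filter.2 ⟨Fintype.mem_piFinset.1 hz i, hi⟩⟩
  have hA : ∀ i, ((A i).card : ℝ) ≤ ‖m‖ * ((q : ℝ) ^ n / q) := by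
    intro i
    have hcard : (A i).card = (E i).card * q ^ (n - 1) := by
      have hupd : (fun j => (Function.update I i (E i) j).card) =
          Function.update (fun _ => q) i (E i).card := by
        funext j
        rcases eq_or_ne j i with rfl | hj
        · simp
        · simp [hj, I]
      rw [Fintype.card_piFinset, hupd, Finset.prod_update_of_mem (Finset.mem_univ i)]
      simp [Finset.card_sdiff_of_subset]
    have hE : ((E i).card : ℝ) ≤ ‖m‖ := by
      refine le_trans ?_ (abs_apply_le_norm m i)
      rw [← Int.cast_abs, ← Nat.cast_natAbs]
      exact_mod_cast card_filter_add_notMem_Ico_le _ _ (m i)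
    have hpow : (q : ℝ) ^ (n - 1) = (q : ℝ) ^ n / q := by
      rw [eq_div_iff (by positivity), pow_sub_one_mul i.pos.ne']
    rw [hcard, Nat.cast_mul, Nat.cast_pow, hpow]
    exact mul_le_mul_of_nonneg_right hE (by positivity)
  calc (((cell q y).filter fun z => z + m ∉ cell q y).card : ℝ)
      ≤ ∑ i, ((A i).card : ℝ) := by
        exact_mod_cast (Finset.card_le_card hsub).trans Finset.card_biUnion_le
    _ ≤ ∑ _i : Fin n, ‖m‖ * ((q : ℝ) ^ n / q) := Finset.sum_le_sum fun i _ => hA i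
    _ = _ := by rw [Finset.sum_const, Finset.card_univ, Fintype.card_fin, nsmul_eq_mul, mul_assoc]

lemma sum_cell_sum_notMem_le {q : ℕ} (hq : 0 < q) (y : Fin n → ℤ) (X M : Finset (Fin n → ℤ))
    (k : (Fin n → ℤ) → ℝ) (hk : ∀ m, 0 ≤ k m) (hM : ∀ z ∈ cell q y, ∀ w ∈ X, w - z ∈ M) :
    ∑ z ∈ cell q y, ∑ w ∈ X with w ∉ cell q y, k (w - z) ≤
      ∑ m ∈ M, k m * min ((q : ℝ) ^ n) (n * ‖m‖ * ((q : ℝ) ^ n / q)) := by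
  classical
  have hinner : ∀ z ∈ cell q y, ∑ w ∈ X with w ∉ cell q y, k (w - z) ≤
      ∑ m ∈ M with z + m ∉ cell q y, k m := by
    intro z hz
    refine (Finset.sum_map (X.filter (· ∉ cell q y)) (Equiv.subRight z).toEmbedding k).ge.trans ?_
    refine Finset.sum_le_sum_of_subset_of_nonneg (fun m hm => ?_) fun m _ _ => hk m
    obtain ⟨w, hw, rfl⟩ := Finset.mem_map.1 hm
    obtain ⟨hwX, hwy⟩ := Finset.mem_filter.1 hw
    exact Finset.mem_filter.2 ⟨hM z hz w hwX, by simpa using hwy⟩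
  calc _ ≤ ∑ z ∈ cell q y, ∑ m ∈ M with z + m ∉ cell q y, k m := Finset.sum_le_sum hinner
    _ = ∑ m ∈ M, k m * ((cell q y).filter fun z => z + m ∉ cell q y).card := by
      simp_rw [Finset.sum_filter]
      rw [Finset.sum_comm]
      refine Finset.sum_congr rfl fun m _ => ?_
      rw [← Finset.sum_filter, Finset.sum_const, nsmul_eq_mul, mul_comm]
    _ ≤ _ := by
      refine Finset.sum_le_sum fun m _ => mul_le_mul_of_nonneg_left (le_min ?_ ?_) (hk m)
      · exact_mod_cast (Finset.card_filter_le _ _).trans (card_cell q y).le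
      · exact card_filter_add_notMem_cell_le hq y m

lemma min_one_le_sqrt {t : ℝ} (ht : 0 ≤ t) : min 1 t ≤ √t := by
  rcases le_total 1 t with h | h
  · exact (min_le_left _ _).trans (Real.one_le_sqrt.2 h)
  · exact (min_le_right _ _).trans (Real.le_sqrt_of_sq_le (by nlinarith))

/-- Only the points of a cell within distance `‖m‖` of its boundary can leave it under a translation
by `m`, so the interaction between a cell of side `q` and its complement is `o(qⁿ)`. -/
lemma sum_cell_sum_notMem_latticeDecay_le {q : ℕ} (hq : 0 < q) (y : Fin n → ℤ)
    (X : Finset (Fin n → ℤ)) :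
    ∑ z ∈ cell q y, ∑ w ∈ X with w ∉ cell q y, latticeDecay n (w - z) ≤
      √n * (∑' m : Fin n → ℤ, latticeDecay n m * √(1 + ‖m‖)) * (q ^ n * (√q)⁻¹) := by
  classical
  let M := Finset.image₂ (fun z w => w - z) (cell q y) X
  have hmin : ∀ m : Fin n → ℤ, min ((q : ℝ) ^ n) (n * ‖m‖ * ((q : ℝ) ^ n / q)) ≤
      √(1 + ‖m‖) * (√n * (q ^ n * (√q)⁻¹)) := fun m => by
    calc min ((q : ℝ) ^ n) (n * ‖m‖ * ((q : ℝ) ^ n / q))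
        = q ^ n * min 1 (n * ‖m‖ / q) := by
          rw [mul_min_of_nonneg _ _ (by positivity), mul_one]; congr 1; ring
      _ ≤ q ^ n * √(n * (1 + ‖m‖) / q) := by
          gcongr
          refine (min_one_le_sqrt (by positivity)).trans (Real.sqrt_le_sqrt ?_)
          gcongr
          linarith
      _ = _ := by
          rw [Real.sqrt_div (by positivity), Real.sqrt_mul (by positivity)]; ring
  calc _ ≤ _ := sum_cell_sum_notMem_le hq y X M _ latticeDecay_nonneg
        fun z hz w hw => Finset.mem_image₂_of_mem hz hw
    _ ≤ ∑ m ∈ M, latticeDecay n m * (√(1 + ‖m‖) * (√n * (q ^ n * (√q)⁻¹))) :=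
        Finset.sum_le_sum fun m _ => mul_le_mul_of_nonneg_left (hmin m) (latticeDecay_nonneg m)
    _ = (∑ m ∈ M, latticeDecay n m * √(1 + ‖m‖)) * (√n * (q ^ n * (√q)⁻¹)) := by
        rw [Finset.sum_mul]; simp_rw [mul_assoc]
    _ ≤ (∑' m : Fin n → ℤ, latticeDecay n m * √(1 + ‖m‖)) * (√n * (q ^ n * (√q)⁻¹)) := by
        gcongr
        exact (summable_latticeDecay_mul_sqrt n).sum_le_tsum M fun m _ =>
          mul_nonneg (latticeDecay_nonneg m) (Real.sqrt_nonneg _)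
    _ = _ := by ring

end Cells

/-! ### Lattice Calderón–Zygmund matrices -/

section LatticeCZ

variable {n : ℕ} {C : ℝ} {a : (Fin n → ℤ) → (Fin n → ℤ) → ℂ}

/-- The lattice counterpart of a bump function: it is `1` within distance `ρ` of `c`, vanishes
beyond distance `2ρ`, and is `1/ρ`-Lipschitz. -/
def tentBump (c : Fin n → ℤ) (ρ : ℝ) (y : Fin n → ℤ) : ℝ := max 0 (min 1 (2 - ‖y - c‖ / ρ))

lemma tentBump_nonneg (c : Fin n → ℤ) (ρ : ℝ) (y : Fin n → ℤ) : 0 ≤ tentBump c ρ y :=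
  le_max_left _ _

lemma tentBump_le_one (c : Fin n → ℤ) (ρ : ℝ) (y : Fin n → ℤ) : tentBump c ρ y ≤ 1 :=
  max_le zero_le_one (min_le_left _ _)

lemma tentBump_eq_one {c : Fin n → ℤ} {ρ : ℝ} (hρ : 0 < ρ) {y : Fin n → ℤ} (h : ‖y - c‖ ≤ ρ) :
    tentBump c ρ y = 1 := by
  have hdiv : ‖y - c‖ / ρ ≤ 1 := (div_le_one hρ).2 h
  rw [tentBump, min_eq_left (by linarith), max_eq_right zero_le_one]

lemma tentBump_eq_zero {c : Fin n → ℤ} {ρ : ℝ} (hρ : 0 < ρ) {y : Fin n → ℤ}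
    (h : 2 * ρ ≤ ‖y - c‖) : tentBump c ρ y = 0 := by
  have hdiv : 2 ≤ ‖y - c‖ / ρ := (le_div_iff₀ hρ).2 h
  exact max_eq_left ((min_le_right _ _).trans (by linarith))

lemma norm_tentBump_le_one (c : Fin n → ℤ) (ρ : ℝ) (y : Fin n → ℤ) :
    ‖(tentBump c ρ y : ℂ)‖ ≤ 1 := by
  rw [Complex.norm_real, Real.norm_of_nonneg (tentBump_nonneg _ _ _)]
  exact tentBump_le_one _ _ _

/-- A matrix on `ℤⁿ` with the size and (one-sided) regularity of a Calderón–Zygmund kernel, whose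
action on lattice bumps is bounded in `ℓ²`. The sums over an arbitrary finite set `Y` containing
the support of the bump, and an arbitrary finite set `S` of rows, avoid all summability issues. -/
structure IsLatticeCZ (n : ℕ) (C : ℝ) (a : (Fin n → ℤ) → (Fin n → ℤ) → ℂ) : Prop where
  size : ∀ x y, ‖a x y‖ ≤ C * ((1 + ‖x - y‖) ^ n)⁻¹
  regularity : ∀ x x' y, 2 * ‖x - x'‖ + 10 ≤ ‖x - y‖ →
    ‖a x y - a x' y‖ ≤ C * ‖x - x'‖ / ‖x - y‖ ^ (n + 1)
  testing : ∀ (c : Fin n → ℤ) (ρ : ℝ), 1 ≤ ρ → ∀ Y : Finset (Fin n → ℤ),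
    (∀ y, ‖y - c‖ < 2 * ρ → y ∈ Y) → ∀ S : Finset (Fin n → ℤ),
      ∑ x ∈ S, ‖∑ y ∈ Y, a x y * (tentBump c ρ y : ℂ)‖ ^ 2 ≤ C * ρ ^ n

lemma IsLatticeCZ.nonneg (ha : IsLatticeCZ n C a) : 0 ≤ C := by
  simpa using (norm_nonneg _).trans (ha.size 0 0)

lemma IsLatticeCZ.sum_cell_sum_notMem_norm_le (ha : IsLatticeCZ n C a) {q : ℕ} (hq : 0 < q) (E : ℕ)
    (z : Fin n → ℤ) (Y : Finset (Fin n → ℤ)) (hY : ∀ x ∈ cell q z, ∀ y ∈ Y, ‖y - x‖ ≤ E * q) :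
    ∑ x ∈ cell q z, ∑ y ∈ Y with y ∉ cell q z, ‖a x y‖ ≤
      C * n * (2 * (n + 1) * 2 ^ n * (E + 1)) * q ^ n := by
  classical
  have hC := ha.nonneg
  have hq1 : (1 : ℝ) ≤ q := by exact_mod_cast hq
  let k : (Fin n → ℤ) → ℝ := fun m => C * ((1 + ‖m‖) ^ n)⁻¹
  have hball : ∀ x ∈ cell q z, ∀ y ∈ Y, y - x ∈ latticeBall n (E * q) := fun x hx y hy =>
    mem_latticeBall.2 (by exact_mod_cast hY x hx y hy)
  calc ∑ x ∈ cell q z, ∑ y ∈ Y with y ∉ cell q z, ‖a x y‖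
      ≤ ∑ x ∈ cell q z, ∑ y ∈ Y with y ∉ cell q z, k (y - x) :=
        Finset.sum_le_sum fun x _ => Finset.sum_le_sum fun y _ =>
          (ha.size x y).trans_eq (by rw [norm_sub_rev])
    _ ≤ ∑ m ∈ latticeBall n (E * q), k m * min ((q : ℝ) ^ n) (n * ‖m‖ * ((q : ℝ) ^ n / q)) :=
        sum_cell_sum_notMem_le hq z Y _ k (fun m => by positivity) hball
    _ ≤ ∑ m ∈ latticeBall n (E * q), C * n * (q ^ n / q) * (‖m‖ * ((1 + ‖m‖) ^ n)⁻¹) := by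
        refine Finset.sum_le_sum fun m _ => ?_
        calc _ ≤ k m * (n * ‖m‖ * ((q : ℝ) ^ n / q)) :=
              mul_le_mul_of_nonneg_left (min_le_right _ _) (by positivity)
          _ = _ := by simp only [k]; ring
    _ ≤ C * n * (q ^ n / q) * (2 * (n + 1) * 2 ^ n * ((E + 1) * q)) := by
        rw [← Finset.mul_sum]
        gcongr
        refine (sum_norm_div_pow_le (E * q)).trans ?_
        gcongr
        push_cast
        linarith
    _ = _ := by field_simp

lemma sq_norm_sum_le_card_mul {ι : Type*} (S : Finset ι) (f : ι → ℂ) :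
    ‖∑ x ∈ S, f x‖ ^ 2 ≤ S.card * ∑ x ∈ S, ‖f x‖ ^ 2 :=
  (pow_le_pow_left₀ (norm_nonneg _) (norm_sum_le S f) 2).trans sq_sum_le_card_mul_sum_sq

lemma exists_finset_mem_iff_norm_sub_le (c : Fin n → ℤ) (s : ℕ) :
    ∃ Y : Finset (Fin n → ℤ), ∀ y, y ∈ Y ↔ ‖y - c‖ ≤ s := by
  refine ⟨(latticeBall n s).map (Equiv.addRight c).toEmbedding, fun y => ?_⟩
  rw [Finset.mem_map_equiv, mem_latticeBall, Equiv.addRight_symm, Equiv.coe_addRight]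
  simp only [← sub_eq_add_neg]

lemma IsLatticeCZ.norm_sum_same_cell_le (ha : IsLatticeCZ n C a) {q : ℕ} (hq : 0 < q)
    (z : Fin n → ℤ) :
    ‖∑ x ∈ cell q z, ∑ y ∈ cell q z, a x y‖ ≤
      (C + 1 + C * n * (2 * (n + 1) * 2 ^ n * 4)) * q ^ n := by
  classical
  have hC := ha.nonneg
  have hq1 : (1 : ℝ) ≤ q := by exact_mod_cast hq
  set c := (q : ℤ) • z
  have hcell : ∀ y ∈ cell q z, ‖y - c‖ ≤ q := fun y hy =>
    norm_sub_le_of_mem_same_cell hy (smul_mem_cell hq z)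
  obtain ⟨Y, hY⟩ := exists_finset_mem_iff_norm_sub_le c (2 * q)
  push_cast at hY
  let G : (Fin n → ℤ) → ℂ := fun x => ∑ y ∈ Y, a x y * (tentBump c q y : ℂ)
  have hsplit : ∀ x, ∑ y ∈ cell q z, a x y =
      G x - ∑ y ∈ Y with y ∉ cell q z, a x y * (tentBump c q y : ℂ) := fun x => by
    have hfilter : Y.filter (· ∈ cell q z) = cell q z := by
      ext y
      rw [Finset.mem_filter, and_iff_right_of_imp fun hy => (hY y).2 (by linarith [hcell y hy])]
    rw [eq_sub_iff_add_eq]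
    refine Eq.trans ?_ (Finset.sum_filter_add_sum_filter_not Y (· ∈ cell q z) _)
    rw [hfilter]
    refine congrArg (· + _) (Finset.sum_congr rfl fun y hy => ?_)
    rw [tentBump_eq_one (by linarith) (hcell y hy), Complex.ofReal_one, mul_one]
  have hbump : ‖∑ x ∈ cell q z, G x‖ ≤ (C + 1) * q ^ n := by
    refine le_of_sq_le_sq ?_ (by positivity)
    calc _ ≤ ((cell q z).card : ℝ) * ∑ x ∈ cell q z, ‖G x‖ ^ 2 := sq_norm_sum_le_card_mul _ _
      _ ≤ q ^ n * (C * q ^ n) := by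
        rw [card_cell, Nat.cast_pow]
        gcongr
        exact ha.testing c q hq1 Y (fun y hy => (hY y).2 hy.le) _
      _ = C * ((q : ℝ) ^ n) ^ 2 := by ring
      _ ≤ (C + 1) ^ 2 * ((q : ℝ) ^ n) ^ 2 := by gcongr; nlinarith
      _ = _ := (mul_pow _ _ 2).symm
  have hoff : ‖∑ x ∈ cell q z, ∑ y ∈ Y with y ∉ cell q z, a x y * (tentBump c q y : ℂ)‖ ≤
      C * n * (2 * (n + 1) * 2 ^ n * 4) * q ^ n := by
    refine (norm_sum_le_of_le _ fun x _ => norm_sum_le_of_le _ fun y _ =>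
      (norm_mul_le _ _).trans (mul_le_of_le_one_right (norm_nonneg (a x y))
        (norm_tentBump_le_one c q y))).trans ?_
    refine (ha.sum_cell_sum_notMem_norm_le hq 3 z Y fun x hx y hy => ?_).trans (by norm_num)
    have htri := norm_sub_le_norm_sub_add_norm_sub y c x
    rw [norm_sub_rev c x] at htri
    push_cast
    linarith [(hY y).1 hy, hcell x hx]
  simp_rw [hsplit]
  rw [Finset.sum_sub_distrib, add_mul]
  exact (norm_sub_le _ _).trans (add_le_add hbump hoff)

lemma IsLatticeCZ.norm_sum_cell_sum_cell_le_of_ne (ha : IsLatticeCZ n C a) {q : ℕ} (hq : 0 < q)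
    {z w : Fin n → ℤ} {D : ℕ} (hD : ‖z - w‖ ≤ D) (hne : z ≠ w) :
    ‖∑ x ∈ cell q z, ∑ y ∈ cell q w, a x y‖ ≤
      C * n * (2 * (n + 1) * 2 ^ n * (D + 2)) * q ^ n := by
  classical
  have hdisj : (cell q w).filter (· ∉ cell q z) = cell q w :=
    Finset.filter_true_of_mem fun y hy hy' =>
      hne (by rw [← (mem_cell hq).1 hy', (mem_cell hq).1 hy])
  refine (norm_sum_le_of_le _ fun x _ => norm_sum_le _ _).trans ?_
  have h := ha.sum_cell_sum_notMem_norm_le hq (D + 1) z (cell q w) fun x hx y hy => by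
    rw [norm_sub_rev]
    refine (norm_sub_le_of_mem_cell hx hy).trans ?_
    rw [mul_comm]
    push_cast
    gcongr
  rw [hdisj] at h
  refine h.trans_eq ?_
  push_cast
  ring

/-- The compression of the matrix `a` to functions that are constant on the cells of side `q`. -/
def levelMatrix (a : (Fin n → ℤ) → (Fin n → ℤ) → ℂ) (q : ℕ) (z w : Fin n → ℤ) : ℂ :=
  ((q : ℂ) ^ n)⁻¹ * ∑ x ∈ cell q z, ∑ y ∈ cell q w, a x y

/-- The difference between `levelMatrix a q` and its average over the rows in the same cell of
side `2`. -/
def levelDifference (a : (Fin n → ℤ) → (Fin n → ℤ) → ℂ) (q : ℕ) (z w : Fin n → ℤ) : ℂ :=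
  levelMatrix a q z w - (2 ^ n)⁻¹ * ∑ z' ∈ cell 2 (coarsen 2 z), levelMatrix a q z' w

/-- A bound for the entries of the level matrices within distance `D` of the diagonal. -/
def nearBound (n : ℕ) (C : ℝ) (D : ℕ) : ℝ := C + 1 + C * n * (2 * (n + 1) * 2 ^ n * (D + 4))

lemma nearBound_pos (hC : 0 ≤ C) (D : ℕ) : 0 < nearBound n C D := by
  unfold nearBound; positivity

lemma IsLatticeCZ.norm_levelMatrix_le (ha : IsLatticeCZ n C a) {q : ℕ} (hq : 0 < q)
    {z w : Fin n → ℤ} {D : ℕ} (hD : ‖z - w‖ ≤ D) : ‖levelMatrix a q z w‖ ≤ nearBound n C D := by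
  have hC := ha.nonneg
  rw [levelMatrix, norm_mul, norm_inv, norm_pow, Complex.norm_natCast,
    inv_mul_le_iff₀ (by positivity), mul_comm]
  rcases eq_or_ne z w with rfl | hne
  · refine (ha.norm_sum_same_cell_le hq z).trans ?_
    unfold nearBound
    gcongr
    linarith [D.cast_nonneg (α := ℝ)]
  · refine (ha.norm_sum_cell_sum_cell_le_of_ne hq hD hne).trans ?_
    unfold nearBound
    gcongr
    refine le_add_of_nonneg_of_le (by positivity) ?_
    gcongr
    norm_num

lemma IsLatticeCZ.norm_levelMatrix_sub_le_of_far (ha : IsLatticeCZ n C a) {q : ℕ} (hq : 0 < q)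
    {z z' w : Fin n → ℤ} (hzw : 13 ≤ ‖z - w‖) (hzz' : ‖z - z'‖ ≤ 1) :
    ‖levelMatrix a q z w - levelMatrix a q z' w‖ ≤ C * 2 ^ (n + 1) * latticeDecay n (z - w) := by
  have hC := ha.nonneg
  have hq1 : (1 : ℝ) ≤ q := by exact_mod_cast hq
  set v := (q : ℤ) • (z' - z)
  have hv : ‖v‖ ≤ q := by
    rw [norm_natCast_smul, norm_sub_rev]
    exact mul_le_of_le_one_right (Nat.cast_nonneg q) hzz'
  have hentry : ∀ x ∈ cell q z, ∀ y ∈ cell q w, ‖a x y - a (x + v) y‖ ≤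
      C * 2 ^ (n + 1) * latticeDecay n (z - w) * ((q : ℝ) ^ n)⁻¹ := by
    intro x hx y hy
    have hlow := le_norm_sub_of_mem_cell hx hy
    have hstep : ‖x - (x + v)‖ ≤ q := by rwa [sub_add_cancel_left, norm_neg]
    have hhalf : q * ((1 + ‖z - w‖) / 2) ≤ ‖x - y‖ := by nlinarith
    calc ‖a x y - a (x + v) y‖ ≤ C * ‖x - (x + v)‖ / ‖x - y‖ ^ (n + 1) :=
          ha.regularity x (x + v) y (by nlinarith)
      _ ≤ C * q / (q * ((1 + ‖z - w‖) / 2)) ^ (n + 1) := by gcongr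
      _ = _ := by rw [latticeDecay, mul_pow, div_pow, pow_succ (q : ℝ)]; field_simp
  rw [levelMatrix, levelMatrix, sum_cell_translate (fun x => ∑ y ∈ cell q w, a x y) z z',
    ← mul_sub, ← Finset.sum_sub_distrib, norm_mul, norm_inv, norm_pow, Complex.norm_natCast,
    inv_mul_le_iff₀ (by positivity)]
  simp_rw [← Finset.sum_sub_distrib]
  refine (norm_sum_le_of_le _ fun x hx => norm_sum_le_of_le _ (hentry x hx)).trans_eq ?_
  simp only [Finset.sum_const, card_cell, nsmul_eq_mul, Nat.cast_pow]
  field_simp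

/-- A bound for the ratio of the differences of level matrices to `latticeDecay`. The second term
accounts for the entries near the diagonal, where the regularity condition is void. -/
def differenceBound (n : ℕ) (C : ℝ) : ℝ :=
  C * 2 ^ (n + 1) + 2 * nearBound n C 14 * 14 ^ (n + 1)

lemma differenceBound_nonneg (hC : 0 ≤ C) : 0 ≤ differenceBound n C := by
  have hB := nearBound_pos (n := n) hC 14
  unfold differenceBound
  positivity

lemma IsLatticeCZ.norm_levelMatrix_sub_le (ha : IsLatticeCZ n C a) {q : ℕ} (hq : 0 < q)
    {z z' : Fin n → ℤ} (w : Fin n → ℤ) (hzz' : ‖z - z'‖ ≤ 1) :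
    ‖levelMatrix a q z w - levelMatrix a q z' w‖ ≤
      differenceBound n C * latticeDecay n (z - w) := by
  have hC := ha.nonneg
  have hB := nearBound_pos (n := n) hC 14
  have hκ := latticeDecay_nonneg (z - w)
  rw [differenceBound, add_mul]
  rcases le_or_gt 13 ‖z - w‖ with hfar | hnear
  · exact (ha.norm_levelMatrix_sub_le_of_far hq hfar hzz').trans
      (le_add_of_nonneg_right (by positivity))
  · have hz' : ‖z' - w‖ ≤ (14 : ℕ) := by
      have htri := norm_sub_le_norm_sub_add_norm_sub z' z w
      rw [norm_sub_rev z' z] at htri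
      push_cast
      linarith
    have hdecay : 1 ≤ 14 ^ (n + 1) * latticeDecay n (z - w) := by
      rw [latticeDecay, ← div_eq_mul_inv, one_le_div (by positivity)]
      gcongr
      linarith
    calc _ ≤ ‖levelMatrix a q z w‖ + ‖levelMatrix a q z' w‖ := norm_sub_le _ _
      _ ≤ nearBound n C 14 + nearBound n C 14 :=
        add_le_add (ha.norm_levelMatrix_le hq (by push_cast; linarith))
          (ha.norm_levelMatrix_le hq hz')
      _ = 2 * nearBound n C 14 * 1 := by ring
      _ ≤ 2 * nearBound n C 14 * (14 ^ (n + 1) * latticeDecay n (z - w)) := by gcongr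
      _ = 2 * nearBound n C 14 * 14 ^ (n + 1) * latticeDecay n (z - w) := (mul_assoc _ _ _).symm
      _ ≤ _ := le_add_of_nonneg_left (by positivity)

lemma IsLatticeCZ.norm_levelDifference_le (ha : IsLatticeCZ n C a) {q : ℕ} (hq : 0 < q)
    (z w : Fin n → ℤ) :
    ‖levelDifference a q z w‖ ≤ differenceBound n C * latticeDecay n (z - w) := by
  have hmean : levelDifference a q z w =
      (2 ^ n)⁻¹ * ∑ z' ∈ cell 2 (coarsen 2 z), (levelMatrix a q z w - levelMatrix a q z' w) := by
    rw [Finset.sum_sub_distrib, Finset.sum_const, card_cell, mul_sub, levelDifference, nsmul_eq_mul]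
    push_cast
    field_simp
  rw [hmean, norm_mul, norm_inv, norm_pow, Complex.norm_ofNat, inv_mul_le_iff₀ (by positivity)]
  refine (norm_sum_le_of_le _ fun z' hz' =>
    ha.norm_levelMatrix_sub_le hq w (norm_sub_le_one_of_mem_cell_two hz')).trans_eq ?_
  rw [Finset.sum_const, card_cell, nsmul_eq_mul]
  push_cast
  rfl

end LatticeCZ

/-! ### Cell averages and the Carleson embedding -/

section CellAverages

variable {n : ℕ}

/-- The average of `f` over the cell of side `q` with index `z`. -/
def cellAverage (q : ℕ) (f : (Fin n → ℤ) → ℂ) (z : Fin n → ℤ) : ℂ :=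
  ((q : ℂ) ^ n)⁻¹ * ∑ x ∈ cell q z, f x

lemma cellAverage_one (f : (Fin n → ℤ) → ℂ) (y : Fin n → ℤ) : cellAverage 1 f y = f y := by
  simp [cellAverage, cell_one]

lemma cellAverage_mul {q r : ℕ} (hq : 0 < q) (hr : 0 < r) (f : (Fin n → ℤ) → ℂ) (y : Fin n → ℤ) :
    cellAverage (q * r) f y = cellAverage r (cellAverage q f) y := by
  simp only [cellAverage]
  rw [sum_cell_mul hq hr, ← Finset.mul_sum, Nat.cast_mul, mul_pow, mul_inv]
  ring

lemma cellAverage_two_pow_succ (k : ℕ) (f : (Fin n → ℤ) → ℂ) (y : Fin n → ℤ) :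
    cellAverage (2 ^ (k + 1)) f y = cellAverage 2 (cellAverage (2 ^ k) f) y := by
  rw [pow_succ, cellAverage_mul (by positivity) two_pos]

lemma sum_cell_eq_card_smul_cellAverage {q : ℕ} (hq : 0 < q) (f : (Fin n → ℤ) → ℂ)
    (y : Fin n → ℤ) : ∑ x ∈ cell q y, f x = (cell q y).card • cellAverage q f y := by
  have hqn : (q : ℂ) ^ n ≠ 0 := pow_ne_zero n (Nat.cast_ne_zero.2 hq.ne')
  rw [card_cell, cellAverage, nsmul_eq_mul, Nat.cast_pow, mul_inv_cancel_left₀ hqn]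

lemma norm_cellAverage_le (q : ℕ) (f : (Fin n → ℤ) → ℂ) (y : Fin n → ℤ) :
    ‖cellAverage q f y‖ ≤ (∑ x ∈ cell q y, ‖f x‖) / (q : ℝ) ^ n := by
  rw [cellAverage, norm_mul, norm_inv, norm_pow, Complex.norm_natCast, div_eq_inv_mul]
  gcongr
  exact norm_sum_le _ _

lemma sum_sq_norm_sub_eq {ι E : Type*} [NormedAddCommGroup E] [InnerProductSpace ℝ E]
    (S : Finset ι) (g : ι → E) (m c : E) (hm : ∑ i ∈ S, g i = S.card • m) :
    ∑ i ∈ S, ‖g i - c‖ ^ 2 = ∑ i ∈ S, ‖g i - m‖ ^ 2 + S.card * ‖m - c‖ ^ 2 := by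
  have horth : ∑ i ∈ S, inner ℝ (g i - m) (m - c) = 0 := by
    rw [← sum_inner, Finset.sum_sub_distrib, hm, Finset.sum_const, sub_self, inner_zero_left]
  have hexp : ∀ i, ‖g i - c‖ ^ 2 =
      ‖g i - m‖ ^ 2 + 2 * inner ℝ (g i - m) (m - c) + ‖m - c‖ ^ 2 := fun i => by
    rw [← norm_add_sq_real, sub_add_sub_cancel]
  simp_rw [hexp]
  rw [Finset.sum_add_distrib, Finset.sum_add_distrib, ← Finset.mul_sum, horth, Finset.sum_const,
    nsmul_eq_mul, mul_zero, add_zero]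

lemma sum_sq_norm_eq {q : ℕ} (hq : 0 < q) (f : (Fin n → ℤ) → ℂ) (y : Fin n → ℤ) :
    ∑ x ∈ cell q y, ‖f x‖ ^ 2 =
      ∑ x ∈ cell q y, ‖f x - cellAverage q f y‖ ^ 2 + (q : ℝ) ^ n * ‖cellAverage q f y‖ ^ 2 := by
  simpa [card_cell] using
    sum_sq_norm_sub_eq (cell q y) f _ 0 (sum_cell_eq_card_smul_cellAverage hq f y)

/-- The total square deviation of `t` from its average on a cell of side `q`. It is not divided
by the number `qⁿ` of points of the cell. -/
def cellVariance (q : ℕ) (t : (Fin n → ℤ) → ℂ) (y : Fin n → ℤ) : ℝ :=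
  ∑ x ∈ cell q y, ‖t x - cellAverage q t y‖ ^ 2

lemma cellVariance_nonneg (q : ℕ) (t : (Fin n → ℤ) → ℂ) (y : Fin n → ℤ) :
    0 ≤ cellVariance q t y :=
  Finset.sum_nonneg fun _ _ => sq_nonneg _

lemma cellVariance_one (t : (Fin n → ℤ) → ℂ) (y : Fin n → ℤ) : cellVariance 1 t y = 0 := by
  simp [cellVariance, cellAverage_one, cell_one]

lemma cellVariance_le_sum_sq_norm_sub {q : ℕ} (hq : 0 < q) (t : (Fin n → ℤ) → ℂ) (y : Fin n → ℤ)
    (c : ℂ) : cellVariance q t y ≤ ∑ x ∈ cell q y, ‖t x - c‖ ^ 2 := by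
  rw [sum_sq_norm_sub_eq _ t _ c (sum_cell_eq_card_smul_cellAverage hq t y)]
  exact le_add_of_nonneg_right (by positivity)

lemma cellVariance_mul_two {q : ℕ} (hq : 0 < q) (t : (Fin n → ℤ) → ℂ) (y : Fin n → ℤ) :
    cellVariance (q * 2) t y = ∑ z ∈ cell 2 y, cellVariance q t z +
      (q : ℝ) ^ n * ∑ z ∈ cell 2 y, ‖cellAverage q t z - cellAverage (q * 2) t y‖ ^ 2 := by
  rw [cellVariance, sum_cell_mul hq two_pos, Finset.mul_sum, ← Finset.sum_add_distrib]
  refine Finset.sum_congr rfl fun z _ => ?_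
  rw [sum_sq_norm_sub_eq _ t _ _ (sum_cell_eq_card_smul_cellAverage hq t z), card_cell,
    Nat.cast_pow, cellVariance]

/-- The Bellman-function inequality behind the Carleson embedding: `(p, E) ↦ p ^ 2 / E` is convex,
and its decrease when `E` grows by `w` controls `w * (p / Q) ^ 2` as long as `E` stays of
order `Q`. -/
lemma mul_sq_div_le_of_add_le {ι : Type*} {S : Finset ι} (hS : S.Nonempty) {C Q w : ℝ} (hC : 0 < C)
    (hQ : 0 < Q) (hw : 0 ≤ w) {P D : ι → ℝ} (hD : ∀ i ∈ S, 0 < D i)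
    (hle : ∑ i ∈ S, D i + w ≤ 2 * C * Q) :
    w * ((∑ i ∈ S, P i) / Q) ^ 2 ≤
      4 * C * C * (∑ i ∈ S, P i ^ 2 / D i - (∑ i ∈ S, P i) ^ 2 / (∑ i ∈ S, D i + w)) := by
  have hconvex : (∑ i ∈ S, P i) ^ 2 / (∑ i ∈ S, D i) ≤ ∑ i ∈ S, P i ^ 2 / D i :=
    Finset.sq_sum_div_le_sum_sq_div S P hD
  have hE : 0 < ∑ i ∈ S, D i := Finset.sum_pos hD hS
  set E := ∑ i ∈ S, D i
  set p := ∑ i ∈ S, P i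
  have hdecrease : p ^ 2 * w / (2 * C * Q) ^ 2 ≤ p ^ 2 / E - p ^ 2 / (E + w) := by
    calc p ^ 2 * w / (2 * C * Q) ^ 2 ≤ p ^ 2 * w / (E * (E + w)) := by
          rw [sq (2 * C * Q)]
          gcongr
          linarith
      _ = p ^ 2 / E - p ^ 2 / (E + w) := by
          rw [div_sub_div _ _ (by positivity) (by positivity)]
          ring
  calc w * (p / Q) ^ 2 = 4 * C * C * (p ^ 2 * w / (2 * C * Q) ^ 2) := by field_simp; ring
    _ ≤ _ := by gcongr; linarith

/-- The Bellman function `(∑ |f|)² / (C qⁿ + variance of t)` of a cell of side `q`. Its increments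
from a cell to its parent dominate the terms of the Carleson embedding. -/
def carlesonPotential (C : ℝ) (t f : (Fin n → ℤ) → ℂ) (q : ℕ) (y : Fin n → ℤ) : ℝ :=
  (∑ x ∈ cell q y, ‖f x‖) ^ 2 / (C * (q : ℝ) ^ n + cellVariance q t y)

lemma carlesonPotential_nonneg {C : ℝ} (hC : 0 ≤ C) (t f : (Fin n → ℤ) → ℂ) (q : ℕ)
    (y : Fin n → ℤ) : 0 ≤ carlesonPotential C t f q y := by
  have hv := cellVariance_nonneg q t y
  unfold carlesonPotential
  positivity

lemma mul_carlesonPotential_one {C : ℝ} (hC : 0 < C) (t f : (Fin n → ℤ) → ℂ) (y : Fin n → ℤ) :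
    C * carlesonPotential C t f 1 y = ‖f y‖ ^ 2 := by
  simp only [carlesonPotential, cellVariance_one, cell_one, Finset.sum_singleton, Nat.cast_one,
    one_pow, mul_one, add_zero]
  field_simp

lemma carleson_step {C : ℝ} (hC : 0 < C) {q : ℕ} (hq : 0 < q) (t f : (Fin n → ℤ) → ℂ)
    (y : Fin n → ℤ) (ht : cellVariance (q * 2) t y ≤ C * ((q * 2 : ℕ) : ℝ) ^ n) :
    (q : ℝ) ^ n * ∑ z ∈ cell 2 y, ‖cellAverage q t z - cellAverage (q * 2) t y‖ ^ 2 *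
        ‖cellAverage (q * 2) f y‖ ^ 2 ≤
      4 * C * C *
        (∑ z ∈ cell 2 y, carlesonPotential C t f q z - carlesonPotential C t f (q * 2) y) := by
  have hD : ∀ z ∈ cell 2 y, 0 < C * (q : ℝ) ^ n + cellVariance q t z := fun z _ =>
    add_pos_of_pos_of_nonneg (by positivity) (cellVariance_nonneg q t z)
  have hv := cellVariance_mul_two hq t y
  set w := (q : ℝ) ^ n * ∑ z ∈ cell 2 y, ‖cellAverage q t z - cellAverage (q * 2) t y‖ ^ 2
  have hw : 0 ≤ w := by positivity
  have hsum : C * ((q * 2 : ℕ) : ℝ) ^ n + cellVariance (q * 2) t y =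
      ∑ z ∈ cell 2 y, (C * (q : ℝ) ^ n + cellVariance q t z) + w := by
    rw [hv, Finset.sum_add_distrib, Finset.sum_const, card_cell, nsmul_eq_mul]
    push_cast
    ring
  have hbellman := mul_sq_div_le_of_add_le (P := fun z => ∑ x ∈ cell q z, ‖f x‖)
    (Q := ((q * 2 : ℕ) : ℝ) ^ n) ⟨_, smul_mem_cell two_pos y⟩ hC (by positivity) hw hD
    (by rw [← hsum]; linarith)
  rw [← hsum, ← sum_cell_mul hq two_pos] at hbellman
  rw [← Finset.sum_mul, ← mul_assoc]
  refine le_trans ?_ hbellman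
  gcongr
  exact norm_cellAverage_le _ _ _

end CellAverages

/-! ### The dyadic pyramid over a cube -/

section Pyramid

variable {n M N : ℕ}

/-- The indices of the cells of side `2 ^ k` contained in the cube `[-M 2 ^ N, M 2 ^ N)ⁿ`. -/
def levelBox (n M N k : ℕ) : Finset (Fin n → ℤ) := box n (M * 2 ^ (N - k))

lemma levelBox_eq_box {k j : ℕ} (h : k + j ≤ N) :
    levelBox n M N k = box n (2 ^ j * (M * 2 ^ (N - (k + j)))) := by
  have hexp : N - k = j + (N - (k + j)) := by omega
  rw [levelBox, hexp, pow_add, mul_left_comm]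

lemma coarsen_mem_levelBox {k j : ℕ} (h : k + j ≤ N) {z : Fin n → ℤ} :
    coarsen (2 ^ j) z ∈ levelBox n M N (k + j) ↔ z ∈ levelBox n M N k := by
  rw [levelBox_eq_box h, levelBox, coarsen_mem_box (by positivity)]

lemma coarsen_two_mem_levelBox {k : ℕ} (h : k < N) {z : Fin n → ℤ} :
    coarsen 2 z ∈ levelBox n M N (k + 1) ↔ z ∈ levelBox n M N k :=
  coarsen_mem_levelBox (j := 1) h

lemma sum_levelBox {A : Type*} [AddCommMonoid A] {k j : ℕ} (h : k + j ≤ N)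
    (F : (Fin n → ℤ) → A) :
    ∑ z ∈ levelBox n M N k, F z = ∑ y ∈ levelBox n M N (k + j), ∑ z ∈ cell (2 ^ j) y, F z := by
  rw [levelBox_eq_box h, levelBox, sum_box_mul (by positivity)]

lemma sum_levelBox_succ {A : Type*} [AddCommMonoid A] {k : ℕ} (h : k < N)
    (F : (Fin n → ℤ) → A) :
    ∑ z ∈ levelBox n M N k, F z = ∑ y ∈ levelBox n M N (k + 1), ∑ z ∈ cell 2 y, F z :=
  sum_levelBox (j := 1) h F

/-- The average of `f` on the parent of the cell of side `2 ^ k` with index `z`. -/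
def parentAverage (k : ℕ) (f : (Fin n → ℤ) → ℂ) (z : Fin n → ℤ) : ℂ :=
  cellAverage (2 ^ (k + 1)) f (coarsen 2 z)

lemma parentAverage_of_mem_cell {k : ℕ} (f : (Fin n → ℤ) → ℂ) {z y : Fin n → ℤ}
    (hz : z ∈ cell 2 y) : parentAverage k f z = cellAverage (2 ^ (k + 1)) f y := by
  rw [parentAverage, (mem_cell two_pos).1 hz]

/-- The difference between the averages of `f` on a cell of side `2 ^ k` and on its parent. -/
def dyadicDifference (k : ℕ) (f : (Fin n → ℤ) → ℂ) (z : Fin n → ℤ) : ℂ :=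
  cellAverage (2 ^ k) f z - parentAverage k f z

theorem carleson_embedding {C : ℝ} (hC : 0 < C) (t : (Fin n → ℤ) → ℂ)
    (ht : ∀ k ≤ N, ∀ y ∈ levelBox n M N k, cellVariance (2 ^ k) t y ≤ C * ((2 : ℝ) ^ k) ^ n)
    (f : (Fin n → ℤ) → ℂ) :
    ∑ k ∈ Finset.range N, ((2 : ℝ) ^ k) ^ n * ∑ z ∈ levelBox n M N k,
        ‖dyadicDifference k t z‖ ^ 2 * ‖parentAverage k f z‖ ^ 2 ≤
      4 * C * ∑ x ∈ levelBox n M N 0, ‖f x‖ ^ 2 := by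
  let Ψ : ℕ → ℝ := fun k => ∑ y ∈ levelBox n M N k, carlesonPotential C t f (2 ^ k) y
  have hstep : ∀ k ∈ Finset.range N, ((2 : ℝ) ^ k) ^ n * ∑ z ∈ levelBox n M N k,
      ‖dyadicDifference k t z‖ ^ 2 * ‖parentAverage k f z‖ ^ 2 ≤ 4 * C * C * (Ψ k - Ψ (k + 1)) := by
    intro k hk
    have hkN := Finset.mem_range.1 hk
    simp only [Ψ]
    rw [sum_levelBox_succ hkN, sum_levelBox_succ hkN, ← Finset.sum_sub_distrib,
      Finset.mul_sum, Finset.mul_sum]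
    refine Finset.sum_le_sum fun y hy => ?_
    have hv : cellVariance (2 ^ k * 2) t y ≤ C * ((2 ^ k * 2 : ℕ) : ℝ) ^ n := by
      rw [← pow_succ, Nat.cast_pow, Nat.cast_ofNat]
      exact ht (k + 1) hkN y hy
    have h := carleson_step hC (by positivity) t f y hv
    rw [← pow_succ, Nat.cast_pow, Nat.cast_ofNat] at h
    refine le_trans (le_of_eq ?_) h
    congr 1
    refine Finset.sum_congr rfl fun z hz => ?_
    rw [dyadicDifference, parentAverage_of_mem_cell t hz, parentAverage_of_mem_cell f hz]
  have hbot : C * Ψ 0 = ∑ x ∈ levelBox n M N 0, ‖f x‖ ^ 2 := by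
    simp only [Ψ, pow_zero, Finset.mul_sum, mul_carlesonPotential_one hC]
  have htop : 0 ≤ C * Ψ N := mul_nonneg hC.le <|
    Finset.sum_nonneg fun y _ => carlesonPotential_nonneg hC.le t f _ y
  calc _ ≤ ∑ k ∈ Finset.range N, 4 * C * C * (Ψ k - Ψ (k + 1)) := Finset.sum_le_sum hstep
    _ = 4 * C * (C * Ψ 0 - C * Ψ N) := by rw [← Finset.mul_sum, Finset.sum_range_sub']; ring
    _ ≤ _ := by
      rw [hbot]
      exact mul_le_mul_of_nonneg_left (sub_le_self _ htop) (by positivity)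

end Pyramid

/-! ### Oscillation of row sums -/

section Oscillation

variable {n : ℕ} {C : ℝ} {a : (Fin n → ℤ) → (Fin n → ℤ) → ℂ}

lemma norm_one_sub_tentBump_le_one (c : Fin n → ℤ) (ρ : ℝ) (y : Fin n → ℤ) :
    ‖1 - (tentBump c ρ y : ℂ)‖ ≤ 1 := by
  rw [← Complex.ofReal_one, ← Complex.ofReal_sub, Complex.norm_real,
    Real.norm_of_nonneg (sub_nonneg.2 (tentBump_le_one _ _ _))]
  exact sub_le_self _ (tentBump_nonneg _ _ _)

lemma IsLatticeCZ.norm_sum_sub_mul_one_sub_tentBump_le (ha : IsLatticeCZ n C a)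
    {c x : Fin n → ℤ} {ρ : ℝ} (hρ : 2 * ‖c - x‖ + 10 ≤ ρ) (X : Finset (Fin n → ℤ)) :
    ‖∑ w ∈ X, (a x w - a c w) * (1 - (tentBump c ρ w : ℂ))‖ ≤
      C * (2 * (n + 1) * 2 ^ n * (2 ^ n * 2)) := by
  have hC := ha.nonneg
  have hcx := norm_nonneg (c - x)
  have hterm : ∀ w, ‖(a x w - a c w) * (1 - (tentBump c ρ w : ℂ))‖ ≤
      if ρ ≤ ‖w - c‖ then C * (ρ / ‖w - c‖ ^ (n + 1)) else 0 := by
    intro w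
    split_ifs with hw
    · calc _ ≤ ‖a c w - a x w‖ := by
            rw [norm_mul, norm_sub_rev (a x w)]
            exact mul_le_of_le_one_right (norm_nonneg _) (norm_one_sub_tentBump_le_one c ρ w)
        _ ≤ C * ‖c - x‖ / ‖c - w‖ ^ (n + 1) :=
            ha.regularity c x w (by rw [norm_sub_rev c w]; linarith)
        _ ≤ C * ρ / ‖w - c‖ ^ (n + 1) := by rw [norm_sub_rev c w]; gcongr; linarith
        _ = C * (ρ / ‖w - c‖ ^ (n + 1)) := mul_div_assoc _ _ _
    · rw [tentBump_eq_one (by linarith) (not_le.1 hw).le, Complex.ofReal_one, sub_self, mul_zero,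
        norm_zero]
  refine (norm_sum_le_of_le _ fun w _ => hterm w).trans ?_
  rw [← Finset.sum_filter, ← Finset.mul_sum]
  gcongr
  exact sum_tail_le (by linarith) c _ fun w hw => (Finset.mem_filter.1 hw).2

/-- A bound for the mean oscillation of the row sums of a lattice Calderón–Zygmund matrix. -/
def oscillationBound (n : ℕ) (C : ℝ) : ℝ :=
  2 * (C * 12 ^ n) + 2 * (C * (2 * (n + 1) * 2 ^ n * (2 ^ n * 2))) ^ 2

lemma IsLatticeCZ.cellVariance_sum_le (ha : IsLatticeCZ n C a) {q : ℕ} (hq : 0 < q)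
    (y : Fin n → ℤ) {X : Finset (Fin n → ℤ)}
    (hX : ∀ w, ‖w - (q : ℤ) • y‖ < 2 * (12 * q) → w ∈ X) :
    cellVariance q (fun x => ∑ w ∈ X, a x w) y ≤ oscillationBound n C * (q : ℝ) ^ n := by
  have hq1 : (1 : ℝ) ≤ q := by exact_mod_cast hq
  set c := (q : ℤ) • y
  set K := C * (2 * (n + 1) * 2 ^ n * (2 ^ n * 2) : ℝ)
  let b := ∑ w ∈ X, a c w * (1 - (tentBump c (12 * q) w : ℂ))
  let u : (Fin n → ℤ) → ℂ := fun x => ∑ w ∈ X, a x w * (tentBump c (12 * q) w : ℂ)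
  have hdev : ∀ x ∈ cell q y, ‖∑ w ∈ X, a x w - b‖ ^ 2 ≤ 2 * (‖u x‖ ^ 2 + K ^ 2) := by
    intro x hx
    have hcx : ‖c - x‖ ≤ q := norm_sub_le_of_mem_same_cell (smul_mem_cell hq y) hx
    have hsplit : ∑ w ∈ X, a x w - b =
        u x + ∑ w ∈ X, (a x w - a c w) * (1 - (tentBump c (12 * q) w : ℂ)) := by
      simp only [b, u]
      rw [← Finset.sum_sub_distrib, ← Finset.sum_add_distrib]
      exact Finset.sum_congr rfl fun w _ => by ring
    have hfar := ha.norm_sum_sub_mul_one_sub_tentBump_le (ρ := 12 * q) (by linarith) X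
    calc _ ≤ (‖u x‖ + K) ^ 2 := by
          rw [hsplit]
          gcongr
          exact (norm_add_le _ _).trans (by gcongr)
      _ ≤ _ := add_sq_le
  refine (cellVariance_le_sum_sq_norm_sub hq _ y b).trans ?_
  calc _ ≤ ∑ x ∈ cell q y, 2 * (‖u x‖ ^ 2 + K ^ 2) := Finset.sum_le_sum hdev
    _ = 2 * ∑ x ∈ cell q y, ‖u x‖ ^ 2 + (q : ℝ) ^ n * (2 * K ^ 2) := by
        rw [← Finset.mul_sum, Finset.sum_add_distrib, Finset.sum_const, card_cell, nsmul_eq_mul,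
          Nat.cast_pow]
        ring
    _ ≤ 2 * (C * (12 * q) ^ n) + (q : ℝ) ^ n * (2 * K ^ 2) := by
        gcongr
        exact ha.testing c (12 * q) (by linarith) X hX _
    _ = oscillationBound n C * (q : ℝ) ^ n := by rw [oscillationBound, mul_pow]; ring

end Oscillation

/-! ### Interaction of different scales -/

section CoarseSchur

variable {n : ℕ}

/-- The weight `latticeDecay` with its diagonal blocks, the cells of side `q`, removed. -/
def offCellDecay (q : ℕ) (z w : Fin n → ℤ) : ℝ :=
  if coarsen q z = coarsen q w then 0 else latticeDecay n (z - w)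

lemma offCellDecay_nonneg (q : ℕ) (z w : Fin n → ℤ) : 0 ≤ offCellDecay q z w := by
  unfold offCellDecay
  split_ifs
  exacts [le_rfl, latticeDecay_nonneg _]

lemma offCellDecay_comm (q : ℕ) (z w : Fin n → ℤ) : offCellDecay q z w = offCellDecay q w z := by
  simp only [offCellDecay, eq_comm (a := coarsen q z), latticeDecay_sub_comm z]

lemma sum_offCellDecay_mul_le {q : ℕ} (hq : 0 < q) (X B : Finset (Fin n → ℤ))
    {G : (Fin n → ℤ) → ℝ} (hG : ∀ y, 0 ≤ G y) (hGB : ∀ y ∉ B, G y = 0) :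
    ∑ z ∈ X, ∑ w ∈ X, offCellDecay q z w * G (coarsen q z) ≤
      √n * (∑' m : Fin n → ℤ, latticeDecay n m * √(1 + ‖m‖)) * (√q)⁻¹ *
        ((q : ℝ) ^ n * ∑ y ∈ B, G y) := by
  classical
  let F : (Fin n → ℤ) → ℝ := fun z => ∑ w ∈ X, offCellDecay q z w * G (coarsen q z)
  have hF : ∀ z, 0 ≤ F z := fun z =>
    Finset.sum_nonneg fun w _ => mul_nonneg (offCellDecay_nonneg _ _ _) (hG _)
  have hcell : ∀ y, ∑ z ∈ cell q y, F z =
      G y * ∑ z ∈ cell q y, ∑ w ∈ X with w ∉ cell q y, latticeDecay n (w - z) := by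
    intro y
    rw [Finset.mul_sum]
    refine Finset.sum_congr rfl fun z hz => ?_
    simp only [F, offCellDecay, (mem_cell hq).1 hz, mem_cell hq, Finset.sum_filter, Finset.mul_sum]
    refine Finset.sum_congr rfl fun w _ => ?_
    rw [mul_comm, latticeDecay_sub_comm, ite_not]
    simp only [eq_comm]
  calc ∑ z ∈ X, F z = ∑ z ∈ X with coarsen q z ∈ B, F z := by
        refine (Finset.sum_filter_of_ne fun z _ hz => ?_).symm
        by_contra hzB
        exact hz (by simp only [F, hGB _ hzB, mul_zero, Finset.sum_const_zero])
    _ = ∑ y ∈ B, ∑ z ∈ X.filter (coarsen q · ∈ B) with coarsen q z = y, F z :=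
        (Finset.sum_fiberwise_of_maps_to (fun z hz => (Finset.mem_filter.1 hz).2) F).symm
    _ ≤ ∑ y ∈ B, ∑ z ∈ cell q y, F z :=
        Finset.sum_le_sum fun y _ => Finset.sum_le_sum_of_subset_of_nonneg
          (fun z hz => (mem_cell hq).2 (Finset.mem_filter.1 hz).2) fun z _ _ => hF z
    _ ≤ ∑ y ∈ B, G y *
          (√n * (∑' m : Fin n → ℤ, latticeDecay n m * √(1 + ‖m‖)) * (q ^ n * (√q)⁻¹)) := by
        refine Finset.sum_le_sum fun y _ => ?_
        rw [hcell]
        exact mul_le_mul_of_nonneg_left (sum_cell_sum_notMem_latticeDecay_le hq y X) (hG y)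
    _ = _ := by rw [← Finset.sum_mul]; ring

/-- The constant of the Schur test between functions on `ℤⁿ` and functions on a coarser lattice. -/
def coarseSchurBound (n : ℕ) : ℝ :=
  ∑' m, latticeDecay n m + 4 * (√n * ∑' m : Fin n → ℤ, latticeDecay n m * √(1 + ‖m‖))

lemma coarseSchurBound_nonneg (n : ℕ) : 0 ≤ coarseSchurBound n :=
  add_nonneg (tsum_nonneg latticeDecay_nonneg) <| mul_nonneg zero_le_four <|
    mul_nonneg (Real.sqrt_nonneg _) <|
      tsum_nonneg fun _ => mul_nonneg (latticeDecay_nonneg _) (Real.sqrt_nonneg _)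

variable {E : Type*} [NormedAddCommGroup E]

lemma sum_offCellDecay_mul_sq_norm_sub_le {q : ℕ} (hq : 0 < q) (X B : Finset (Fin n → ℤ))
    {H : (Fin n → ℤ) → E} (hH : ∀ y ∉ B, H y = 0) :
    ∑ z ∈ X, ∑ w ∈ X, offCellDecay q z w * ‖H (coarsen q w) - H (coarsen q z)‖ ^ 2 ≤
      4 * (√n * (∑' m : Fin n → ℤ, latticeDecay n m * √(1 + ‖m‖)) * (√q)⁻¹ *
        ((q : ℝ) ^ n * ∑ y ∈ B, ‖H y‖ ^ 2)) := by
  have hsq : ∀ z w, ‖H (coarsen q w) - H (coarsen q z)‖ ^ 2 ≤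
      2 * (‖H (coarsen q w)‖ ^ 2 + ‖H (coarsen q z)‖ ^ 2) := fun z w =>
    (pow_le_pow_left₀ (norm_nonneg _) (norm_sub_le _ _) 2).trans add_sq_le
  have hself := sum_offCellDecay_mul_le hq X B (G := fun y => ‖H y‖ ^ 2) (fun y => by positivity)
    fun y hy => by rw [hH y hy, norm_zero, sq, mul_zero]
  calc _ ≤ ∑ z ∈ X, ∑ w ∈ X, 2 * (offCellDecay q w z * ‖H (coarsen q w)‖ ^ 2 +
          offCellDecay q z w * ‖H (coarsen q z)‖ ^ 2) := by
        refine Finset.sum_le_sum fun z _ => Finset.sum_le_sum fun w _ => ?_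
        refine (mul_le_mul_of_nonneg_left (hsq z w) (offCellDecay_nonneg q z w)).trans_eq ?_
        rw [offCellDecay_comm q w z]
        ring
    _ = 4 * ∑ z ∈ X, ∑ w ∈ X, offCellDecay q z w * ‖H (coarsen q z)‖ ^ 2 := by
        simp_rw [← Finset.mul_sum, Finset.sum_add_distrib]
        rw [Finset.sum_comm]
        ring
    _ ≤ _ := by gcongr

/-- Schur's test against a function of scale `q`: only pairs of points in different cells of side
`q` contribute, which gains a power of `q`. -/
lemma sum_mul_latticeDecay_mul_norm_sub_le {q : ℕ} (hq : 0 < q) {μ : ℝ} (hμ : 0 < μ)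
    (hqμ : (√q)⁻¹ ≤ μ ^ 2) (X B : Finset (Fin n → ℤ)) (x : (Fin n → ℤ) → ℝ)
    {H : (Fin n → ℤ) → E} (hH : ∀ y ∉ B, H y = 0) :
    ∑ z ∈ X, ∑ w ∈ X, x z * latticeDecay n (z - w) * ‖H (coarsen q w) - H (coarsen q z)‖ ≤
      coarseSchurBound n * (μ * (∑ z ∈ X, x z ^ 2 + (q : ℝ) ^ n * ∑ y ∈ B, ‖H y‖ ^ 2)) := by
  set κ : ℝ := ∑' m, latticeDecay n m
  set κ' : ℝ := √n * ∑' m : Fin n → ℤ, latticeDecay n m * √(1 + ‖m‖)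
  have hκ : 0 ≤ κ := tsum_nonneg latticeDecay_nonneg
  have hκ' : 0 ≤ κ' := mul_nonneg (Real.sqrt_nonneg _) <|
    tsum_nonneg fun m => mul_nonneg (latticeDecay_nonneg m) (Real.sqrt_nonneg _)
  have hterm : ∀ z w, x z * latticeDecay n (z - w) * ‖H (coarsen q w) - H (coarsen q z)‖ ≤
      μ * (x z ^ 2 * latticeDecay n (w - z)) +
        μ⁻¹ * (offCellDecay q z w * ‖H (coarsen q w) - H (coarsen q z)‖ ^ 2) := by
    intro z w
    have hd := latticeDecay_nonneg (z - w)
    rw [latticeDecay_sub_comm w z, offCellDecay]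
    split_ifs with hzw
    · rw [hzw, sub_self, norm_zero, mul_zero]; positivity
    · have hamgm : ∀ s t : ℝ, s * t ≤ μ * s ^ 2 + μ⁻¹ * t ^ 2 := fun s t => by
        have hsq : 0 ≤ μ⁻¹ * (μ * s - t) ^ 2 := by positivity
        have hexp : μ⁻¹ * (μ * s - t) ^ 2 = μ * s ^ 2 - 2 * (s * t) + μ⁻¹ * t ^ 2 := by
          field_simp
          ring
        have hpos : 0 ≤ μ * s ^ 2 + μ⁻¹ * t ^ 2 := by positivity
        linarith
      linarith [mul_le_mul_of_nonneg_left (hamgm (x z) ‖H (coarsen q w) - H (coarsen q z)‖) hd]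
  calc _ ≤ _ := Finset.sum_le_sum fun z _ => Finset.sum_le_sum fun w _ => hterm z w
    _ = μ * ∑ z ∈ X, x z ^ 2 * ∑ w ∈ X, latticeDecay n (w - z) + μ⁻¹ * ∑ z ∈ X, ∑ w ∈ X,
          offCellDecay q z w * ‖H (coarsen q w) - H (coarsen q z)‖ ^ 2 := by
        simp_rw [Finset.sum_add_distrib, Finset.mul_sum]
    _ ≤ μ * ∑ z ∈ X, x z ^ 2 * κ +
          μ⁻¹ * (4 * (κ' * μ ^ 2 * ((q : ℝ) ^ n * ∑ y ∈ B, ‖H y‖ ^ 2))) := by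
        gcongr with z
        · exact sum_latticeDecay_sub_le X z
        · refine (sum_offCellDecay_mul_sq_norm_sub_le hq X B hH).trans ?_
          gcongr
    _ = μ * (κ * ∑ z ∈ X, x z ^ 2 + 4 * κ' * ((q : ℝ) ^ n * ∑ y ∈ B, ‖H y‖ ^ 2)) := by
        rw [← Finset.sum_mul]; field_simp
    _ ≤ μ * (coarseSchurBound n * ∑ z ∈ X, x z ^ 2 +
          coarseSchurBound n * ((q : ℝ) ^ n * ∑ y ∈ B, ‖H y‖ ^ 2)) := by
        gcongr
        exacts [le_add_of_nonneg_right (by positivity), le_add_of_nonneg_left hκ]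
    _ = _ := by ring

end CoarseSchur

/-! ### Martingale decomposition -/

section Martingale

variable {n N : ℕ}

/-- The `l`-th term of the dyadic martingale decomposition of `f` with `N` scales; the last term
is the average at the top scale. -/
def martingaleTerm (N : ℕ) (f : (Fin n → ℤ) → ℂ) (l : ℕ) (z : Fin n → ℤ) : ℂ :=
  if l < N then dyadicDifference l f z else cellAverage (2 ^ l) f z

/-- The contribution of the scale `2 ^ l` to `∑ ‖f x‖²` over the cube `[-2 ^ N, 2 ^ N)ⁿ`. -/
def levelEnergy (N : ℕ) (f : (Fin n → ℤ) → ℂ) (l : ℕ) : ℝ :=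
  ((2 : ℝ) ^ l) ^ n * ∑ z ∈ levelBox n 1 N l, ‖martingaleTerm N f l z‖ ^ 2

lemma levelEnergy_nonneg (N : ℕ) (f : (Fin n → ℤ) → ℂ) (l : ℕ) : 0 ≤ levelEnergy N f l := by
  unfold levelEnergy; positivity

lemma martingaleTerm_of_lt {l : ℕ} (hl : l < N) (f : (Fin n → ℤ) → ℂ) :
    martingaleTerm N f l = dyadicDifference l f :=
  funext fun _ => if_pos hl

lemma martingaleTerm_self (N : ℕ) (f : (Fin n → ℤ) → ℂ) :
    martingaleTerm N f N = cellAverage (2 ^ N) f :=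
  funext fun _ => if_neg (lt_irrefl N)

lemma sum_cell_dyadicDifference (k : ℕ) (f : (Fin n → ℤ) → ℂ) (y : Fin n → ℤ) :
    ∑ z ∈ cell 2 y, dyadicDifference k f z = 0 := by
  have hparent : ∀ z ∈ cell 2 y, dyadicDifference k f z =
      cellAverage (2 ^ k) f z - cellAverage 2 (cellAverage (2 ^ k) f) y := fun z hz => by
    rw [dyadicDifference, parentAverage_of_mem_cell f hz, cellAverage_two_pow_succ]
  rw [Finset.sum_congr rfl hparent, Finset.sum_sub_distrib, Finset.sum_const,
    sum_cell_eq_card_smul_cellAverage two_pos, sub_self]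

lemma cellAverage_eq_zero_of_notMem {M l : ℕ} (hl : l ≤ N) {f : (Fin n → ℤ) → ℂ}
    (hf : ∀ x ∉ levelBox n M N 0, f x = 0) {z : Fin n → ℤ} (hz : z ∉ levelBox n M N l) :
    cellAverage (2 ^ l) f z = 0 := by
  rw [cellAverage, Finset.sum_eq_zero, mul_zero]
  refine fun x hx => hf x fun hx' => hz ?_
  rwa [← coarsen_mem_levelBox (k := 0) (j := l) (by omega), zero_add,
    (mem_cell (by positivity)).1 hx] at hx'

lemma martingaleTerm_eq_zero_of_notMem {l : ℕ} (hl : l ≤ N) {f : (Fin n → ℤ) → ℂ}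
    (hf : ∀ x ∉ levelBox n 1 N 0, f x = 0) {z : Fin n → ℤ} (hz : z ∉ levelBox n 1 N l) :
    martingaleTerm N f l z = 0 := by
  unfold martingaleTerm
  split_ifs with h
  · rw [dyadicDifference, parentAverage, cellAverage_eq_zero_of_notMem hl hf hz,
      cellAverage_eq_zero_of_notMem h hf (by rwa [coarsen_two_mem_levelBox h]), sub_zero]
  · exact cellAverage_eq_zero_of_notMem hl hf hz

lemma levelEnergy_eq_sub {l : ℕ} (hl : l < N) (f : (Fin n → ℤ) → ℂ) :
    levelEnergy N f l =
      ((2 : ℝ) ^ l) ^ n * ∑ z ∈ levelBox n 1 N l, ‖cellAverage (2 ^ l) f z‖ ^ 2 -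
      ((2 : ℝ) ^ (l + 1)) ^ n *
        ∑ z ∈ levelBox n 1 N (l + 1), ‖cellAverage (2 ^ (l + 1)) f z‖ ^ 2 := by
  have hcell : ∀ y, ∑ z ∈ cell 2 y, ‖cellAverage (2 ^ l) f z‖ ^ 2 =
      ∑ z ∈ cell 2 y, ‖dyadicDifference l f z‖ ^ 2 +
        2 ^ n * ‖cellAverage (2 ^ (l + 1)) f y‖ ^ 2 := by
    intro y
    rw [sum_sq_norm_eq two_pos, cellAverage_two_pow_succ, Nat.cast_ofNat]
    congr 1
    refine Finset.sum_congr rfl fun z hz => ?_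
    rw [dyadicDifference, parentAverage_of_mem_cell f hz, cellAverage_two_pow_succ]
  rw [levelEnergy, martingaleTerm_of_lt hl, sum_levelBox_succ hl, sum_levelBox_succ hl]
  simp_rw [hcell]
  rw [Finset.sum_add_distrib, ← Finset.mul_sum, pow_succ (2 : ℝ), mul_pow]
  ring

lemma sum_levelEnergy (N : ℕ) (f : (Fin n → ℤ) → ℂ) :
    ∑ l ∈ Finset.range (N + 1), levelEnergy N f l = ∑ x ∈ levelBox n 1 N 0, ‖f x‖ ^ 2 := by
  rw [Finset.sum_range_succ,
    Finset.sum_congr rfl fun l hl => levelEnergy_eq_sub (Finset.mem_range.1 hl) f,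
    Finset.sum_range_sub' fun l => ((2 : ℝ) ^ l) ^ n *
      ∑ z ∈ levelBox n 1 N l, ‖cellAverage (2 ^ l) f z‖ ^ 2,
    levelEnergy, martingaleTerm_self, sub_add_cancel]
  simp_rw [pow_zero, one_pow, one_mul, cellAverage_one]

lemma sum_range_levelEnergy_le (N : ℕ) (f : (Fin n → ℤ) → ℂ) :
    ∑ l ∈ Finset.range N, levelEnergy N f l ≤ ∑ x ∈ levelBox n 1 N 0, ‖f x‖ ^ 2 := by
  rw [← sum_levelEnergy, Finset.sum_range_succ]
  exact le_add_of_nonneg_right (levelEnergy_nonneg N f N)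

lemma cellAverage_eq_sum_martingaleTerm (f : (Fin n → ℤ) → ℂ) (i k : ℕ) (z : Fin n → ℤ) :
    cellAverage (2 ^ k) f z =
      ∑ l ∈ Finset.range (i + 1), martingaleTerm (k + i) f (k + l) (coarsen (2 ^ l) z) := by
  induction i generalizing k z with
  | zero => simp [martingaleTerm_self, coarsen_one]
  | succ i ih =>
    have hshift : ∀ l, martingaleTerm (k + (i + 1)) f (k + (l + 1)) (coarsen (2 ^ (l + 1)) z) =
        martingaleTerm (k + 1 + i) f (k + 1 + l) (coarsen (2 ^ l) (coarsen 2 z)) := fun l => by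
      rw [coarsen_coarsen, pow_succ', add_comm i 1, ← add_assoc, add_comm l 1, ← add_assoc]
    rw [Finset.sum_range_succ']
    simp_rw [hshift]
    rw [← ih (k + 1), pow_zero, coarsen_one, add_zero, martingaleTerm_of_lt (by omega),
      dyadicDifference, parentAverage]
    ring

lemma parentAverage_eq_sum_martingaleTerm {k : ℕ} (hk : k < N) (f : (Fin n → ℤ) → ℂ)
    (z : Fin n → ℤ) : parentAverage k f z =
      ∑ l ∈ Finset.range (N - k), martingaleTerm N f (k + 1 + l) (coarsen (2 ^ (l + 1)) z) := by
  obtain ⟨i, rfl⟩ := Nat.exists_eq_add_of_lt hk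
  rw [parentAverage, cellAverage_eq_sum_martingaleTerm f i, show k + i + 1 - k = i + 1 by omega,
    show k + i + 1 = k + 1 + i by omega]
  simp_rw [coarsen_coarsen, pow_succ']

end Martingale

lemma sum_range_nine_tenths_pow_le (M : ℕ) :
    ∑ l ∈ Finset.range M, ((9 : ℝ) / 10) ^ (l + 1) ≤ 10 := by
  simp_rw [pow_succ]
  rw [← Finset.sum_mul, geom_sum_eq (by norm_num)]
  have hpos : (0 : ℝ) < (9 / 10) ^ M := by positivity
  have hval : ((9 / 10 : ℝ) ^ M - 1) / (9 / 10 - 1) * (9 / 10) = 9 - 9 * (9 / 10) ^ M := by ring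
  linarith

lemma sum_nine_tenths_pow_mul_le (N : ℕ) {A B : ℕ → ℝ} (hA : ∀ k, 0 ≤ A k) (hB : ∀ m, 0 ≤ B m) :
    ∑ k ∈ Finset.range N, ∑ l ∈ Finset.range (N - k),
        ((9 : ℝ) / 10) ^ (l + 1) * (A k + B (k + 1 + l)) ≤
      10 * (∑ k ∈ Finset.range N, A k + ∑ m ∈ Finset.range (N + 1), B m) := by
  have hAsum : ∑ k ∈ Finset.range N, ∑ l ∈ Finset.range (N - k), ((9 : ℝ) / 10) ^ (l + 1) * A k ≤
      10 * ∑ k ∈ Finset.range N, A k := by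
    rw [Finset.mul_sum]
    refine Finset.sum_le_sum fun k _ => ?_
    rw [← Finset.sum_mul]
    exact mul_le_mul_of_nonneg_right (sum_range_nine_tenths_pow_le _) (hA k)
  have hBsum : ∑ k ∈ Finset.range N, ∑ l ∈ Finset.range (N - k),
      ((9 : ℝ) / 10) ^ (l + 1) * B (k + 1 + l) ≤ 10 * ∑ m ∈ Finset.range (N + 1), B m := by
    have hdiag : ∀ l, ∑ k ∈ Finset.range (N - l), B (k + 1 + l) ≤
        ∑ m ∈ Finset.range (N + 1), B m := fun l => by
      rcases le_total l N with hl | hl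
      · calc _ = ∑ k ∈ Finset.range (N - l), B (l + 1 + k) :=
              Finset.sum_congr rfl fun k _ => congrArg B (by omega)
          _ ≤ ∑ m ∈ Finset.range (l + 1), B m + ∑ k ∈ Finset.range (N - l), B (l + 1 + k) :=
              le_add_of_nonneg_left (Finset.sum_nonneg fun m _ => hB m)
          _ = ∑ m ∈ Finset.range (N + 1), B m := by
              rw [← Finset.sum_range_add, show l + 1 + (N - l) = N + 1 by omega]
      · rw [Nat.sub_eq_zero_of_le hl, Finset.sum_range_zero]
        exact Finset.sum_nonneg fun m _ => hB m
    calc _ = ∑ l ∈ Finset.range N, ((9 : ℝ) / 10) ^ (l + 1) *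
            ∑ k ∈ Finset.range (N - l), B (k + 1 + l) := by
          simp_rw [Finset.mul_sum]
          exact Finset.sum_comm' fun k l => by simp only [Finset.mem_range]; omega
      _ ≤ ∑ l ∈ Finset.range N, ((9 : ℝ) / 10) ^ (l + 1) * ∑ m ∈ Finset.range (N + 1), B m :=
          Finset.sum_le_sum fun l _ => mul_le_mul_of_nonneg_left (hdiag l) (by positivity)
      _ ≤ _ := by
          rw [← Finset.sum_mul]
          exact mul_le_mul_of_nonneg_right (sum_range_nine_tenths_pow_le N)
            (Finset.sum_nonneg fun m _ => hB m)
  simp_rw [mul_add, Finset.sum_add_distrib]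
  exact add_le_add hAsum hBsum

/-! ### The `T(1)` theorem on the lattice -/

section LevelForm

variable {n M N : ℕ} {C : ℝ} {a : (Fin n → ℤ) → (Fin n → ℤ) → ℂ}

/-- The bilinear form of the matrix `a`, restricted to the cube `[-M 2 ^ N, M 2 ^ N)ⁿ`, on functions
that are constant on the cells of side `2 ^ k`. These are given by their values `u` and `v` on the
indices of the cells. -/
def levelForm (M N : ℕ) (a : (Fin n → ℤ) → (Fin n → ℤ) → ℂ) (k : ℕ) (u v : (Fin n → ℤ) → ℂ) : ℂ :=
  (2 ^ k) ^ n * ∑ z ∈ levelBox n M N k, ∑ w ∈ levelBox n M N k,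
    levelMatrix a (2 ^ k) z w * u w * v z

lemma levelMatrix_swap (a : (Fin n → ℤ) → (Fin n → ℤ) → ℂ) (q : ℕ) (z w : Fin n → ℤ) :
    levelMatrix (fun x y => a y x) q z w = levelMatrix a q w z := by
  unfold levelMatrix; rw [Finset.sum_comm]

lemma levelForm_swap (a : (Fin n → ℤ) → (Fin n → ℤ) → ℂ) (k : ℕ) (u v : (Fin n → ℤ) → ℂ) :
    levelForm M N (fun x y => a y x) k v u = levelForm M N a k u v := by
  unfold levelForm
  rw [Finset.sum_comm]
  simp_rw [levelMatrix_swap, mul_right_comm]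

lemma levelForm_add_left (a : (Fin n → ℤ) → (Fin n → ℤ) → ℂ) (k : ℕ) (u u' v : (Fin n → ℤ) → ℂ) :
    levelForm M N a k (u + u') v = levelForm M N a k u v + levelForm M N a k u' v := by
  simp only [levelForm, Pi.add_apply, mul_add, add_mul, Finset.sum_add_distrib]

lemma levelForm_add_right (a : (Fin n → ℤ) → (Fin n → ℤ) → ℂ) (k : ℕ) (u v v' : (Fin n → ℤ) → ℂ) :
    levelForm M N a k u (v + v') = levelForm M N a k u v + levelForm M N a k u v' := by
  simp only [levelForm, Pi.add_apply, mul_add, Finset.sum_add_distrib]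

lemma levelMatrix_mul_two {q : ℕ} (hq : 0 < q) (a : (Fin n → ℤ) → (Fin n → ℤ) → ℂ)
    (z w : Fin n → ℤ) : levelMatrix a (q * 2) z w =
      (2 ^ n)⁻¹ * ∑ z' ∈ cell 2 z, ∑ w' ∈ cell 2 w, levelMatrix a q z' w' := by
  have hsum : ∑ x ∈ cell (q * 2) z, ∑ y ∈ cell (q * 2) w, a x y =
      ∑ z' ∈ cell 2 z, ∑ w' ∈ cell 2 w, ∑ x ∈ cell q z', ∑ y ∈ cell q w', a x y := by
    rw [sum_cell_mul hq two_pos]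
    refine Finset.sum_congr rfl fun z' _ => ?_
    rw [Finset.sum_comm (s := cell 2 w)]
    exact Finset.sum_congr rfl fun x _ => sum_cell_mul hq two_pos _ w
  unfold levelMatrix
  simp_rw [← Finset.mul_sum]
  rw [hsum, ← mul_assoc ((2 : ℂ) ^ n)⁻¹, Nat.cast_mul, mul_pow, mul_inv_rev, Nat.cast_ofNat]

lemma sum_cell_two_levelMatrix_mul {q : ℕ} (hq : 0 < q) (a : (Fin n → ℤ) → (Fin n → ℤ) → ℂ)
    (u v : (Fin n → ℤ) → ℂ) (z w : Fin n → ℤ) :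
    ∑ z' ∈ cell 2 z, ∑ w' ∈ cell 2 w,
        levelMatrix a q z' w' * (u ∘ coarsen 2) w' * (v ∘ coarsen 2) z' =
      2 ^ n * (levelMatrix a (q * 2) z w * u w * v z) := by
  have h2 : (2 : ℂ) ^ n ≠ 0 := pow_ne_zero n two_ne_zero
  rw [levelMatrix_mul_two hq, mul_assoc _ (u w), mul_assoc _ _ (_ * _), mul_inv_cancel_left₀ h2,
    Finset.sum_mul]
  refine Finset.sum_congr rfl fun z' hz' => ?_
  rw [Finset.sum_mul]
  refine Finset.sum_congr rfl fun w' hw' => ?_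
  rw [Function.comp_apply, Function.comp_apply, (mem_cell two_pos).1 hz',
    (mem_cell two_pos).1 hw', mul_assoc]

lemma levelForm_comp_coarsen {k : ℕ} (hk : k < N) (a : (Fin n → ℤ) → (Fin n → ℤ) → ℂ)
    (u v : (Fin n → ℤ) → ℂ) :
    levelForm M N a k (u ∘ coarsen 2) (v ∘ coarsen 2) = levelForm M N a (k + 1) u v := by
  unfold levelForm
  rw [pow_succ (2 : ℂ), mul_pow, mul_assoc, sum_levelBox_succ hk]
  refine congrArg (_ * ·) ?_
  rw [Finset.mul_sum]
  refine Finset.sum_congr rfl fun z _ => ?_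
  rw [Finset.mul_sum]
  calc _ = ∑ z' ∈ cell 2 z, ∑ w ∈ levelBox n M N (k + 1), ∑ w' ∈ cell 2 w,
        levelMatrix a (2 ^ k) z' w' * (u ∘ coarsen 2) w' * (v ∘ coarsen 2) z' :=
        Finset.sum_congr rfl fun z' _ => sum_levelBox_succ hk _
    _ = _ := by
        rw [Finset.sum_comm]
        refine Finset.sum_congr rfl fun w _ => ?_
        rw [pow_succ 2 k, sum_cell_two_levelMatrix_mul (pow_pos two_pos k)]

lemma levelForm_dyadicDifference {k : ℕ} (hk : k < N) (a : (Fin n → ℤ) → (Fin n → ℤ) → ℂ)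
    (u g : (Fin n → ℤ) → ℂ) : levelForm M N a k u (dyadicDifference k g) =
      (2 ^ k) ^ n * ∑ z ∈ levelBox n M N k, ∑ w ∈ levelBox n M N k,
        levelDifference a (2 ^ k) z w * u w * dyadicDifference k g z := by
  have hcell : ∀ w y, ∑ z ∈ cell 2 y, levelMatrix a (2 ^ k) z w * u w * dyadicDifference k g z =
      ∑ z ∈ cell 2 y, levelDifference a (2 ^ k) z w * u w * dyadicDifference k g z := by
    intro w y
    rw [← sub_eq_zero, ← Finset.sum_sub_distrib]
    have hmean : ∀ z ∈ cell 2 y, levelMatrix a (2 ^ k) z w * u w * dyadicDifference k g z -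
        levelDifference a (2 ^ k) z w * u w * dyadicDifference k g z =
          ((2 ^ n)⁻¹ * ∑ z' ∈ cell 2 y, levelMatrix a (2 ^ k) z' w) * u w *
            dyadicDifference k g z := fun z hz => by
      rw [levelDifference, (mem_cell two_pos).1 hz]; ring
    rw [Finset.sum_congr rfl hmean, ← Finset.mul_sum, sum_cell_dyadicDifference, mul_zero]
  unfold levelForm
  refine congrArg _ ?_
  rw [Finset.sum_comm]
  refine Eq.trans (Finset.sum_congr rfl fun w _ => ?_) Finset.sum_comm
  rw [sum_levelBox_succ hk, sum_levelBox_succ hk]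
  exact Finset.sum_congr rfl fun y _ => hcell w y

lemma sum_levelMatrix {k : ℕ} (hk : k ≤ N) (a : (Fin n → ℤ) → (Fin n → ℤ) → ℂ) (z : Fin n → ℤ) :
    ∑ w ∈ levelBox n M N k, levelMatrix a (2 ^ k) z w =
      cellAverage (2 ^ k) (fun x => ∑ w ∈ levelBox n M N 0, a x w) z := by
  simp only [levelMatrix, cellAverage]
  rw [← Finset.mul_sum, Finset.sum_comm]
  congr 1
  refine Finset.sum_congr rfl fun x _ => ?_
  rw [sum_levelBox (k := 0) (j := k) (by omega), zero_add]

lemma sum_levelDifference {k : ℕ} (hk : k ≤ N) (a : (Fin n → ℤ) → (Fin n → ℤ) → ℂ)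
    (z : Fin n → ℤ) : ∑ w ∈ levelBox n M N k, levelDifference a (2 ^ k) z w =
      dyadicDifference k (fun x => ∑ w ∈ levelBox n M N 0, a x w) z := by
  simp only [levelDifference]
  rw [Finset.sum_sub_distrib, sum_levelMatrix hk, ← Finset.mul_sum, Finset.sum_comm,
    dyadicDifference, parentAverage, cellAverage_two_pow_succ, cellAverage.eq_def 2]
  simp_rw [sum_levelMatrix hk, Nat.cast_ofNat]

lemma levelBox_subset_levelBox {M' : ℕ} (h : M ≤ M') (k : ℕ) :
    levelBox n M N k ⊆ levelBox n M' N k := by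
  intro x hx
  have hle : ((M * 2 ^ (N - k) : ℕ) : ℤ) ≤ (M' * 2 ^ (N - k) : ℕ) := by
    exact_mod_cast Nat.mul_le_mul_right _ h
  refine mem_box.2 fun i => ?_
  have hi := mem_box.1 hx i
  constructor <;> linarith

lemma levelEnergy_eq {l : ℕ} (hM : 1 ≤ M) (hl : l ≤ N) {f : (Fin n → ℤ) → ℂ}
    (hf : ∀ x ∉ levelBox n 1 N 0, f x = 0) : levelEnergy N f l =
      ((2 : ℝ) ^ l) ^ n * ∑ z ∈ levelBox n M N l, ‖martingaleTerm N f l z‖ ^ 2 := by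
  rw [levelEnergy, Finset.sum_subset (levelBox_subset_levelBox hM l) fun z _ hz => by
    rw [martingaleTerm_eq_zero_of_notMem hl hf hz, norm_zero, sq, mul_zero]]

lemma norm_sum_sum_mul_mul_le {ι : Type*} (S : Finset ι) {m b : ι → ι → ℂ} {d : ι → ι → ℝ} {K : ℝ}
    (hm : ∀ z w, ‖m z w‖ ≤ K * d z w) (v : ι → ℂ) :
    ‖∑ z ∈ S, ∑ w ∈ S, m z w * b z w * v z‖ ≤
      K * ∑ z ∈ S, ∑ w ∈ S, ‖v z‖ * d z w * ‖b z w‖ := by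
  simp_rw [Finset.mul_sum]
  refine norm_sum_le_of_le _ fun z _ => norm_sum_le_of_le _ fun w _ => ?_
  rw [norm_mul, norm_mul]
  calc _ ≤ K * d z w * ‖b z w‖ * ‖v z‖ := by gcongr; exact hm z w
    _ = _ := by ring

lemma norm_two_pow_pow (k n : ℕ) : ‖((2 : ℂ) ^ k) ^ n‖ = ((2 : ℝ) ^ k) ^ n := by simp

lemma IsLatticeCZ.norm_levelForm_dyadicDifference_le (ha : IsLatticeCZ n C a) {k : ℕ}
    (hM : 1 ≤ M) (hk : k < N) {f g : (Fin n → ℤ) → ℂ}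
    (hf : ∀ x ∉ levelBox n 1 N 0, f x = 0) (hg : ∀ x ∉ levelBox n 1 N 0, g x = 0) :
    ‖levelForm M N a k (dyadicDifference k f) (dyadicDifference k g)‖ ≤
      differenceBound n C * (∑' m, latticeDecay n m) * (levelEnergy N f k + levelEnergy N g k) := by
  have hD := differenceBound_nonneg (n := n) ha.nonneg
  rw [levelForm_dyadicDifference hk, norm_mul, norm_two_pow_pow, levelEnergy_eq hM hk.le hf,
    levelEnergy_eq hM hk.le hg, martingaleTerm_of_lt hk, martingaleTerm_of_lt hk]
  refine (mul_le_mul_of_nonneg_left ((norm_sum_sum_mul_mul_le (levelBox n M N k)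
    (ha.norm_levelDifference_le (by positivity)) (b := fun _ => dyadicDifference k f) _).trans
      (mul_le_mul_of_nonneg_left (sum_mul_latticeDecay_mul_le _ _
        (fun z => ‖dyadicDifference k g z‖) fun w => ‖dyadicDifference k f w‖) hD))
      (by positivity)).trans_eq ?_
  ring

end LevelForm

section Paraproduct

variable {n M N : ℕ} {C : ℝ} {a : (Fin n → ℤ) → (Fin n → ℤ) → ℂ} {f g : (Fin n → ℤ) → ℂ}

lemma norm_paraproduct_le {k : ℕ} (hM : 1 ≤ M) (hk : k < N) (t : (Fin n → ℤ) → ℂ)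
    (hf : ∀ x ∉ levelBox n 1 N 0, f x = 0) (hg : ∀ x ∉ levelBox n 1 N 0, g x = 0) :
    ((2 : ℝ) ^ k) ^ n * ‖∑ z ∈ levelBox n M N k,
        dyadicDifference k t z * parentAverage k f z * dyadicDifference k g z‖ ≤
      levelEnergy N g k + ((2 : ℝ) ^ k) ^ n * ∑ z ∈ levelBox n 1 N k,
        ‖dyadicDifference k t z‖ ^ 2 * ‖parentAverage k f z‖ ^ 2 := by
  have hterm : ∀ z, ‖dyadicDifference k t z * parentAverage k f z * dyadicDifference k g z‖ ≤
      ‖dyadicDifference k g z‖ ^ 2 + ‖dyadicDifference k t z‖ ^ 2 * ‖parentAverage k f z‖ ^ 2 := by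
    intro z
    rw [norm_mul, norm_mul, ← mul_pow]
    have hsq := two_mul_le_add_sq (‖dyadicDifference k t z‖ * ‖parentAverage k f z‖)
      ‖dyadicDifference k g z‖
    have hpos :
        0 ≤ ‖dyadicDifference k t z‖ * ‖parentAverage k f z‖ * ‖dyadicDifference k g z‖ := by
      positivity
    linarith
  have hsupp : ∀ z ∉ levelBox n 1 N k, parentAverage k f z = 0 := fun z hz =>
    cellAverage_eq_zero_of_notMem hk hf (by rwa [coarsen_two_mem_levelBox hk])
  rw [levelEnergy_eq hM hk.le hg, martingaleTerm_of_lt hk,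
    Finset.sum_subset (levelBox_subset_levelBox hM k) fun z _ hz => by
      rw [hsupp z hz, norm_zero, sq (0 : ℝ), mul_zero, mul_zero],
    ← mul_add, ← Finset.sum_add_distrib]
  gcongr
  exact norm_sum_le_of_le _ fun z _ => hterm z

lemma inv_sqrt_two_pow_le (j : ℕ) : (√((2 ^ j : ℕ) : ℝ))⁻¹ ≤ (((9 : ℝ) / 10) ^ j) ^ 2 := by
  have hsqrt : (√2)⁻¹ ≤ ((9 : ℝ) / 10) ^ 2 := by
    refine inv_le_of_inv_le₀ (by norm_num) (Real.le_sqrt_of_sq_le (by norm_num))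
  calc (√((2 ^ j : ℕ) : ℝ))⁻¹ = (√2)⁻¹ ^ j := by
        rw [Nat.cast_pow, Nat.cast_ofNat, inv_pow, inv_inj,
          ← Real.sqrt_sq (pow_nonneg (Real.sqrt_nonneg 2) j), ← pow_mul, mul_comm, pow_mul,
          Real.sq_sqrt two_pos.le]
    _ ≤ (((9 : ℝ) / 10) ^ 2) ^ j := by gcongr
    _ = _ := pow_right_comm _ _ _

lemma sum_mul_latticeDecay_mul_norm_parentAverage_sub_le {k : ℕ} (hM : 1 ≤ M) (hk : k < N)
    (hf : ∀ x ∉ levelBox n 1 N 0, f x = 0) (hg : ∀ x ∉ levelBox n 1 N 0, g x = 0) :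
    ((2 : ℝ) ^ k) ^ n * ∑ z ∈ levelBox n M N k, ∑ w ∈ levelBox n M N k,
        ‖dyadicDifference k g z‖ * latticeDecay n (z - w) *
          ‖parentAverage k f w - parentAverage k f z‖ ≤
      coarseSchurBound n * ∑ l ∈ Finset.range (N - k), ((9 : ℝ) / 10) ^ (l + 1) *
        (levelEnergy N g k + levelEnergy N f (k + 1 + l)) := by
  set X := levelBox n M N k
  let H : ℕ → (Fin n → ℤ) → ℂ := fun l => martingaleTerm N f (k + 1 + l)
  let δ : ℕ → (Fin n → ℤ) → (Fin n → ℤ) → ℝ := fun l w z =>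
    ‖H l (coarsen (2 ^ (l + 1)) w) - H l (coarsen (2 ^ (l + 1)) z)‖
  have htri : ∀ w z, ‖parentAverage k f w - parentAverage k f z‖ ≤
      ∑ l ∈ Finset.range (N - k), δ l w z := fun w z => by
    rw [parentAverage_eq_sum_martingaleTerm hk, parentAverage_eq_sum_martingaleTerm hk,
      ← Finset.sum_sub_distrib]
    exact norm_sum_le _ _
  have hscale : ∀ l ∈ Finset.range (N - k), ((2 : ℝ) ^ k) ^ n * ∑ z ∈ X, ∑ w ∈ X,
      ‖dyadicDifference k g z‖ * latticeDecay n (z - w) * δ l w z ≤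
        coarseSchurBound n * ((9 / 10) ^ (l + 1) *
          (levelEnergy N g k + levelEnergy N f (k + 1 + l))) := by
    intro l hl
    have hl' := Finset.mem_range.1 hl
    have h := sum_mul_latticeDecay_mul_norm_sub_le (q := 2 ^ (l + 1)) (by positivity)
      (by positivity) (inv_sqrt_two_pow_le (l + 1)) X (levelBox n 1 N (k + 1 + l))
      (fun z => ‖dyadicDifference k g z‖) (H := H l)
      fun y hy => martingaleTerm_eq_zero_of_notMem (by omega) hf hy
    rw [levelEnergy_eq hM hk.le hg, martingaleTerm_of_lt hk, levelEnergy,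
      show k + 1 + l = k + (l + 1) by omega, pow_add (2 : ℝ) k (l + 1), mul_pow]
    refine (mul_le_mul_of_nonneg_left h (by positivity)).trans_eq ?_
    simp only [H, X]
    rw [Nat.cast_pow, Nat.cast_ofNat, show k + 1 + l = k + (l + 1) by omega]
    ring
  calc _ ≤ ((2 : ℝ) ^ k) ^ n * ∑ z ∈ X, ∑ w ∈ X, ‖dyadicDifference k g z‖ * latticeDecay n (z - w) *
          ∑ l ∈ Finset.range (N - k), δ l w z := by
        gcongr with z _ w _
        · exact mul_nonneg (norm_nonneg _) (latticeDecay_nonneg _)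
        · exact htri w z
    _ = ∑ l ∈ Finset.range (N - k), ((2 : ℝ) ^ k) ^ n * ∑ z ∈ X, ∑ w ∈ X,
          ‖dyadicDifference k g z‖ * latticeDecay n (z - w) * δ l w z := by
        simp_rw [Finset.mul_sum, Finset.sum_comm (s := X) (t := Finset.range (N - k))]
    _ ≤ _ := by
        rw [Finset.mul_sum]
        exact Finset.sum_le_sum hscale

/-- Replacing `parentAverage k f w` by its value at the row index `z` splits the form into a
paraproduct, whose symbol is the vector of row sums of `a`, and an error that sees only the
variation of `f` at coarser scales. -/
lemma IsLatticeCZ.norm_levelForm_parentAverage_le (ha : IsLatticeCZ n C a) {k : ℕ} (hM : 1 ≤ M)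
    (hk : k < N) (hf : ∀ x ∉ levelBox n 1 N 0, f x = 0) (hg : ∀ x ∉ levelBox n 1 N 0, g x = 0) :
    ‖levelForm M N a k (parentAverage k f) (dyadicDifference k g)‖ ≤
      levelEnergy N g k + ((2 : ℝ) ^ k) ^ n * ∑ z ∈ levelBox n 1 N k,
        ‖dyadicDifference k (fun x => ∑ w ∈ levelBox n M N 0, a x w) z‖ ^ 2 *
          ‖parentAverage k f z‖ ^ 2 +
      differenceBound n C * (coarseSchurBound n * ∑ l ∈ Finset.range (N - k),
        ((9 : ℝ) / 10) ^ (l + 1) * (levelEnergy N g k + levelEnergy N f (k + 1 + l))) := by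
  have hD := differenceBound_nonneg (n := n) ha.nonneg
  set X := levelBox n M N k
  set t : (Fin n → ℤ) → ℂ := fun x => ∑ w ∈ levelBox n M N 0, a x w
  have hsplit : ∑ z ∈ X, ∑ w ∈ X,
      levelDifference a (2 ^ k) z w * parentAverage k f w * dyadicDifference k g z =
        ∑ z ∈ X, dyadicDifference k t z * parentAverage k f z * dyadicDifference k g z +
        ∑ z ∈ X, ∑ w ∈ X, levelDifference a (2 ^ k) z w *
          (parentAverage k f w - parentAverage k f z) * dyadicDifference k g z := by
    have ht : ∀ z, dyadicDifference k t z = ∑ w ∈ X, levelDifference a (2 ^ k) z w :=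
      fun z => (sum_levelDifference hk.le a z).symm
    simp_rw [ht, Finset.sum_mul]
    rw [← Finset.sum_add_distrib]
    simp_rw [← Finset.sum_add_distrib]
    exact Finset.sum_congr rfl fun z _ => Finset.sum_congr rfl fun w _ => by ring
  have herror := norm_sum_sum_mul_mul_le X (ha.norm_levelDifference_le (q := 2 ^ k) (by positivity))
    (b := fun z w => parentAverage k f w - parentAverage k f z) (dyadicDifference k g)
  rw [levelForm_dyadicDifference hk, norm_mul, norm_two_pow_pow, hsplit]
  refine (mul_le_mul_of_nonneg_left (norm_add_le _ _) (by positivity)).trans ?_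
  rw [mul_add]
  refine add_le_add (norm_paraproduct_le hM hk t hf hg) ?_
  refine (mul_le_mul_of_nonneg_left herror (by positivity)).trans ?_
  rw [mul_left_comm]
  exact mul_le_mul_of_nonneg_left
    (sum_mul_latticeDecay_mul_norm_parentAverage_sub_le hM hk hf hg) hD

lemma mem_levelBox_of_norm_sub_lt {k : ℕ} (hk : k ≤ N) {y w : Fin n → ℤ} (hy : y ∈ levelBox n 1 N k)
    (hw : ‖w - ((2 ^ k : ℕ) : ℤ) • y‖ < 2 * (12 * (2 ^ k : ℕ))) : w ∈ levelBox n 26 N 0 := by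
  refine mem_box.2 fun i => ?_
  have hwi : |w i - 2 ^ k * y i| < 24 * 2 ^ k := by
    have h := (abs_apply_le_norm (w - ((2 ^ k : ℕ) : ℤ) • y) i).trans_lt hw
    simp only [Pi.sub_apply, Pi.smul_apply, smul_eq_mul] at h
    push_cast at h
    have h' : ((|w i - 2 ^ k * y i| : ℤ) : ℝ) < ((24 * 2 ^ k : ℤ) : ℝ) := by
      push_cast; linarith
    exact_mod_cast h'
  have hyi := mem_box.1 hy i
  have hpow : (2 : ℤ) ^ k * 2 ^ (N - k) = 2 ^ N := by rw [← pow_add, Nat.add_sub_cancel' hk]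
  have hkN : (2 : ℤ) ^ k ≤ 2 ^ N := pow_le_pow_right₀ (by norm_num) hk
  have hk0 : (0 : ℤ) < 2 ^ k := by positivity
  rw [abs_lt] at hwi
  push_cast at hyi ⊢
  rw [one_mul] at hyi
  rw [Nat.sub_zero]
  constructor <;> nlinarith [mul_le_mul_of_nonneg_left hyi.1 hk0.le,
    mul_lt_mul_of_pos_left hyi.2 hk0]

lemma oscillationBound_pos (hC : 0 < C) : 0 < oscillationBound n C := by
  unfold oscillationBound; positivity

/-- The bound for the interaction of the martingale differences of one function with the coarser
averages of the other. -/
def paraproductBound (n : ℕ) (C : ℝ) : ℝ :=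
  1 + 4 * oscillationBound n C + 10 * (differenceBound n C * coarseSchurBound n)

lemma paraproductBound_nonneg (hC : 0 < C) : 0 ≤ paraproductBound n C := by
  have h₁ := (oscillationBound_pos (n := n) hC).le
  have h₂ := differenceBound_nonneg (n := n) hC.le
  have h₃ := coarseSchurBound_nonneg n
  unfold paraproductBound
  positivity

lemma IsLatticeCZ.sum_norm_levelForm_parentAverage_le (ha : IsLatticeCZ n C a) (hC : 0 < C)
    (hf : ∀ x ∉ levelBox n 1 N 0, f x = 0) (hg : ∀ x ∉ levelBox n 1 N 0, g x = 0) :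
    ∑ k ∈ Finset.range N, ‖levelForm 26 N a k (parentAverage k f) (dyadicDifference k g)‖ ≤
      paraproductBound n C *
        (∑ x ∈ levelBox n 1 N 0, ‖f x‖ ^ 2 + ∑ x ∈ levelBox n 1 N 0, ‖g x‖ ^ 2) := by
  set F := ∑ x ∈ levelBox n 1 N 0, ‖f x‖ ^ 2
  set G := ∑ x ∈ levelBox n 1 N 0, ‖g x‖ ^ 2
  set K := differenceBound n C * coarseSchurBound n
  have hK : 0 ≤ K := mul_nonneg (differenceBound_nonneg hC.le) (coarseSchurBound_nonneg n)
  have hosc := oscillationBound_pos (n := n) hC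
  have hF : 0 ≤ F := Finset.sum_nonneg fun _ _ => by positivity
  have hG : 0 ≤ G := Finset.sum_nonneg fun _ _ => by positivity
  have hcarleson := carleson_embedding (M := 1) (N := N) hosc
    (fun x => ∑ w ∈ levelBox n 26 N 0, a x w) (fun k hk y hy => by
      have h := ha.cellVariance_sum_le (q := 2 ^ k) (by positivity) y fun w hw =>
        mem_levelBox_of_norm_sub_lt hk hy hw
      rwa [Nat.cast_pow, Nat.cast_ofNat] at h) f
  have hgeom := sum_nine_tenths_pow_mul_le N (levelEnergy_nonneg N g) (levelEnergy_nonneg N f)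
  have hGN := sum_range_levelEnergy_le N g
  rw [sum_levelEnergy] at hgeom
  refine (Finset.sum_le_sum fun k hk =>
    ha.norm_levelForm_parentAverage_le (by norm_num) (Finset.mem_range.1 hk) hf hg).trans ?_
  simp_rw [← mul_assoc (differenceBound n C)]
  rw [Finset.sum_add_distrib, Finset.sum_add_distrib, ← Finset.mul_sum]
  calc _ ≤ G + 4 * oscillationBound n C * F + K * (10 * (G + F)) := by
        refine add_le_add (add_le_add hGN hcarleson) (mul_le_mul_of_nonneg_left (hgeom.trans ?_) hK)
        gcongr
    _ ≤ _ := by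
        have hoscG := mul_nonneg hosc.le hG
        rw [paraproductBound]
        linarith

end Paraproduct

section LatticeT1

variable {n N : ℕ} {C : ℝ} {a : (Fin n → ℤ) → (Fin n → ℤ) → ℂ} {f g : (Fin n → ℤ) → ℂ}

lemma IsLatticeCZ.norm_levelForm_top_le (ha : IsLatticeCZ n C a) (M : ℕ) (u v : (Fin n → ℤ) → ℂ) :
    ‖levelForm M N a N u v‖ ≤ nearBound n C (2 * M) * (2 * M) ^ n * (((2 : ℝ) ^ N) ^ n *
      (∑ z ∈ levelBox n M N N, ‖u z‖ ^ 2 + ∑ z ∈ levelBox n M N N, ‖v z‖ ^ 2)) := by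
  set X := levelBox n M N N with hX
  have hcard : (X.card : ℝ) = (2 * M) ^ n := by
    rw [hX, levelBox, box, Fintype.card_piFinset]
    simp only [Nat.sub_self, pow_zero, mul_one, Int.card_Ico, sub_neg_eq_add, Finset.prod_const,
      Finset.card_univ, Fintype.card_fin]
    rw [← Nat.cast_add, Int.toNat_natCast, two_mul, Nat.cast_pow, Nat.cast_add]
  have hnear : ∀ z ∈ X, ∀ w ∈ X, ‖z - w‖ ≤ (2 * M : ℕ) := by
    intro z hz w hw
    refine (pi_norm_le_iff_of_nonneg (by positivity)).2 fun i => ?_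
    have hzi := mem_box.1 hz i
    have hwi := mem_box.1 hw i
    simp only [Nat.sub_self, pow_zero, mul_one] at hzi hwi
    have h : |z i - w i| ≤ (2 * M : ℕ) := by
      rw [abs_le]; push_cast; constructor <;> linarith
    rw [Pi.sub_apply, Int.norm_eq_abs]
    exact_mod_cast h
  have hB := nearBound_pos (n := n) ha.nonneg (2 * M)
  have hentry : ∀ z ∈ X, ∀ w ∈ X, ‖levelMatrix a (2 ^ N) z w * u w * v z‖ ≤
      nearBound n C (2 * M) * (‖u w‖ ^ 2 + ‖v z‖ ^ 2) := by
    intro z hz w hw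
    have hsq := two_mul_le_add_sq ‖u w‖ ‖v z‖
    have hpos := mul_nonneg (norm_nonneg (u w)) (norm_nonneg (v z))
    rw [mul_assoc, norm_mul, norm_mul]
    gcongr
    · exact ha.norm_levelMatrix_le (by positivity) (hnear z hz w hw)
    · linarith
  have hsum : ∑ z ∈ X, ∑ w ∈ X, nearBound n C (2 * M) * (‖u w‖ ^ 2 + ‖v z‖ ^ 2) =
      nearBound n C (2 * M) * (2 * M) ^ n * (∑ z ∈ X, ‖u z‖ ^ 2 + ∑ z ∈ X, ‖v z‖ ^ 2) := by
    simp_rw [← Finset.mul_sum, Finset.sum_add_distrib, Finset.sum_const, nsmul_eq_mul,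
      ← Finset.mul_sum, hcard]
    ring
  rw [levelForm, norm_mul, norm_two_pow_pow]
  refine (mul_le_mul_of_nonneg_left (norm_sum_le_of_le _ fun z hz =>
    norm_sum_le_of_le _ (hentry z hz)) (by positivity)).trans_eq ?_
  rw [hsum]
  ring

/-- Telescoping of `levelForm` in the scale `2 ^ k`, from the whole form at `k = 0` to its
compression to the top scale. -/
lemma levelForm_zero_eq (M : ℕ) (a : (Fin n → ℤ) → (Fin n → ℤ) → ℂ) (f g : (Fin n → ℤ) → ℂ) :
    levelForm M N a 0 (cellAverage (2 ^ 0) f) (cellAverage (2 ^ 0) g) =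
      ∑ k ∈ Finset.range N, levelForm M N a k (dyadicDifference k f) (dyadicDifference k g) +
      ∑ k ∈ Finset.range N, levelForm M N a k (parentAverage k f) (dyadicDifference k g) +
      ∑ k ∈ Finset.range N,
        levelForm M N (fun x y => a y x) k (parentAverage k g) (dyadicDifference k f) +
      levelForm M N a N (martingaleTerm N f N) (martingaleTerm N g N) := by
  have hsplit : ∀ k h, cellAverage (n := n) (2 ^ k) h = dyadicDifference k h + parentAverage k h :=
    fun k h => funext fun z => (sub_add_cancel _ _).symm
  have hstep : ∀ k ∈ Finset.range N,
      levelForm M N a k (cellAverage (2 ^ k) f) (cellAverage (2 ^ k) g) -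
        levelForm M N a (k + 1) (cellAverage (2 ^ (k + 1)) f) (cellAverage (2 ^ (k + 1)) g) =
      levelForm M N a k (dyadicDifference k f) (dyadicDifference k g) +
        levelForm M N a k (parentAverage k f) (dyadicDifference k g) +
        levelForm M N (fun x y => a y x) k (parentAverage k g) (dyadicDifference k f) := by
    intro k hk
    have hparent : levelForm M N a k (parentAverage k f) (parentAverage k g) =
        levelForm M N a (k + 1) (cellAverage (2 ^ (k + 1)) f) (cellAverage (2 ^ (k + 1)) g) :=
      levelForm_comp_coarsen (Finset.mem_range.1 hk) a _ _
    rw [hsplit k f, hsplit k g, levelForm_add_left, levelForm_add_right, levelForm_add_right,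
      hparent, levelForm_swap a k (dyadicDifference k f)]
    ring
  have htelescope := Finset.sum_range_sub'
    (fun k => levelForm M N a k (cellAverage (2 ^ k) f) (cellAverage (2 ^ k) g)) N
  rw [Finset.sum_congr rfl hstep, Finset.sum_add_distrib, Finset.sum_add_distrib] at htelescope
  rw [htelescope, martingaleTerm_self, martingaleTerm_self, sub_add_cancel]

lemma sum_sum_eq_levelForm {M : ℕ} (hM : 1 ≤ M) (a : (Fin n → ℤ) → (Fin n → ℤ) → ℂ)
    (hf : ∀ x ∉ levelBox n 1 N 0, f x = 0) (hg : ∀ x ∉ levelBox n 1 N 0, g x = 0) :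
    ∑ x ∈ levelBox n 1 N 0, ∑ y ∈ levelBox n 1 N 0, a x y * f y * g x =
      levelForm M N a 0 (cellAverage (2 ^ 0) f) (cellAverage (2 ^ 0) g) := by
  have hsub := levelBox_subset_levelBox (n := n) (N := N) hM 0
  simp only [levelForm, levelMatrix, pow_zero, cell_one, Finset.sum_singleton, Nat.cast_one,
    one_pow, inv_one, one_mul, cellAverage_one]
  rw [Finset.sum_subset hsub fun x _ hx => by simp only [hg x hx, mul_zero, Finset.sum_const_zero]]
  refine Finset.sum_congr rfl fun x _ => Finset.sum_subset hsub fun y _ hy => ?_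
  rw [hf y hy, mul_zero, zero_mul]

/-- The bound of the lattice `T(1)` theorem. -/
def latticeT1Bound (n : ℕ) (C : ℝ) : ℝ :=
  differenceBound n C * (∑' m, latticeDecay n m) + 2 * paraproductBound n C +
    nearBound n C 52 * 52 ^ n

lemma latticeT1Bound_pos (hC : 0 < C) : 0 < latticeT1Bound n C := by
  have hdecay : 0 ≤ ∑' m, latticeDecay n m := tsum_nonneg latticeDecay_nonneg
  have h₁ := mul_nonneg (differenceBound_nonneg (n := n) hC.le) hdecay
  have h₂ := paraproductBound_nonneg (n := n) hC
  have h₃ := nearBound_pos (n := n) hC.le 52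
  unfold latticeT1Bound
  positivity

theorem IsLatticeCZ.norm_sum_sum_mul_le (ha : IsLatticeCZ n C a)
    (ha' : IsLatticeCZ n C fun x y => a y x) (hC : 0 < C)
    (hf : ∀ x ∉ levelBox n 1 N 0, f x = 0) (hg : ∀ x ∉ levelBox n 1 N 0, g x = 0) :
    ‖∑ x ∈ levelBox n 1 N 0, ∑ y ∈ levelBox n 1 N 0, a x y * f y * g x‖ ≤
      latticeT1Bound n C *
        (∑ x ∈ levelBox n 1 N 0, ‖f x‖ ^ 2 + ∑ x ∈ levelBox n 1 N 0, ‖g x‖ ^ 2) := by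
  set S := ∑ x ∈ levelBox n 1 N 0, ‖f x‖ ^ 2 + ∑ x ∈ levelBox n 1 N 0, ‖g x‖ ^ 2 with hS
  have hdiag : ‖∑ k ∈ Finset.range N,
      levelForm 26 N a k (dyadicDifference k f) (dyadicDifference k g)‖ ≤
        differenceBound n C * (∑' m, latticeDecay n m) * S := by
    refine (norm_sum_le_of_le _ fun k hk => ha.norm_levelForm_dyadicDifference_le (by norm_num)
      (Finset.mem_range.1 hk) hf hg).trans ?_
    rw [← Finset.mul_sum, Finset.sum_add_distrib]
    exact mul_le_mul_of_nonneg_left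
      (add_le_add (sum_range_levelEnergy_le N f) (sum_range_levelEnergy_le N g))
      (mul_nonneg (differenceBound_nonneg hC.le) (tsum_nonneg latticeDecay_nonneg))
  have hlower := (norm_sum_le _ _).trans (ha.sum_norm_levelForm_parentAverage_le hC hf hg)
  have hupper := (norm_sum_le _ _).trans (ha'.sum_norm_levelForm_parentAverage_le hC hg hf)
  rw [add_comm, ← hS] at hupper
  have htop : ‖levelForm 26 N a N (martingaleTerm N f N) (martingaleTerm N g N)‖ ≤
      nearBound n C 52 * 52 ^ n * S := by
    have hlast : ∀ h, levelEnergy (n := n) N h N ≤ ∑ x ∈ levelBox n 1 N 0, ‖h x‖ ^ 2 := fun h => by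
      rw [← sum_levelEnergy N h]
      exact Finset.single_le_sum (fun l _ => levelEnergy_nonneg N h l)
        (Finset.self_mem_range_succ N)
    have h := ha.norm_levelForm_top_le (N := N) 26 (martingaleTerm N f N) (martingaleTerm N g N)
    rw [mul_add (((2 : ℝ) ^ N) ^ n), ← levelEnergy_eq (by norm_num) le_rfl hf,
      ← levelEnergy_eq (by norm_num) le_rfl hg] at h
    norm_num at h
    exact h.trans (mul_le_mul_of_nonneg_left (add_le_add (hlast f) (hlast g))
      (mul_nonneg (nearBound_pos hC.le 52).le (by positivity)))
  rw [sum_sum_eq_levelForm (M := 26) (by norm_num) a hf hg, levelForm_zero_eq, latticeT1Bound]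
  refine (norm_add_le_of_le (norm_add_le_of_le (norm_add_le_of_le hdiag hlower) hupper)
    htop).trans_eq ?_
  ring

end LatticeT1

local notation:max "ℝ^" n:max => EuclideanSpace ℝ (Fin n)

/-! ### A partition of unity adapted to the scaled lattice -/

section PartitionOfUnity

/-- A smooth bump on `[-1, 1]` whose integer translates sum to `1`. -/
def smoothHat (t : ℝ) : ℝ := Real.smoothTransition (t + 1) - Real.smoothTransition t

lemma smoothHat_nonneg (t : ℝ) : 0 ≤ smoothHat t := by
  unfold smoothHat
  rcases le_total t 0 with h | h
  · rw [Real.smoothTransition.zero_of_nonpos h, sub_zero]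
    exact Real.smoothTransition.nonneg _
  · rw [Real.smoothTransition.one_of_one_le (by linarith : 1 ≤ t + 1)]
    linarith [Real.smoothTransition.le_one t]

lemma smoothHat_le_one (t : ℝ) : smoothHat t ≤ 1 := by
  unfold smoothHat
  linarith [Real.smoothTransition.le_one (t + 1), Real.smoothTransition.nonneg t]

lemma smoothHat_eq_zero {t : ℝ} (h : 1 ≤ |t|) : smoothHat t = 0 := by
  unfold smoothHat
  rcases le_abs.mp h with h | h
  · rw [Real.smoothTransition.one_of_one_le h, Real.smoothTransition.one_of_one_le (by linarith),
      sub_self]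
  · rw [Real.smoothTransition.zero_of_nonpos (by linarith),
      Real.smoothTransition.zero_of_nonpos (by linarith), sub_self]

lemma contDiff_smoothHat : ContDiff ℝ 1 smoothHat :=
  (Real.smoothTransition.contDiff.comp (contDiff_id.add contDiff_const)).sub
    Real.smoothTransition.contDiff

lemma hasCompactSupport_smoothHat : HasCompactSupport smoothHat := by
  refine HasCompactSupport.of_support_subset_isCompact (isCompact_Icc (a := (-1 : ℝ)) (b := 1)) ?_
  intro t ht
  rw [Set.mem_Icc, ← abs_le]
  exact (not_le.1 fun h => ht (smoothHat_eq_zero h)).le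

/-- A Lipschitz constant of `smoothHat`. -/
def smoothHatLip : NNReal :=
  (contDiff_smoothHat.lipschitzWith_of_hasCompactSupport hasCompactSupport_smoothHat
    one_ne_zero).choose

lemma abs_smoothHat_sub_le (s t : ℝ) :
    |smoothHat s - smoothHat t| ≤ smoothHatLip * |s - t| := by
  rw [← Real.dist_eq, ← Real.dist_eq]
  exact (contDiff_smoothHat.lipschitzWith_of_hasCompactSupport hasCompactSupport_smoothHat
    one_ne_zero).choose_spec.dist_le_mul s t

lemma sum_Icc_smoothHat (t : ℝ) {a b : ℤ} (h : a ≤ b) :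
    ∑ j ∈ Finset.Icc a b, smoothHat (t - j) =
      Real.smoothTransition (t - a + 1) - Real.smoothTransition (t - b) := by
  induction b, h using Int.leInduction with
  | base => simp [smoothHat]
  | succ b hb ih =>
    have hIcc : Finset.Icc a (b + 1) = insert (b + 1) (Finset.Icc a b) := by
      ext j
      simp only [Finset.mem_Icc, Finset.mem_insert]
      omega
    rw [hIcc, Finset.sum_insert (by simp), ih, smoothHat]
    push_cast
    rw [show t - ((b : ℝ) + 1) + 1 = t - b by ring]
    ring

lemma sum_Icc_smoothHat_eq_one {t : ℝ} {a b : ℤ} (ha : a ≤ t) (hb : t ≤ b) :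
    ∑ j ∈ Finset.Icc a b, smoothHat (t - j) = 1 := by
  have hab : a ≤ b := by exact_mod_cast ha.trans hb
  rw [sum_Icc_smoothHat t hab, Real.smoothTransition.one_of_one_le (by linarith),
    Real.smoothTransition.zero_of_nonpos (by linarith), sub_zero]

variable {n : ℕ} {ε : ℝ} {x : ℝ^n}

/-- The member of the partition of unity of `ℝⁿ` at scale `ε` that is centred at `ε y`. -/
def partitionBump (ε : ℝ) (y : Fin n → ℤ) (x : ℝ^n) : ℝ := ∏ i, smoothHat (x i / ε - y i)

lemma partitionBump_nonneg (ε : ℝ) (y : Fin n → ℤ) (x : ℝ^n) : 0 ≤ partitionBump ε y x :=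
  Finset.prod_nonneg fun _ _ => smoothHat_nonneg _

lemma norm_partitionBump (ε : ℝ) (y : Fin n → ℤ) (x : ℝ^n) :
    ‖(partitionBump ε y x : ℂ)‖ = partitionBump ε y x := by
  rw [Complex.norm_real, Real.norm_of_nonneg (partitionBump_nonneg _ _ _)]

lemma partitionBump_eq_zero {y : Fin n → ℤ} (i : Fin n) (h : 1 ≤ |x i / ε - y i|) :
    partitionBump ε y x = 0 :=
  Finset.prod_eq_zero (Finset.mem_univ i) (smoothHat_eq_zero h)

lemma partitionBump_eq_zero_of_notMem {lo hi y : Fin n → ℤ}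
    (h : ∀ i, (lo i : ℝ) ≤ x i / ε ∧ x i / ε ≤ hi i) (hy : y ∉ Finset.Icc lo hi) :
    partitionBump ε y x = 0 := by
  rw [Finset.mem_Icc, Pi.le_def, Pi.le_def, ← forall_and, not_forall] at hy
  obtain ⟨i, hi⟩ := hy
  refine partitionBump_eq_zero i (le_abs.2 ?_)
  rw [not_and_or, not_le, not_le, Int.lt_iff_add_one_le, Int.lt_iff_add_one_le] at hi
  rcases hi with hlo | hhi
  · have : (y i : ℝ) + 1 ≤ lo i := by exact_mod_cast hlo
    exact Or.inl (by linarith [(h i).1])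
  · have : (hi i : ℝ) + 1 ≤ y i := by exact_mod_cast hhi
    exact Or.inr (by linarith [(h i).2])

lemma sum_Icc_partitionBump {lo hi : Fin n → ℤ}
    (h : ∀ i, (lo i : ℝ) ≤ x i / ε ∧ x i / ε ≤ hi i) :
    ∑ y ∈ Finset.Icc lo hi, partitionBump ε y x = 1 := by
  simp only [partitionBump, Pi.Icc_eq]
  rw [← Finset.prod_univ_sum (fun i => Finset.Icc (lo i) (hi i))
    fun i j => smoothHat (x i / ε - (j : ℝ))]
  exact Finset.prod_eq_one fun i _ => sum_Icc_smoothHat_eq_one (h i).1 (h i).2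

lemma sum_partitionBump_le_one (ε : ℝ) (x : ℝ^n) (S : Finset (Fin n → ℤ)) :
    ∑ y ∈ S, partitionBump ε y x ≤ 1 := by
  classical
  have h : ∀ i, ((⌊x i / ε⌋ : ℤ) : ℝ) ≤ x i / ε ∧ x i / ε ≤ (⌈x i / ε⌉ : ℤ) :=
    fun i => ⟨Int.floor_le _, Int.le_ceil _⟩
  set B := Finset.Icc (fun i => ⌊x i / ε⌋) fun i => ⌈x i / ε⌉
  calc ∑ y ∈ S, partitionBump ε y x
      ≤ ∑ y ∈ B ∪ S, partitionBump ε y x :=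
        Finset.sum_le_sum_of_subset_of_nonneg Finset.subset_union_right
          fun y _ _ => partitionBump_nonneg _ _ _
    _ = ∑ y ∈ B, partitionBump ε y x :=
        (Finset.sum_subset Finset.subset_union_left
          fun y _ hy => partitionBump_eq_zero_of_notMem h hy).symm
    _ = 1 := sum_Icc_partitionBump h

lemma contDiff_partitionBump (ε : ℝ) (y : Fin n → ℤ) :
    ContDiff ℝ 1 (partitionBump ε y : ℝ^n → ℝ) := by
  refine contDiff_prod fun i _ => contDiff_smoothHat.comp ?_
  exact ContDiff.sub (ContDiff.div_const (by fun_prop) ε) contDiff_const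

lemma abs_partitionBump_add_single_sub_le (hε : 0 < ε) (y : Fin n → ℤ) (x : ℝ^n) (i : Fin n)
    (t : ℝ) :
    |partitionBump ε y (x + t • EuclideanSpace.single i 1) - partitionBump ε y x| ≤
      smoothHatLip / ε * |t| := by
  classical
  set x' : ℝ^n := x + t • EuclideanSpace.single i 1 with hx'
  have hcoord : (x' i / ε - y i) - (x i / ε - y i) = t / ε := by simp [hx']; ring
  have hprod : ∏ j ∈ Finset.univ.erase i, smoothHat (x' j / ε - y j) =
      ∏ j ∈ Finset.univ.erase i, smoothHat (x j / ε - y j) :=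
    Finset.prod_congr rfl fun j hj => by simp [hx', Finset.ne_of_mem_erase hj]
  have hle : |∏ j ∈ Finset.univ.erase i, smoothHat (x j / ε - y j)| ≤ 1 := by
    rw [abs_of_nonneg (Finset.prod_nonneg fun _ _ => smoothHat_nonneg _)]
    exact Finset.prod_le_one (fun _ _ => smoothHat_nonneg _) fun _ _ => smoothHat_le_one _
  calc |partitionBump ε y x' - partitionBump ε y x|
      = |smoothHat (x' i / ε - y i) - smoothHat (x i / ε - y i)| *
          |∏ j ∈ Finset.univ.erase i, smoothHat (x j / ε - y j)| := by
        rw [partitionBump, partitionBump, ← Finset.mul_prod_erase _ _ (Finset.mem_univ i), hprod,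
          ← Finset.mul_prod_erase _ (fun i => smoothHat (x i / ε - y i)) (Finset.mem_univ i),
          ← sub_mul, abs_mul]
    _ ≤ smoothHatLip * |t / ε| * 1 := by
        gcongr
        exact (abs_smoothHat_sub_le _ _).trans_eq (by rw [hcoord])
    _ = smoothHatLip / ε * |t| := by rw [abs_div, abs_of_pos hε]; ring

lemma abs_apply_le_euclideanNorm (x : ℝ^n) (i : Fin n) : |x i| ≤ ‖x‖ := by
  simpa using PiLp.norm_apply_le x i

lemma euclideanNorm_le_sqrt_mul {s : ℝ} (hs : 0 ≤ s) (h : ∀ i, |x i| ≤ s) : ‖x‖ ≤ √n * s := by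
  rw [EuclideanSpace.norm_eq]
  calc √(∑ i, ‖x i‖ ^ 2) ≤ √(∑ _i : Fin n, s ^ 2) := by
        gcongr with i
        exact h i
    _ = √n * s := by simp [Real.sqrt_sq hs]

/-- The closed cube with centre `c` and half-side `s`. -/
def closedCube (c : ℝ^n) (s : ℝ) : Set ℝ^n := {x | ∀ i, |x i - c i| ≤ s}

lemma isClosed_closedCube (c : ℝ^n) (s : ℝ) : IsClosed (closedCube c s) := by
  simp only [closedCube, Set.ofPred_forall]
  exact isClosed_iInter fun i => isClosed_le (by fun_prop) continuous_const

lemma closedCube_subset_closedBall (c : ℝ^n) {s : ℝ} (hs : 0 ≤ s) :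
    closedCube c s ⊆ closedBall c (√n * s) := fun x hx => by
  rw [mem_closedBall, dist_eq_norm]
  exact euclideanNorm_le_sqrt_mul hs hx

lemma isCompact_closedCube (c : ℝ^n) {s : ℝ} (hs : 0 ≤ s) : IsCompact (closedCube c s) :=
  (isCompact_closedBall c _).of_isClosed_subset (isClosed_closedCube c s)
    (closedCube_subset_closedBall c hs)

lemma convex_closedCube (c : ℝ^n) (s : ℝ) : Convex ℝ (closedCube c s) := by
  have : closedCube c s = ⋂ i, (fun x : ℝ^n => x i) ⁻¹' Set.Icc (c i - s) (c i + s) := by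
    ext x
    simp only [closedCube, Set.mem_ofPred_eq, Set.mem_iInter, Set.mem_preimage, Set.mem_Icc,
      abs_le]
    exact forall_congr' fun i => ⟨fun h => ⟨by linarith, by linarith⟩,
      fun h => ⟨by linarith, by linarith⟩⟩
  rw [this]
  exact convex_iInter fun i =>
    (convex_Icc _ _).is_linear_preimage ⟨fun _ _ => rfl, fun _ _ => rfl⟩

/-- The point `ε y` of the scaled lattice, as a point of `ℝⁿ`. -/
def latticePoint (ε : ℝ) (y : Fin n → ℤ) : ℝ^n := WithLp.toLp 2 fun i => ε * (y i : ℝ)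

lemma latticePoint_apply (ε : ℝ) (y : Fin n → ℤ) (i : Fin n) :
    latticePoint ε y i = ε * (y i : ℝ) := rfl

lemma mem_closedCube_of_partitionBump_ne_zero (hε : 0 < ε) {y : Fin n → ℤ}
    (h : partitionBump ε y x ≠ 0) : x ∈ closedCube (latticePoint ε y) ε := fun i => by
  have hlt : |x i / ε - y i| < 1 := not_le.1 fun hle => h (partitionBump_eq_zero i hle)
  have hscale : x i - ε * y i = ε * (x i / ε - y i) := by field_simp
  rw [latticePoint_apply, hscale, abs_mul, abs_of_pos hε]
  exact mul_le_of_le_one_right hε.le hlt.le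

lemma tsupport_partitionBump_subset (hε : 0 < ε) (y : Fin n → ℤ) :
    tsupport (fun x : ℝ^n => (partitionBump ε y x : ℂ)) ⊆ closedCube (latticePoint ε y) ε :=
  closure_minimal (fun _ hx => mem_closedCube_of_partitionBump_ne_zero hε
    fun h => hx (by simp only [h, Complex.ofReal_zero])) (isClosed_closedCube _ _)

lemma norm_fderiv_apply_le_of_directional_lip {f : ℝ^n → ℂ} {v : ℝ^n}
    (hf : DifferentiableAt ℝ f x) {C s : ℝ} (hC : 0 ≤ C) (hs : 0 < s)
    (h : ∀ t : ℝ, |t| < s → ‖f (x + t • v) - f x‖ ≤ C * |t|) : ‖fderiv ℝ f x v‖ ≤ C := by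
  rw [← hf.lineDeriv_eq_fderiv]
  refine norm_deriv_le_of_lip' hC ?_
  filter_upwards [ball_mem_nhds (0 : ℝ) hs] with t ht
  simpa using h t (by simpa using ht)

/-- The function `∑ y ∈ S, c y φ_y`, where `φ_y` is the partition of unity at scale `ε`. -/
def partitionSum (ε : ℝ) (S : Finset (Fin n → ℤ)) (c : (Fin n → ℤ) → ℂ) (x : ℝ^n) : ℂ :=
  ∑ y ∈ S, c y * (partitionBump ε y x : ℂ)

variable {S : Finset (Fin n → ℤ)} {c : (Fin n → ℤ) → ℂ}

lemma contDiff_ofReal_partitionBump (ε : ℝ) (y : Fin n → ℤ) :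
    ContDiff ℝ 1 (fun x : ℝ^n => (partitionBump ε y x : ℂ)) :=
  Complex.ofRealCLM.contDiff.comp (contDiff_partitionBump ε y)

lemma contDiff_partitionSum (ε : ℝ) (S : Finset (Fin n → ℤ)) (c : (Fin n → ℤ) → ℂ) :
    ContDiff ℝ 1 (partitionSum ε S c) :=
  ContDiff.sum fun y _ => contDiff_const.mul (contDiff_ofReal_partitionBump ε y)

lemma norm_partitionSum_le (ε : ℝ) (S : Finset (Fin n → ℤ)) {M : ℝ} (hM : 0 ≤ M)
    (hc : ∀ y, ‖c y‖ ≤ M) (x : ℝ^n) : ‖partitionSum ε S c x‖ ≤ M := by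
  calc _ ≤ ∑ y ∈ S, M * partitionBump ε y x := by
        refine (norm_sum_le _ _).trans (Finset.sum_le_sum fun y _ => ?_)
        rw [norm_mul, norm_partitionBump]
        exact mul_le_mul_of_nonneg_right (hc y) (partitionBump_nonneg _ _ _)
    _ ≤ M := by
        rw [← Finset.mul_sum]
        exact mul_le_of_le_one_right hM (sum_partitionBump_le_one ε x S)

lemma partitionSum_eq_sum_Icc {lo hi : Fin n → ℤ} (hcS : ∀ y ∉ S, c y = 0)
    (h : ∀ i, (lo i : ℝ) ≤ x i / ε ∧ x i / ε ≤ hi i) :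
    partitionSum ε S c x = ∑ y ∈ Finset.Icc lo hi, c y * (partitionBump ε y x : ℂ) := by
  classical
  calc partitionSum ε S c x
      = ∑ y ∈ S ∪ Finset.Icc lo hi, c y * (partitionBump ε y x : ℂ) :=
        Finset.sum_subset Finset.subset_union_left fun y _ hy => by rw [hcS y hy, zero_mul]
    _ = _ := (Finset.sum_subset Finset.subset_union_right fun y _ hy => by
        rw [partitionBump_eq_zero_of_notMem h hy, Complex.ofReal_zero, mul_zero]).symm

lemma partitionSum_eq_add_sum_Icc {lo hi : Fin n → ℤ} (hcS : ∀ y ∉ S, c y = 0)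
    (h : ∀ i, (lo i : ℝ) ≤ x i / ε ∧ x i / ε ≤ hi i) (w : ℂ) :
    partitionSum ε S c x =
      w + ∑ y ∈ Finset.Icc lo hi, (c y - w) * (partitionBump ε y x : ℂ) := by
  simp only [partitionSum_eq_sum_Icc hcS h, sub_mul, Finset.sum_sub_distrib]
  rw [← Finset.mul_sum (f := fun y => (partitionBump ε y x : ℂ)), ← Complex.ofReal_sum,
    sum_Icc_partitionBump h, Complex.ofReal_one]
  ring

lemma card_Icc_sub_two_add_two (y : Fin n → ℤ) : (Finset.Icc (y - 2) (y + 2)).card = 5 ^ n := by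
  rw [Pi.card_Icc, Finset.prod_eq_pow_card (b := 5) fun i _ => ?_, Finset.card_univ,
    Fintype.card_fin]
  rw [Int.card_Icc, Pi.add_apply, Pi.sub_apply, Pi.ofNat_apply]
  omega

/-- Near a point only `5 ^ n` bumps are nonzero, and a constant may be subtracted from their
coefficients since the bumps sum to `1`. -/
lemma norm_fderiv_partitionSum_le (hε : 0 < ε) (hcS : ∀ y ∉ S, c y = 0) {δ : ℝ} (hδ : 0 ≤ δ)
    (hc : ∀ y y', ‖y - y'‖ ≤ 2 → ‖c y - c y'‖ ≤ δ) (x : ℝ^n) (i : Fin n) :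
    ‖fderiv ℝ (partitionSum ε S c) x (EuclideanSpace.single i 1)‖ ≤
      5 ^ n * δ * smoothHatLip / ε := by
  refine norm_fderiv_apply_le_of_directional_lip
    ((contDiff_partitionSum ε S c).differentiable one_ne_zero x) (by positivity) hε fun t ht => ?_
  set y₀ : Fin n → ℤ := fun j => ⌊x j / ε⌋
  set x' : ℝ^n := x + t • EuclideanSpace.single i (1 : ℝ) with hx'
  have hfloor : ∀ j, (y₀ j : ℝ) ≤ x j / ε ∧ x j / ε < y₀ j + 1 :=
    fun j => ⟨Int.floor_le _, Int.lt_floor_add_one _⟩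
  have hxx' : ∀ j, |x' j / ε - x j / ε| < 1 := fun j => by
    rw [← sub_div, abs_div, abs_of_pos hε, div_lt_one hε]
    refine lt_of_le_of_lt ?_ ht
    by_cases hj : j = i <;> simp [hx', hj]
  have hx₀ : ∀ j, ((y₀ - 2) j : ℝ) ≤ x j / ε ∧ x j / ε ≤ ((y₀ + 2) j : ℤ) := fun j => by
    have := hfloor j
    simp only [Pi.sub_apply, Pi.add_apply, Pi.ofNat_apply]
    push_cast
    constructor <;> linarith
  have hx₀' : ∀ j, ((y₀ - 2) j : ℝ) ≤ x' j / ε ∧ x' j / ε ≤ ((y₀ + 2) j : ℤ) := fun j => by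
    have := hfloor j
    have := abs_lt.1 (hxx' j)
    simp only [Pi.sub_apply, Pi.add_apply, Pi.ofNat_apply]
    push_cast
    constructor <;> linarith
  have hnear : ∀ y ∈ Finset.Icc (y₀ - 2) (y₀ + 2), ‖y - y₀‖ ≤ 2 := fun y hy => by
    rw [pi_norm_le_iff_of_nonneg zero_le_two]
    intro j
    rw [Finset.mem_Icc] at hy
    have hlo : y₀ j - 2 ≤ y j := hy.1 j
    have hhi : y j ≤ y₀ j + 2 := hy.2 j
    rw [Pi.sub_apply, Int.norm_eq_abs, abs_le]
    constructor <;> norm_cast <;> omega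
  rw [partitionSum_eq_add_sum_Icc hcS hx₀' (c y₀), partitionSum_eq_add_sum_Icc hcS hx₀ (c y₀),
    add_sub_add_left_eq_sub, ← Finset.sum_sub_distrib]
  calc _ ≤ ∑ _y ∈ Finset.Icc (y₀ - 2) (y₀ + 2), δ * (smoothHatLip / ε * |t|) := by
        refine (norm_sum_le _ _).trans (Finset.sum_le_sum fun y hy => ?_)
        rw [← mul_sub, norm_mul, ← Complex.ofReal_sub, Complex.norm_real]
        exact mul_le_mul (hc y y₀ (hnear y hy))
          (abs_partitionBump_add_single_sub_le hε y x i t) (norm_nonneg _) hδ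
    _ = _ := by
        rw [Finset.sum_const, card_Icc_sub_two_add_two, nsmul_eq_mul]
        push_cast
        ring

end PartitionOfUnity

local notation:max "L²(" E ")" => Lp ℂ 2 (volume : Measure E)

/-! ### Compactly supported `C¹` functions in `L²` -/

section CompactC1

variable {n : ℕ}

/-- The space `C¹_c(ℝⁿ)` of compactly supported `C¹` functions. -/
def compactC1 (n : ℕ) : Submodule ℂ (ℝ^n → ℂ) where
  carrier := {f | ContDiff ℝ 1 f ∧ HasCompactSupport f}
  add_mem' hf hg := ⟨hf.1.add hg.1, hf.2.add hg.2⟩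
  zero_mem' := ⟨contDiff_const, HasCompactSupport.zero⟩
  smul_mem' c _ hf := ⟨contDiff_const.smul hf.1, hf.2.smul_left (f := fun _ => c)⟩

lemma memLp_compactC1 (f : compactC1 n) : MemLp f.1 2 volume :=
  f.2.1.continuous.memLp_of_hasCompactSupport f.2.2

lemma integrable_compactC1 (f : compactC1 n) : Integrable f.1 :=
  f.2.1.continuous.integrable_of_hasCompactSupport f.2.2

/-- The inclusion of `C¹_c(ℝⁿ)` in `L²(ℝⁿ)`. -/
def toL2 : compactC1 n →ₗ[ℂ] L²(ℝ^n) where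
  toFun f := (memLp_compactC1 f).toLp f.1
  map_add' _ _ := rfl
  map_smul' _ _ := rfl

lemma coeFn_toL2 (f : compactC1 n) : (toL2 f : ℝ^n → ℂ) =ᵐ[volume] f.1 :=
  (memLp_compactC1 f).coeFn_toLp

lemma inner_toL2_left (g : compactC1 n) (h : L²(ℝ^n)) :
    inner ℂ (toL2 g) h = ∫ x, h x * starRingEnd ℂ (g.1 x) := by
  rw [L2.inner_def]
  refine integral_congr_ae ?_
  filter_upwards [coeFn_toL2 g] with x hx
  rw [hx, RCLike.inner_apply]

lemma inner_toL2_right (g : compactC1 n) (h : L²(ℝ^n)) :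
    inner ℂ h (toL2 g) = ∫ x, g.1 x * starRingEnd ℂ (h x) := by
  rw [L2.inner_def]
  refine integral_congr_ae ?_
  filter_upwards [coeFn_toL2 g] with x hx
  rw [hx, RCLike.inner_apply]

lemma norm_toL2_sq (g : compactC1 n) : ‖toL2 g‖ ^ 2 = ∫ x, ‖g.1 x‖ ^ 2 := by
  refine Complex.ofReal_injective ?_
  rw [Complex.ofReal_pow, ← Complex.coe_algebraMap, ← inner_self_eq_norm_sq_to_K (𝕜 := ℂ),
    inner_toL2_left, Complex.coe_algebraMap, ← integral_complex_ofReal]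
  refine integral_congr_ae ?_
  filter_upwards [coeFn_toL2 g] with x hx
  rw [hx, Complex.mul_conj, Complex.normSq_eq_norm_sq]

variable {ε : ℝ}

/-- The member of the partition of unity at scale `ε` centred at `ε y`, as an element of
`C¹_c(ℝⁿ)`. -/
def bump (hε : 0 < ε) (y : Fin n → ℤ) : compactC1 n :=
  ⟨fun x => (partitionBump ε y x : ℂ), contDiff_ofReal_partitionBump ε y,
    (isCompact_closedCube _ hε.le).of_isClosed_subset (isClosed_tsupport _)
      (tsupport_partitionBump_subset hε y)⟩

/-- The function `∑ y ∈ S, c y φ_y`, as an element of `C¹_c(ℝⁿ)`. -/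
def bumpSum (hε : 0 < ε) (S : Finset (Fin n → ℤ)) (c : (Fin n → ℤ) → ℂ) : compactC1 n :=
  ∑ y ∈ S, c y • bump hε y

lemma coe_bumpSum (hε : 0 < ε) (S : Finset (Fin n → ℤ)) (c : (Fin n → ℤ) → ℂ) :
    (bumpSum hε S c).1 = partitionSum ε S c := by
  ext x
  simp [bumpSum, bump, partitionSum]

lemma map_bumpSum {V : Type*} [AddCommMonoid V] [Module ℂ V] (T : compactC1 n →ₗ[ℂ] V)
    (hε : 0 < ε) (S : Finset (Fin n → ℤ)) (c : (Fin n → ℤ) → ℂ) :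
    T (bumpSum hε S c) = ∑ y ∈ S, c y • T (bump hε y) := by
  simp only [bumpSum, map_sum, map_smul]

lemma tsupport_bumpSum_subset (hε : 0 < ε) (S : Finset (Fin n → ℤ)) {c : (Fin n → ℤ) → ℂ}
    (y₀ : Fin n → ℤ) {R : ℝ} (hc : ∀ y, c y ≠ 0 → ‖y - y₀‖ ≤ R) :
    tsupport (bumpSum hε S c).1 ⊆ closedCube (latticePoint ε y₀) (ε * (R + 1)) := by
  rw [coe_bumpSum]
  refine closure_minimal (fun x hx i => ?_) (isClosed_closedCube _ _)
  obtain ⟨y, -, hy⟩ := Finset.exists_ne_zero_of_sum_ne_zero hx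
  have hcube := mem_closedCube_of_partitionBump_ne_zero hε
    (Complex.ofReal_ne_zero.1 (right_ne_zero_of_mul hy)) i
  have hcoord : |((y i : ℝ) - y₀ i)| ≤ R := by
    simpa using (abs_apply_le_norm (y - y₀) i).trans (hc y (left_ne_zero_of_mul hy))
  rw [latticePoint_apply] at hcube ⊢
  calc |x i - ε * y₀ i| = |(x i - ε * y i) + ε * (y i - y₀ i)| := by ring_nf
    _ ≤ ε + ε * R := by
        refine (abs_add_le _ _).trans (add_le_add hcube ?_)
        rw [abs_mul, abs_of_pos hε]
        gcongr
    _ = ε * (R + 1) := by ring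

lemma integral_smoothHat : ∫ t, smoothHat t = 1 := by
  have hint : ∀ a b, IntervalIntegrable Real.smoothTransition volume a b :=
    fun a b => Real.smoothTransition.continuous.intervalIntegrable a b
  have hsupp : Function.support smoothHat ⊆ Set.Ioc (-1) 1 := fun t ht => by
    have := abs_lt.1 (not_le.1 fun h => ht (smoothHat_eq_zero h))
    exact ⟨this.1, this.2.le⟩
  have hzero : ∫ t in (-1 : ℝ)..0, Real.smoothTransition t = 0 := by
    rw [intervalIntegral.integral_congr (g := fun _ => 0) fun t ht => ?_,
      intervalIntegral.integral_zero]
    rw [Set.uIcc_of_le (by norm_num)] at ht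
    exact Real.smoothTransition.zero_of_nonpos ht.2
  have hone : ∫ t in (1 : ℝ)..2, Real.smoothTransition t = 1 := by
    rw [intervalIntegral.integral_congr (g := fun _ => 1) fun t ht => ?_]
    · norm_num
    · rw [Set.uIcc_of_le (by norm_num)] at ht
      exact Real.smoothTransition.one_of_one_le ht.1
  calc ∫ t, smoothHat t
      = (∫ t in (-1 : ℝ)..1, Real.smoothTransition (t + 1)) -
          ∫ t in (-1 : ℝ)..1, Real.smoothTransition t := by
        rw [← intervalIntegral.integral_eq_integral_of_support_subset hsupp]
        exact intervalIntegral.integral_sub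
          ((Real.smoothTransition.continuous.comp (by fun_prop)).intervalIntegrable _ _) (hint _ _)
    _ = (∫ t in (0 : ℝ)..2, Real.smoothTransition t) -
          ∫ t in (-1 : ℝ)..1, Real.smoothTransition t := by
        rw [intervalIntegral.integral_comp_add_right Real.smoothTransition]
        norm_num
    _ = 1 := by
        rw [← intervalIntegral.integral_add_adjacent_intervals (hint 0 1) (hint 1 2),
          ← intervalIntegral.integral_add_adjacent_intervals (hint (-1) 0) (hint 0 1), hzero, hone]
        ring

lemma integral_partitionBump (hε : 0 < ε) (y : Fin n → ℤ) :
    ∫ x : ℝ^n, partitionBump ε y x = ε ^ n := by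
  have hone : ∀ k : ℤ, ∫ t, smoothHat (t / ε - k) = ε := fun k => by
    rw [Measure.integral_comp_div (fun t => smoothHat (t - k)) ε,
      integral_sub_right_eq_self smoothHat, integral_smoothHat, abs_of_pos hε, smul_eq_mul, mul_one]
  calc ∫ x : ℝ^n, partitionBump ε y x
      = ∫ x : Fin n → ℝ, ∏ i, smoothHat (x i / ε - y i) :=
        ((PiLp.volume_preserving_ofLp (Fin n)).integral_comp
          (MeasurableEquiv.toLp 2 (Fin n → ℝ)).symm.measurableEmbedding
          fun x => ∏ i, smoothHat (x i / ε - y i))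
    _ = ∏ i, ∫ t, smoothHat (t / ε - y i) :=
        integral_fintype_prod_volume_eq_prod fun i t => smoothHat (t / ε - y i)
    _ = ε ^ n := by simp only [hone, Finset.prod_const, Finset.card_univ, Fintype.card_fin]

lemma integrable_partitionBump (hε : 0 < ε) (y : Fin n → ℤ) :
    Integrable (partitionBump ε y : ℝ^n → ℝ) :=
  (integrable_compactC1 (bump hε y)).re

lemma norm_partitionSum_sq_le (ε : ℝ) (S : Finset (Fin n → ℤ)) (c : (Fin n → ℤ) → ℂ) (x : ℝ^n) :
    ‖partitionSum ε S c x‖ ^ 2 ≤ ∑ y ∈ S, ‖c y‖ ^ 2 * partitionBump ε y x := by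
  have hφ : ∀ y, 0 ≤ partitionBump ε y x := fun y => partitionBump_nonneg ε y x
  calc ‖partitionSum ε S c x‖ ^ 2
      ≤ (∑ y ∈ S, (‖c y‖ * √(partitionBump ε y x)) * √(partitionBump ε y x)) ^ 2 := by
        gcongr
        refine (norm_sum_le _ _).trans (Finset.sum_le_sum fun y _ => ?_)
        rw [norm_mul, norm_partitionBump, mul_assoc, Real.mul_self_sqrt (hφ y)]
    _ ≤ (∑ y ∈ S, (‖c y‖ * √(partitionBump ε y x)) ^ 2) * ∑ y ∈ S, √(partitionBump ε y x) ^ 2 :=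
        Finset.sum_mul_sq_le_sq_mul_sq _ _ _
    _ = (∑ y ∈ S, ‖c y‖ ^ 2 * partitionBump ε y x) * ∑ y ∈ S, partitionBump ε y x := by
        simp only [mul_pow, Real.sq_sqrt (hφ _)]
    _ ≤ ∑ y ∈ S, ‖c y‖ ^ 2 * partitionBump ε y x :=
        mul_le_of_le_one_right (Finset.sum_nonneg fun y _ => mul_nonneg (by positivity) (hφ y))
          (sum_partitionBump_le_one ε x S)

lemma norm_toL2_bumpSum_sq_le (hε : 0 < ε) (S : Finset (Fin n → ℤ)) (c : (Fin n → ℤ) → ℂ) :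
    ‖toL2 (bumpSum hε S c)‖ ^ 2 ≤ ε ^ n * ∑ y ∈ S, ‖c y‖ ^ 2 := by
  have hint : ∀ y ∈ S, Integrable fun x : ℝ^n => ‖c y‖ ^ 2 * partitionBump ε y x :=
    fun y _ => (integrable_partitionBump hε y).const_mul _
  rw [norm_toL2_sq, coe_bumpSum]
  calc ∫ x, ‖partitionSum ε S c x‖ ^ 2
      ≤ ∫ x : ℝ^n, ∑ y ∈ S, ‖c y‖ ^ 2 * partitionBump ε y x :=
        integral_mono_of_nonneg (Filter.Eventually.of_forall fun x => by positivity)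
          (integrable_finsetSum S hint)
          (Filter.Eventually.of_forall fun x => norm_partitionSum_sq_le ε S c x)
    _ = _ := by
        rw [integral_finsetSum S hint]
        simp only [integral_const_mul, integral_partitionBump hε]
        rw [← Finset.sum_mul, mul_comm]

lemma norm_toL2_bump_sq_le (hε : 0 < ε) (y : Fin n → ℤ) : ‖toL2 (bump hε y)‖ ^ 2 ≤ ε ^ n := by
  simpa [bumpSum] using norm_toL2_bumpSum_sq_le hε {y} fun _ => 1

lemma sum_norm_inner_bump_sq_le (hε : 0 < ε) (S : Finset (Fin n → ℤ)) (h : L²(ℝ^n)) :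
    ∑ y ∈ S, ‖inner ℂ (toL2 (bump hε y)) h‖ ^ 2 ≤ ε ^ n * ‖h‖ ^ 2 := by
  set c : (Fin n → ℤ) → ℂ := fun y => inner ℂ (toL2 (bump hε y)) h
  set Q := ∑ y ∈ S, ‖c y‖ ^ 2
  have hQ : 0 ≤ Q := Finset.sum_nonneg fun _ _ => by positivity
  have hinner : inner ℂ (toL2 (bumpSum hε S c)) h = (Q : ℂ) := by
    rw [map_bumpSum, sum_inner, Complex.ofReal_sum]
    refine Finset.sum_congr rfl fun y _ => ?_
    rw [inner_smul_left, ← Complex.normSq_eq_norm_sq, Complex.normSq_eq_conj_mul_self]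
  have hcs : Q ≤ ‖toL2 (bumpSum hε S c)‖ * ‖h‖ := by
    have := norm_inner_le_norm (𝕜 := ℂ) (toL2 (bumpSum hε S c)) h
    rwa [hinner, Complex.norm_real, Real.norm_of_nonneg hQ] at this
  have hsq : Q * Q ≤ ε ^ n * ‖h‖ ^ 2 * Q := by
    calc Q * Q ≤ (‖toL2 (bumpSum hε S c)‖ * ‖h‖) ^ 2 := by rw [← sq]; gcongr
      _ = ‖toL2 (bumpSum hε S c)‖ ^ 2 * ‖h‖ ^ 2 := mul_pow _ _ _
      _ ≤ ε ^ n * Q * ‖h‖ ^ 2 := by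
          gcongr
          exact norm_toL2_bumpSum_sq_le hε S c
      _ = _ := by ring
  rcases hQ.eq_or_lt with h0 | hpos
  · rw [← h0]
    positivity
  · exact le_of_mul_le_mul_right hsq hpos

end CompactC1

/-! ### Bump-bounded operators and Calderón–Zygmund kernels -/

section BumpBounded

variable {n : ℕ} {A : ℝ} {T : compactC1 n →ₗ[ℂ] L²(ℝ^n)}

/-- The bump estimate `‖T ω‖ ≤ A r^{n/2}`, for all `r`-bump functions `ω`. -/
def IsBumpBounded (A : ℝ) (T : compactC1 n →ₗ[ℂ] L²(ℝ^n)) : Prop :=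
  ∀ r > 0, ∀ ω : compactC1 n, IsBump n r ω.1 → ‖T ω‖ ≤ A * r ^ ((n : ℝ) / 2)

lemma IsBumpBounded.norm_map_sq_le (hT : IsBumpBounded A T) {f : compactC1 n} {c : ℝ^n} {r M : ℝ}
    (hr : 0 < r) (hM : 0 < M) (hsupp : tsupport f.1 ⊆ closedBall c r) (hf : ∀ x, ‖f.1 x‖ ≤ M)
    (hf' : ∀ (i : Fin n) (x : ℝ^n), ‖fderiv ℝ f.1 x (EuclideanSpace.single i 1)‖ ≤ M / r) :
    ‖T f‖ ^ 2 ≤ M ^ 2 * A ^ 2 * r ^ n := by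
  have hnorm : ‖((M : ℂ)⁻¹)‖ = M⁻¹ := by
    rw [norm_inv, Complex.norm_real, Real.norm_of_nonneg hM.le]
  have hbump : IsBump n r ((M : ℂ)⁻¹ • f).1 := by
    refine ⟨((M : ℂ)⁻¹ • f).2.1, ⟨c, ?_⟩, fun x => ?_, fun i x => ?_⟩
    · exact (tsupport_smul_subset_right (fun _ => (M : ℂ)⁻¹) f.1).trans hsupp
    · rw [Submodule.coe_smul, Pi.smul_apply, norm_smul, hnorm, inv_mul_le_iff₀ hM, mul_one]
      exact hf x
    · rw [Submodule.coe_smul, fderiv_const_smul (f.2.1.differentiable one_ne_zero x),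
        smul_apply, norm_smul, hnorm, inv_mul_le_iff₀ hM, mul_one_div]
      exact hf' i x
  have hscaled := hT r hr _ hbump
  rw [map_smul, norm_smul, hnorm, inv_mul_le_iff₀ hM] at hscaled
  calc ‖T f‖ ^ 2 ≤ (M * (A * r ^ ((n : ℝ) / 2))) ^ 2 := by gcongr
    _ = M ^ 2 * A ^ 2 * (r ^ ((n : ℝ) / 2)) ^ 2 := by ring
    _ = M ^ 2 * A ^ 2 * r ^ n := by
        rw [← Real.rpow_mul_natCast hr.le, Nat.cast_ofNat, div_mul_cancel₀ _ two_ne_zero,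
          Real.rpow_natCast]

variable {ε : ℝ}

/-- A bound for the `C¹` size of the functions `bumpSum` with coefficients of size `1` varying
at scale `1`, after rescaling to the unit ball. -/
def bumpSumHeight (n : ℕ) : ℝ := 1 + 6 * (n + 1) * 5 ^ n * smoothHatLip

/-- The constant in the bump estimate for the functions `bumpSum`. -/
def bumpSumBound (n : ℕ) : ℝ := bumpSumHeight n ^ 2 * (3 * (n + 1)) ^ n

lemma one_le_bumpSumHeight (n : ℕ) : 1 ≤ bumpSumHeight n :=
  le_add_of_nonneg_right (by positivity)

lemma one_le_bumpSumBound (n : ℕ) : 1 ≤ bumpSumBound n :=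
  one_le_mul_of_one_le_of_one_le (one_le_pow₀ (one_le_bumpSumHeight n))
    (one_le_pow₀ (by norm_cast; omega))

lemma sqrt_natCast_le_add_one (n : ℕ) : √(n : ℝ) ≤ n + 1 :=
  Real.sqrt_le_iff.2 ⟨by positivity, by nlinarith [n.cast_nonneg (α := ℝ)]⟩

lemma IsBumpBounded.norm_map_bumpSum_sq_le (hT : IsBumpBounded A T) (hε : 0 < ε) {ρ : ℝ}
    (hρ : 1 ≤ ρ) {Y : Finset (Fin n → ℤ)} {c : (Fin n → ℤ) → ℂ} {y₀ : Fin n → ℤ}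
    (hY : ∀ y ∉ Y, c y = 0) (hc : ∀ y, ‖c y‖ ≤ 1) (hsupp : ∀ y, c y ≠ 0 → ‖y - y₀‖ ≤ 2 * ρ)
    (hlip : ∀ y y', ‖y - y'‖ ≤ 2 → ‖c y - c y'‖ ≤ 2 / ρ) :
    ‖T (bumpSum hε Y c)‖ ^ 2 ≤ bumpSumBound n * A ^ 2 * (ε * ρ) ^ n := by
  have hM := one_le_bumpSumHeight n
  have hbound := hT.norm_map_sq_le (f := bumpSum hε Y c) (c := latticePoint ε y₀)
    (r := (n + 1) * (ε * (3 * ρ))) (M := bumpSumHeight n) (by positivity) (by positivity) ?_ ?_ ?_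
  · calc ‖T (bumpSum hε Y c)‖ ^ 2
        ≤ bumpSumHeight n ^ 2 * A ^ 2 * ((3 * (n + 1)) * (ε * ρ)) ^ n :=
          hbound.trans_eq (by ring)
      _ = bumpSumBound n * A ^ 2 * (ε * ρ) ^ n := by
          rw [bumpSumBound, mul_pow]
          ring
  · refine (tsupport_bumpSum_subset hε Y y₀ hsupp).trans ((closedCube_subset_closedBall _
      (by positivity)).trans (closedBall_subset_closedBall ?_))
    gcongr
    · exact sqrt_natCast_le_add_one n
    · linarith
  · intro x
    rw [coe_bumpSum]
    exact (norm_partitionSum_le ε Y zero_le_one hc x).trans hM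
  · intro i x
    rw [coe_bumpSum]
    refine (norm_fderiv_partitionSum_le hε hY (by positivity) hlip x i).trans ?_
    calc 5 ^ n * (2 / ρ) * smoothHatLip / ε
        = (bumpSumHeight n - 1) / ((n + 1) * (ε * (3 * ρ))) := by
          rw [bumpSumHeight]
          field_simp
          ring
      _ ≤ bumpSumHeight n / ((n + 1) * (ε * (3 * ρ))) := by
          gcongr
          linarith

lemma IsBumpBounded.norm_map_bump_sq_le (hT : IsBumpBounded A T) (hε : 0 < ε) (y : Fin n → ℤ) :
    ‖T (bump hε y)‖ ^ 2 ≤ bumpSumBound n * A ^ 2 * ε ^ n := by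
  have hbound := hT.norm_map_bumpSum_sq_le hε le_rfl (Y := {y}) (c := Pi.single y 1) (y₀ := y)
    (fun z hz => Pi.single_eq_of_ne (Finset.notMem_singleton.1 hz) _) (fun z => ?_)
    (fun z hz => ?_) fun z z' _ => ?_
  · simpa [map_bumpSum] using hbound
  · rw [Pi.single_apply]
    split_ifs <;> simp
  · obtain rfl : z = y := by_contra fun h => hz (Pi.single_eq_of_ne h 1)
    simp
  · rw [Pi.single_apply, Pi.single_apply]
    split_ifs <;> norm_num

end BumpBounded

section Kernel

variable {n : ℕ} {A : ℝ} {K : ℝ^n → ℝ^n → ℂ}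

/-- A kernel on `ℝⁿ`, `C¹` off the diagonal, with the standard size and derivative bounds. -/
structure IsCZKernel (A : ℝ) (K : ℝ^n → ℝ^n → ℂ) : Prop where
  pos : 0 < A
  contDiffOn : ContDiffOn ℝ 1 (fun p : ℝ^n × ℝ^n => K p.1 p.2) {p | p.1 ≠ p.2}
  size : ∀ x y, x ≠ y → ‖K x y‖ ≤ A / ‖x - y‖ ^ n
  deriv : ∀ (i : Fin n) x y, x ≠ y →
    ‖fderiv ℝ (fun x' => K x' y) x (EuclideanSpace.single i 1)‖ ≤ A / ‖x - y‖ ^ (n + 1) ∧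
    ‖fderiv ℝ (fun y' => K x y') y (EuclideanSpace.single i 1)‖ ≤ A / ‖x - y‖ ^ (n + 1)

lemma IsCZKernel.swap (hK : IsCZKernel A K) : IsCZKernel A fun x y => K y x where
  pos := hK.pos
  contDiffOn := hK.contDiffOn.comp (contDiff_snd.prodMk contDiff_fst).contDiffOn
    fun _ h => Ne.symm h
  size x y h := by
    rw [norm_sub_rev]
    exact hK.size y x h.symm
  deriv i x y h := by
    rw [norm_sub_rev]
    exact (hK.deriv i y x h.symm).symm

lemma IsCZKernel.differentiableAt_left (hK : IsCZKernel A K) {x y : ℝ^n} (hxy : x ≠ y) :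
    DifferentiableAt ℝ (fun x' => K x' y) x :=
  ((hK.contDiffOn.contDiffAt ((isOpen_ne_fun continuous_fst continuous_snd).mem_nhds
    hxy)).differentiableAt one_ne_zero).comp (f := fun x' => (x', y)) x (by fun_prop)

lemma opNorm_le_of_forall_single {L : ℝ^n →L[ℝ] ℂ} {C : ℝ} (hC : 0 ≤ C)
    (h : ∀ i, ‖L (EuclideanSpace.single i 1)‖ ≤ C) : ‖L‖ ≤ n * C := by
  refine L.opNorm_le_bound (by positivity) fun z => ?_
  calc ‖L z‖ = ‖∑ i, z i • L (EuclideanSpace.single i 1)‖ := by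
        conv_lhs => rw [← (EuclideanSpace.basisFun (Fin n) ℝ).sum_repr z]
        simp
    _ ≤ ∑ _i : Fin n, ‖z‖ * C := by
        refine norm_sum_le_of_le _ fun i _ => ?_
        rw [norm_smul]
        exact mul_le_mul (abs_apply_le_euclideanNorm z i) (h i) (norm_nonneg _) (norm_nonneg _)
    _ = n * C * ‖z‖ := by
        rw [Finset.sum_const, Finset.card_univ, Fintype.card_fin, nsmul_eq_mul]
        ring

lemma IsCZKernel.norm_sub_le_left (hK : IsCZKernel A K) {Q : Set (ℝ^n)} (hQ : Convex ℝ Q)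
    {v : ℝ^n} {d : ℝ} (hd : 0 < d) (hsep : ∀ u ∈ Q, d ≤ ‖u - v‖) {u u₀ : ℝ^n} (hu : u ∈ Q)
    (hu₀ : u₀ ∈ Q) : ‖K u v - K u₀ v‖ ≤ n * (A / d ^ (n + 1)) * ‖u - u₀‖ := by
  have hA := hK.pos
  have hne : ∀ w ∈ Q, w ≠ v := fun w hw => sub_ne_zero.1 (norm_pos_iff.1 (hd.trans_le (hsep w hw)))
  refine hQ.norm_image_sub_le_of_norm_fderiv_le (f := fun x' => K x' v) (𝕜 := ℝ)
    (fun w hw => hK.differentiableAt_left (hne w hw))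
    (fun w hw => opNorm_le_of_forall_single (by positivity) fun i => ?_) hu₀ hu
  refine (hK.deriv i w v (hne w hw)).1.trans ?_
  gcongr
  exact hsep w hw

lemma IsCZKernel.integrable_mul (hK : IsCZKernel A K) (F : compactC1 n) {u : ℝ^n}
    (hu : u ∉ tsupport F.1) : Integrable fun v => K u v * F.1 v := by
  refine Continuous.integrable_of_hasCompactSupport (continuous_iff_continuousAt.2 fun v => ?_)
    F.2.2.mul_left
  rcases eq_or_ne v u with rfl | hv
  · refine (continuousAt_const (y := (0 : ℂ))).congr ?_
    filter_upwards [(isClosed_tsupport F.1).isOpen_compl.mem_nhds hu] with w hw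
    rw [image_eq_zero_of_notMem_tsupport hw, mul_zero]
  · exact (hK.swap.differentiableAt_left hv).continuousAt.mul F.2.1.continuous.continuousAt

lemma norm_integral_mul_sub_integral_mul_le {α : Type*} [MeasurableSpace α] {μ : Measure α}
    {f g F : α → ℂ} (hF : Integrable F μ) (hf : Integrable (fun v => f v * F v) μ)
    (hg : Integrable (fun v => g v * F v) μ) {D : ℝ} (hD : ∀ v, F v ≠ 0 → ‖f v - g v‖ ≤ D) :
    ‖(∫ v, f v * F v ∂μ) - ∫ v, g v * F v ∂μ‖ ≤ D * ∫ v, ‖F v‖ ∂μ := by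
  rw [← integral_sub hf hg, ← integral_const_mul]
  refine norm_integral_le_of_norm_le (hF.norm.const_mul _) (Filter.Eventually.of_forall fun v => ?_)
  rw [← sub_mul, norm_mul]
  by_cases hv : F v = 0
  · simp only [hv, norm_zero, mul_zero, le_refl]
  · gcongr
    exact hD v hv

/-- The kernel `K` represents the operator `T` away from the support of its argument. -/
def IsKernelOf (K : ℝ^n → ℝ^n → ℂ) (T : compactC1 n →ₗ[ℂ] L²(ℝ^n)) : Prop :=
  ∀ F : compactC1 n, ∀ᵐ x, x ∉ tsupport F.1 → (T F : ℝ^n → ℂ) x = ∫ y, K x y * F.1 y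

variable {T : compactC1 n →ₗ[ℂ] L²(ℝ^n)} {F G : compactC1 n}

/-- The cancellation of `F` or of `G` enters through the comparison kernel `b`, whose contribution
to the pairing vanishes. -/
lemma IsKernelOf.norm_inner_map_le (hT : IsKernelOf K T) (hK : IsCZKernel A K)
    {b : ℝ^n → ℝ^n → ℂ} {κ : ℂ} {D : ℝ} (hdisj : ∀ u, G.1 u ≠ 0 → u ∉ tsupport F.1)
    (hbF : ∀ u, G.1 u ≠ 0 → Integrable fun v => b u v * F.1 v)
    (hκ : ∀ u, G.1 u ≠ 0 → ∫ v, b u v * F.1 v = κ) (hG : κ = 0 ∨ ∫ u, G.1 u = 0)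
    (hD : ∀ u v, G.1 u ≠ 0 → F.1 v ≠ 0 → ‖K u v - b u v‖ ≤ D) :
    ‖inner ℂ (toL2 G) (T F)‖ ≤ D * (∫ v, ‖F.1 v‖) * ∫ u, ‖G.1 u‖ := by
  have hint : Integrable fun x => (T F : ℝ^n → ℂ) x * starRingEnd ℂ (G.1 x) := by
    refine (L2.integrable_inner (𝕜 := ℂ) (toL2 G) (T F)).congr ?_
    filter_upwards [coeFn_toL2 G] with x hx
    rw [hx, RCLike.inner_apply]
  have hGconj : Integrable fun x => starRingEnd ℂ (G.1 x) :=
    Complex.conjCLE.toContinuousLinearMap.integrable_comp (integrable_compactC1 G)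
  have hzero : κ * ∫ x, starRingEnd ℂ (G.1 x) = 0 := by
    rw [integral_conj]
    rcases hG with h | h <;> simp only [h, zero_mul, map_zero, mul_zero]
  calc ‖inner ℂ (toL2 G) (T F)‖
      = ‖∫ x, ((T F : ℝ^n → ℂ) x - κ) * starRingEnd ℂ (G.1 x)‖ := by
        simp_rw [inner_toL2_left, sub_mul]
        rw [integral_sub hint (hGconj.const_mul κ), integral_const_mul, hzero, sub_zero]
    _ ≤ ∫ x, D * (∫ v, ‖F.1 v‖) * ‖G.1 x‖ := by
        refine norm_integral_le_of_norm_le ((integrable_compactC1 G).norm.const_mul _) ?_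
        filter_upwards [hT F] with x hx
        rw [norm_mul, RCLike.norm_conj]
        by_cases hGx : G.1 x = 0
        · simp only [hGx, norm_zero, mul_zero, le_refl]
        · rw [hx (hdisj x hGx), ← hκ x hGx]
          gcongr
          exact norm_integral_mul_sub_integral_mul_le (integrable_compactC1 F)
            (hK.integrable_mul F (hdisj x hGx)) (hbF x hGx) fun v => hD x v hGx
    _ = D * (∫ v, ‖F.1 v‖) * ∫ u, ‖G.1 u‖ := integral_const_mul _ _

variable {c : ℝ^n} {d s : ℝ}

lemma notMem_of_forall_le_norm_sub {P Q : Set (ℝ^n)} (hd : 0 < d)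
    (h : ∀ u ∈ P, ∀ v ∈ Q, d ≤ ‖u - v‖) {u : ℝ^n} (hu : u ∈ P) : u ∉ Q := fun hu' => by
  have := h u hu u hu'
  rw [sub_self, norm_zero] at this
  exact hd.not_ge this

lemma mem_closedCube_self (c : ℝ^n) (hs : 0 ≤ s) : c ∈ closedCube c s := fun i => by
  rwa [sub_self, abs_zero]

lemma IsKernelOf.norm_inner_map_le_of_separated (hT : IsKernelOf K T) (hK : IsCZKernel A K)
    (hd : 0 < d) (hsep : ∀ u ∈ tsupport G.1, ∀ v ∈ tsupport F.1, d ≤ ‖u - v‖) :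
    ‖inner ℂ (toL2 G) (T F)‖ ≤ A / d ^ n * (∫ v, ‖F.1 v‖) * ∫ u, ‖G.1 u‖ := by
  have hA := hK.pos
  refine hT.norm_inner_map_le hK (b := fun _ _ => 0) (κ := 0)
    (fun u hu => notMem_of_forall_le_norm_sub hd hsep (subset_tsupport _ hu))
    (fun u _ => by simp) (fun u _ => by simp) (.inl rfl) fun u v hu hv => ?_
  have huv := hsep u (subset_tsupport _ hu) v (subset_tsupport _ hv)
  rw [sub_zero]
  refine (hK.size u v (sub_ne_zero.1 (norm_pos_iff.1 (hd.trans_le huv)))).trans ?_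
  gcongr

lemma IsCZKernel.norm_sub_le_left_of_mem_closedCube (hK : IsCZKernel A K) {v : ℝ^n} (hd : 0 < d)
    (hs : 0 ≤ s) (hsep : ∀ u ∈ closedCube c s, d ≤ ‖u - v‖) {u : ℝ^n} (hu : u ∈ closedCube c s) :
    ‖K u v - K c v‖ ≤ n * (A / d ^ (n + 1)) * (√n * s) := by
  have hA := hK.pos
  refine (hK.norm_sub_le_left (convex_closedCube c s) hd hsep hu
    (mem_closedCube_self c hs)).trans ?_
  gcongr
  exact euclideanNorm_le_sqrt_mul hs hu

lemma IsKernelOf.norm_inner_map_le_of_integral_left_eq_zero (hT : IsKernelOf K T)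
    (hK : IsCZKernel A K) (hd : 0 < d) (hs : 0 ≤ s) (hG : tsupport G.1 ⊆ closedCube c s)
    (hG₀ : ∫ u, G.1 u = 0) (hsep : ∀ u ∈ closedCube c s, ∀ v ∈ tsupport F.1, d ≤ ‖u - v‖) :
    ‖inner ℂ (toL2 G) (T F)‖ ≤
      n * (A / d ^ (n + 1)) * (√n * s) * (∫ v, ‖F.1 v‖) * ∫ u, ‖G.1 u‖ :=
  hT.norm_inner_map_le hK (b := fun _ v => K c v) (κ := ∫ v, K c v * F.1 v)
    (fun _ hu => notMem_of_forall_le_norm_sub hd hsep (hG (subset_tsupport _ hu)))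
    (fun _ _ => hK.integrable_mul F
      (notMem_of_forall_le_norm_sub hd hsep (mem_closedCube_self c hs)))
    (fun _ _ => rfl) (.inr hG₀) fun _ v hu hv =>
      hK.norm_sub_le_left_of_mem_closedCube hd hs
        (fun w hw => hsep w hw v (subset_tsupport _ hv)) (hG (subset_tsupport _ hu))

lemma IsKernelOf.norm_inner_map_le_of_integral_right_eq_zero (hT : IsKernelOf K T)
    (hK : IsCZKernel A K) (hd : 0 < d) (hs : 0 ≤ s) (hF : tsupport F.1 ⊆ closedCube c s)
    (hF₀ : ∫ v, F.1 v = 0) (hsep : ∀ u ∈ tsupport G.1, ∀ v ∈ closedCube c s, d ≤ ‖u - v‖) :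
    ‖inner ℂ (toL2 G) (T F)‖ ≤
      n * (A / d ^ (n + 1)) * (√n * s) * (∫ v, ‖F.1 v‖) * ∫ u, ‖G.1 u‖ :=
  hT.norm_inner_map_le hK (b := fun u _ => K u c) (κ := 0)
    (fun _ hu hF' => notMem_of_forall_le_norm_sub hd hsep (subset_tsupport _ hu) (hF hF'))
    (fun _ _ => (integrable_compactC1 F).const_mul _)
    (fun u _ => by rw [integral_const_mul, hF₀, mul_zero]) (.inl rfl) fun u v hu hv =>
      hK.swap.norm_sub_le_left_of_mem_closedCube hd hs
        (fun w hw => norm_sub_rev w u ▸ hsep u (subset_tsupport _ hu) w hw)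
        (hF (subset_tsupport _ hv))

end Kernel

/-! ### The lattice matrix of a Calderón–Zygmund operator -/

section LatticeMatrix

variable {n : ℕ} {ε : ℝ}

lemma tsupport_bump_subset (hε : 0 < ε) (y : Fin n → ℤ) :
    tsupport (bump hε y).1 ⊆ closedCube (latticePoint ε y) ε :=
  tsupport_partitionBump_subset hε y

lemma integral_bump (hε : 0 < ε) (y : Fin n → ℤ) : ∫ x, (bump hε y).1 x = (ε : ℂ) ^ n := by
  rw [← Complex.ofReal_pow, ← integral_partitionBump hε y, ← integral_complex_ofReal]
  rfl

lemma integral_norm_bump (hε : 0 < ε) (y : Fin n → ℤ) : ∫ x, ‖(bump hε y).1 x‖ = ε ^ n := by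
  rw [← integral_partitionBump hε y]
  exact integral_congr_ae (Filter.Eventually.of_forall fun x => norm_partitionBump ε y x)

lemma integral_bump_sub (hε : 0 < ε) (y y' : Fin n → ℤ) :
    ∫ x, (bump hε y - bump hε y').1 x = 0 :=
  (integral_sub (integrable_compactC1 _) (integrable_compactC1 _)).trans
    (by rw [integral_bump, integral_bump, sub_self])

lemma integral_norm_bump_sub_le (hε : 0 < ε) (y y' : Fin n → ℤ) :
    ∫ x, ‖(bump hε y - bump hε y').1 x‖ ≤ 2 * ε ^ n := by
  have hint : ∀ z, Integrable fun x => ‖(bump hε z : compactC1 n).1 x‖ :=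
    fun z => (integrable_compactC1 _).norm
  calc ∫ x, ‖(bump hε y - bump hε y').1 x‖
      ≤ ∫ x, (‖(bump hε y).1 x‖ + ‖(bump hε y').1 x‖) :=
        integral_mono (integrable_compactC1 _).norm ((hint y).add (hint y'))
          fun x => norm_sub_le _ _
    _ = 2 * ε ^ n := by
        rw [integral_add (hint y) (hint y'), integral_norm_bump, integral_norm_bump, two_mul]

lemma mul_norm_sub_le_of_mem_closedCube (hε : 0 < ε) {x y : Fin n → ℤ} {s t : ℝ} {w v : ℝ^n}
    (hst : 0 ≤ s + t) (hw : w ∈ closedCube (latticePoint ε x) s)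
    (hv : v ∈ closedCube (latticePoint ε y) t) : ε * ‖x - y‖ ≤ ‖w - v‖ + (s + t) := by
  rw [← le_div_iff₀' hε, pi_norm_le_iff_of_nonneg (by positivity)]
  intro i
  have hcoord := abs_apply_le_euclideanNorm (w - v) i
  have hwi := abs_le.1 (hw i)
  have hvi := abs_le.1 (hv i)
  rw [latticePoint_apply] at hwi hvi
  rw [PiLp.sub_apply, abs_le] at hcoord
  rw [Pi.sub_apply, Int.norm_eq_abs, Int.cast_sub, le_div_iff₀' hε, ← abs_of_pos hε, ← abs_mul,
    abs_le]
  constructor <;> linarith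

lemma tsupport_bump_sub_subset (hε : 0 < ε) (x x' : Fin n → ℤ) :
    tsupport (bump hε x - bump hε x').1 ⊆
      closedCube (latticePoint ε x) (ε * (1 + ‖x - x'‖)) := by
  have hdist : ∀ i, |ε * (x' i : ℝ) - ε * x i| ≤ ε * ‖x - x'‖ := fun i => by
    rw [← mul_sub, abs_mul, abs_of_pos hε, norm_sub_rev]
    gcongr
    simpa using abs_apply_le_norm (x' - x) i
  refine (tsupport_sub _ _).trans (Set.union_subset
    ((tsupport_bump_subset hε x).trans fun w hw i => (hw i).trans ?_)
    ((tsupport_bump_subset hε x').trans fun w hw i => (abs_sub_le _ (ε * x' i) _).trans ?_))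
  · exact le_mul_of_one_le_right hε.le (le_add_of_nonneg_right (norm_nonneg _))
  · rw [mul_add, mul_one]
    exact add_le_add (hw i) (hdist i)

/-- A Calderón–Zygmund operator `T` with kernel `K` and formal adjoint `S`, normalised by `A`. -/
structure IsCalderonZygmund (T S : compactC1 n →ₗ[ℂ] L²(ℝ^n)) (A : ℝ) (K : ℝ^n → ℝ^n → ℂ) :
    Prop where
  isCZKernel : IsCZKernel A K
  isKernelOf : IsKernelOf K T
  adjoint : ∀ f g, inner ℂ (toL2 g) (T f) = inner ℂ (S g) (toL2 f)
  isBumpBounded : IsBumpBounded A T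
  isBumpBounded_adjoint : IsBumpBounded A S

/-- The matrix of `T` on the partition of unity at scale `ε`, normalised to be of size `1`. -/
def latticeMatrix (T : compactC1 n →ₗ[ℂ] L²(ℝ^n)) (A : ℝ) (hε : 0 < ε) (x y : Fin n → ℤ) : ℂ :=
  inner ℂ (toL2 (bump hε x)) (T (bump hε y)) / ((A * ε ^ n : ℝ) : ℂ)

/-- The Calderón–Zygmund constant of `latticeMatrix`, independent of the scale. -/
def latticeMatrixBound (n : ℕ) : ℝ := 5 ^ n * bumpSumBound n + n * √n * 2 ^ (n + 3)

lemma latticeMatrixBound_pos (n : ℕ) : 0 < latticeMatrixBound n := by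
  have := one_le_bumpSumBound n
  rw [latticeMatrixBound]
  positivity

variable {T S : compactC1 n →ₗ[ℂ] L²(ℝ^n)} {A : ℝ} {K : ℝ^n → ℝ^n → ℂ}

lemma norm_div_ofReal_le {z : ℂ} {a C : ℝ} (ha : 0 < a) (h : ‖z‖ ≤ C * a) : ‖z / (a : ℂ)‖ ≤ C := by
  rwa [norm_div, Complex.norm_real, Real.norm_of_nonneg ha.le, div_le_iff₀ ha]

lemma IsBumpBounded.norm_inner_bump_le (hT : IsBumpBounded A T) (hA : 0 < A) (hε : 0 < ε)
    (x y : Fin n → ℤ) :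
    ‖inner ℂ (toL2 (bump hε x)) (T (bump hε y))‖ ≤ bumpSumBound n * (A * ε ^ n) := by
  have hB := one_le_bumpSumBound n
  refine (norm_inner_le_norm _ _).trans (abs_le_of_sq_le_sq' ?_ (by positivity)).2
  calc (‖toL2 (bump hε x)‖ * ‖T (bump hε y)‖) ^ 2
      ≤ ε ^ n * (bumpSumBound n * A ^ 2 * ε ^ n) := by
        rw [mul_pow]
        gcongr
        exacts [norm_toL2_bump_sq_le hε x, hT.norm_map_bump_sq_le hε y]
    _ = bumpSumBound n * (A * ε ^ n) ^ 2 := by ring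
    _ ≤ bumpSumBound n ^ 2 * (A * ε ^ n) ^ 2 := by
        gcongr
        exact le_self_pow₀ hB two_ne_zero
    _ = _ := (mul_pow _ _ _).symm

lemma IsCalderonZygmund.norm_inner_bump_le_of_four_le (h : IsCalderonZygmund T S A K) (hε : 0 < ε)
    {x y : Fin n → ℤ} (hxy : 4 ≤ ‖x - y‖) :
    ‖inner ℂ (toL2 (bump hε x)) (T (bump hε y))‖ ≤
      5 ^ n * ((1 + ‖x - y‖) ^ n)⁻¹ * (A * ε ^ n) := by
  have hA := h.isCZKernel.pos
  have hpos : 0 < ‖x - y‖ - 2 := by linarith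
  have hpair := h.isKernelOf.norm_inner_map_le_of_separated h.isCZKernel (F := bump hε y)
    (G := bump hε x) (d := ε * (‖x - y‖ - 2)) (by positivity) fun u hu v hv => by
      linarith [mul_norm_sub_le_of_mem_closedCube hε (by positivity) (tsupport_bump_subset hε x hu)
        (tsupport_bump_subset hε y hv)]
  rw [integral_norm_bump, integral_norm_bump] at hpair
  calc _ ≤ A / (ε * (‖x - y‖ - 2)) ^ n * ε ^ n * ε ^ n := hpair
    _ = ((‖x - y‖ - 2) ^ n)⁻¹ * (A * ε ^ n) := by
        rw [mul_pow]
        field_simp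
    _ ≤ (((1 + ‖x - y‖) / 5) ^ n)⁻¹ * (A * ε ^ n) := by
        gcongr
        linarith
    _ = _ := by
        rw [div_pow, inv_div, div_eq_mul_inv]

lemma IsCalderonZygmund.norm_latticeMatrix_le (h : IsCalderonZygmund T S A K) (hε : 0 < ε)
    (x y : Fin n → ℤ) :
    ‖latticeMatrix T A hε x y‖ ≤ latticeMatrixBound n * ((1 + ‖x - y‖) ^ n)⁻¹ := by
  have hA := h.isCZKernel.pos
  have hB := one_le_bumpSumBound n
  have hconst : 5 ^ n * bumpSumBound n ≤ latticeMatrixBound n :=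
    le_add_of_nonneg_right (by positivity)
  refine norm_div_ofReal_le (by positivity) ?_
  rcases lt_or_ge ‖x - y‖ 4 with hnear | hfar
  · refine (h.isBumpBounded.norm_inner_bump_le hA hε x y).trans ?_
    gcongr
    rw [← div_eq_mul_inv, le_div_iff₀ (by positivity)]
    calc bumpSumBound n * (1 + ‖x - y‖) ^ n ≤ bumpSumBound n * 5 ^ n := by
          gcongr
          linarith
      _ ≤ latticeMatrixBound n := by rwa [mul_comm]
  · refine (h.norm_inner_bump_le_of_four_le hε hfar).trans ?_
    gcongr
    exact (le_mul_of_one_le_right (by positivity) hB).trans hconst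

lemma half_mul_norm_sub_le_of_mem_closedCube (hε : 0 < ε) {x x' y : Fin n → ℤ} {w v : ℝ^n}
    (hxy : 2 * ‖x - x'‖ + 10 ≤ ‖x - y‖)
    (hw : w ∈ closedCube (latticePoint ε x) (ε * (1 + ‖x - x'‖)))
    (hv : v ∈ closedCube (latticePoint ε y) ε) : ε * (‖x - y‖ / 2) ≤ ‖w - v‖ := by
  have hsep := mul_norm_sub_le_of_mem_closedCube hε (by positivity) hw hv
  have hscaled : ε * (‖x - x'‖ + 2) ≤ ε * (‖x - y‖ / 2) := by
    gcongr
    linarith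
  linarith

lemma regularity_constant_le {A ε m d I J : ℝ} (hA : 0 < A) (hε : 0 < ε) (hm : 1 ≤ m) (hd : 0 < d)
    (hIJ : I * J ≤ 2 * ε ^ n * ε ^ n) :
    n * (A / (ε * (d / 2)) ^ (n + 1)) * (√n * (ε * (1 + m))) * I * J ≤
      latticeMatrixBound n * m / d ^ (n + 1) * (A * ε ^ n) := by
  have hB := one_le_bumpSumBound n
  rw [mul_assoc _ I J]
  refine (mul_le_mul_of_nonneg_left hIJ (by positivity)).trans ?_
  calc _ ≤ n * (A / (ε * (d / 2)) ^ (n + 1)) * (√n * (ε * (m + m))) * (2 * ε ^ n * ε ^ n) := by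
        gcongr
    _ = n * √n * 2 ^ (n + 3) * m / d ^ (n + 1) * (A * ε ^ n) := by
        rw [mul_pow, div_pow]
        field_simp
        ring
    _ ≤ _ := by
        gcongr
        exact le_add_of_nonneg_left (by positivity)

lemma IsCalderonZygmund.norm_latticeMatrix_sub_le_left (h : IsCalderonZygmund T S A K)
    (hε : 0 < ε) (x x' y : Fin n → ℤ) (hxy : 2 * ‖x - x'‖ + 10 ≤ ‖x - y‖) :
    ‖latticeMatrix T A hε x y - latticeMatrix T A hε x' y‖ ≤
      latticeMatrixBound n * ‖x - x'‖ / ‖x - y‖ ^ (n + 1) := by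
  have hA := h.isCZKernel.pos
  rcases eq_or_ne x x' with rfl | hne
  · simp
  have hd : 0 < ‖x - y‖ := by linarith [norm_nonneg (x - x')]
  rw [latticeMatrix, latticeMatrix, ← sub_div, ← inner_sub_left, ← map_sub]
  refine norm_div_ofReal_le (by positivity)
    ((h.isKernelOf.norm_inner_map_le_of_integral_left_eq_zero h.isCZKernel (by positivity)
      (by positivity) (tsupport_bump_sub_subset hε x x') (integral_bump_sub hε x x')
      fun u hu v hv => half_mul_norm_sub_le_of_mem_closedCube hε hxy hu
        (tsupport_bump_subset hε y hv)).trans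
    (regularity_constant_le hA hε (one_le_norm_of_ne_zero (sub_ne_zero.2 hne)) hd ?_))
  rw [integral_norm_bump, mul_comm]
  gcongr
  exact integral_norm_bump_sub_le hε x x'

lemma IsCalderonZygmund.norm_latticeMatrix_sub_le_right (h : IsCalderonZygmund T S A K)
    (hε : 0 < ε) (x x' y : Fin n → ℤ) (hxy : 2 * ‖x - x'‖ + 10 ≤ ‖x - y‖) :
    ‖latticeMatrix T A hε y x - latticeMatrix T A hε y x'‖ ≤
      latticeMatrixBound n * ‖x - x'‖ / ‖x - y‖ ^ (n + 1) := by
  have hA := h.isCZKernel.pos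
  rcases eq_or_ne x x' with rfl | hne
  · simp
  have hd : 0 < ‖x - y‖ := by linarith [norm_nonneg (x - x')]
  rw [latticeMatrix, latticeMatrix, ← sub_div, ← inner_sub_right, ← map_sub]
  refine norm_div_ofReal_le (by positivity)
    ((h.isKernelOf.norm_inner_map_le_of_integral_right_eq_zero h.isCZKernel (by positivity)
      (by positivity) (tsupport_bump_sub_subset hε x x') (integral_bump_sub hε x x')
      fun u hu v hv => norm_sub_rev v u ▸ half_mul_norm_sub_le_of_mem_closedCube hε hxy hv
        (tsupport_bump_subset hε y hu)).trans
    (regularity_constant_le hA hε (one_le_norm_of_ne_zero (sub_ne_zero.2 hne)) hd ?_))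
  rw [integral_norm_bump]
  gcongr
  exact integral_norm_bump_sub_le hε x x'

lemma abs_tentBump_sub_le (c : Fin n → ℤ) {ρ : ℝ} (hρ : 0 < ρ) (y y' : Fin n → ℤ) :
    |tentBump c ρ y - tentBump c ρ y'| ≤ ‖y - y'‖ / ρ := by
  have hlin : |(2 - ‖y - c‖ / ρ) - (2 - ‖y' - c‖ / ρ)| ≤ ‖y - y'‖ / ρ := by
    rw [sub_sub_sub_cancel_left, ← sub_div, abs_div, abs_of_pos hρ]
    gcongr
    exact (abs_norm_sub_norm_le _ _).trans_eq (by rw [sub_sub_sub_cancel_right, norm_sub_rev])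
  refine (abs_max_sub_max_le_max _ _ _ _).trans (max_le ?_ ?_)
  · rw [sub_self, abs_zero]
    positivity
  refine (abs_min_sub_min_le_max _ _ _ _).trans (max_le ?_ hlin)
  rw [sub_self, abs_zero]
  positivity

lemma IsBumpBounded.norm_map_bumpSum_tentBump_sq_le (hT : IsBumpBounded A T) (hε : 0 < ε)
    (c : Fin n → ℤ) {ρ : ℝ} (hρ : 1 ≤ ρ) {Y : Finset (Fin n → ℤ)}
    (hY : ∀ y, ‖y - c‖ < 2 * ρ → y ∈ Y) :
    ‖T (bumpSum hε Y fun y => (tentBump c ρ y : ℂ))‖ ^ 2 ≤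
      bumpSumBound n * A ^ 2 * (ε * ρ) ^ n := by
  have hρ₀ : 0 < ρ := by linarith
  have hzero : ∀ y, ¬ ‖y - c‖ < 2 * ρ → (tentBump c ρ y : ℂ) = 0 := fun y hy => by
    rw [tentBump_eq_zero hρ₀ (not_lt.1 hy), Complex.ofReal_zero]
  refine hT.norm_map_bumpSum_sq_le hε hρ (fun y hy => hzero y fun hlt => hy (hY y hlt))
    (norm_tentBump_le_one c ρ) (fun y hy => (not_imp_comm.1 (hzero y) hy).le) fun y y' hyy' => ?_
  rw [← Complex.ofReal_sub, Complex.norm_real]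
  refine (abs_tentBump_sub_le c hρ₀ y y').trans ?_
  gcongr

lemma IsBumpBounded.sum_norm_sum_latticeMatrix_sq_le (hT : IsBumpBounded A T) (hA : 0 < A)
    (hε : 0 < ε) (c : Fin n → ℤ) {ρ : ℝ} (hρ : 1 ≤ ρ) {Y : Finset (Fin n → ℤ)}
    (hY : ∀ y, ‖y - c‖ < 2 * ρ → y ∈ Y) (X : Finset (Fin n → ℤ)) :
    ∑ x ∈ X, ‖∑ y ∈ Y, latticeMatrix T A hε x y * (tentBump c ρ y : ℂ)‖ ^ 2 ≤
      latticeMatrixBound n * ρ ^ n := by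
  have hB := one_le_bumpSumBound n
  set v := T (bumpSum hε Y fun y => (tentBump c ρ y : ℂ)) with hv
  have hrow : ∀ x, ‖∑ y ∈ Y, latticeMatrix T A hε x y * (tentBump c ρ y : ℂ)‖ ^ 2 =
      ‖inner ℂ (toL2 (bump hε x)) v‖ ^ 2 / (A * ε ^ n) ^ 2 := fun x => by
    rw [← div_pow, ← Real.norm_of_nonneg (show 0 ≤ A * ε ^ n by positivity), ← Complex.norm_real,
      ← norm_div, hv, map_bumpSum, inner_sum, Finset.sum_div]
    simp only [latticeMatrix, inner_smul_right, mul_div_assoc, mul_comm]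
  simp only [hrow]
  rw [← Finset.sum_div, div_le_iff₀ (by positivity)]
  calc ∑ x ∈ X, ‖inner ℂ (toL2 (bump hε x)) v‖ ^ 2 ≤ ε ^ n * ‖v‖ ^ 2 :=
        sum_norm_inner_bump_sq_le hε X v
    _ ≤ ε ^ n * (bumpSumBound n * A ^ 2 * (ε * ρ) ^ n) := by
        gcongr
        exact hT.norm_map_bumpSum_tentBump_sq_le hε c hρ hY
    _ = bumpSumBound n * ρ ^ n * (A * ε ^ n) ^ 2 := by
        rw [mul_pow ε ρ]
        ring
    _ ≤ latticeMatrixBound n * ρ ^ n * (A * ε ^ n) ^ 2 := by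
        gcongr
        rw [latticeMatrixBound]
        have := le_mul_of_one_le_left (by positivity : 0 ≤ bumpSumBound n)
          (one_le_pow₀ (by norm_num : (1 : ℝ) ≤ 5) : (1 : ℝ) ≤ 5 ^ n)
        exact this.trans (le_add_of_nonneg_right (by positivity))

lemma IsCalderonZygmund.latticeMatrix_eq_conj (h : IsCalderonZygmund T S A K) (hε : 0 < ε)
    (x y : Fin n → ℤ) :
    latticeMatrix T A hε y x = starRingEnd ℂ (latticeMatrix S A hε x y) := by
  rw [latticeMatrix, latticeMatrix, map_div₀, Complex.conj_ofReal, inner_conj_symm, h.adjoint]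

lemma IsCalderonZygmund.isLatticeCZ_latticeMatrix (h : IsCalderonZygmund T S A K) (hε : 0 < ε) :
    IsLatticeCZ n (latticeMatrixBound n) (latticeMatrix T A hε) where
  size := h.norm_latticeMatrix_le hε
  regularity := h.norm_latticeMatrix_sub_le_left hε
  testing c _ hρ _ hY :=
    h.isBumpBounded.sum_norm_sum_latticeMatrix_sq_le h.isCZKernel.pos hε c hρ hY

lemma IsCalderonZygmund.isLatticeCZ_latticeMatrix_transpose (h : IsCalderonZygmund T S A K)
    (hε : 0 < ε) :
    IsLatticeCZ n (latticeMatrixBound n) fun x y => latticeMatrix T A hε y x where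
  size x y := by
    rw [norm_sub_rev]
    exact h.norm_latticeMatrix_le hε y x
  regularity := h.norm_latticeMatrix_sub_le_right hε
  testing c ρ hρ Y hY X := by
    have hconj : ∀ x, ‖∑ y ∈ Y, latticeMatrix T A hε y x * (tentBump c ρ y : ℂ)‖ =
        ‖∑ y ∈ Y, latticeMatrix S A hε x y * (tentBump c ρ y : ℂ)‖ := fun x => by
      rw [← RCLike.norm_conj, map_sum]
      simp only [h.latticeMatrix_eq_conj hε x, map_mul, Complex.conj_conj, Complex.conj_ofReal]
    simp only [hconj]
    exact h.isBumpBounded_adjoint.sum_norm_sum_latticeMatrix_sq_le h.isCZKernel.pos hε c hρ hY X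

lemma inner_map_bumpSum_eq_sum_latticeMatrix (hA : 0 < A) (hε : 0 < ε)
    (X Y : Finset (Fin n → ℤ)) (f g : (Fin n → ℤ) → ℂ) :
    inner ℂ (toL2 (bumpSum hε X g)) (T (bumpSum hε Y f)) = ((A * ε ^ n : ℝ) : ℂ) *
      ∑ x ∈ X, ∑ y ∈ Y, latticeMatrix T A hε x y * f y * starRingEnd ℂ (g x) := by
  have hne : ((A * ε ^ n : ℝ) : ℂ) ≠ 0 := Complex.ofReal_ne_zero.2 (by positivity)
  rw [map_bumpSum, map_bumpSum, sum_inner, Finset.mul_sum]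
  refine Finset.sum_congr rfl fun x _ => ?_
  rw [inner_sum, Finset.mul_sum]
  refine Finset.sum_congr rfl fun y _ => ?_
  rw [inner_smul_left, inner_smul_right, latticeMatrix]
  field_simp

lemma IsCalderonZygmund.norm_inner_map_bumpSum_le (h : IsCalderonZygmund T S A K) (hε : 0 < ε)
    {N : ℕ} {f g : (Fin n → ℤ) → ℂ} (hf : ∀ x ∉ levelBox n 1 N 0, f x = 0)
    (hg : ∀ x ∉ levelBox n 1 N 0, g x = 0) :
    ‖inner ℂ (toL2 (bumpSum hε (levelBox n 1 N 0) g)) (T (bumpSum hε (levelBox n 1 N 0) f))‖ ≤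
      A * latticeT1Bound n (latticeMatrixBound n) * (ε ^ n * ∑ x ∈ levelBox n 1 N 0, ‖f x‖ ^ 2 +
        ε ^ n * ∑ x ∈ levelBox n 1 N 0, ‖g x‖ ^ 2) := by
  have hA := h.isCZKernel.pos
  have hlattice := (h.isLatticeCZ_latticeMatrix hε).norm_sum_sum_mul_le
    (h.isLatticeCZ_latticeMatrix_transpose hε) (latticeMatrixBound_pos n) hf
    (g := fun x => starRingEnd ℂ (g x)) fun x hx => by rw [hg x hx, map_zero]
  simp only [RCLike.norm_conj] at hlattice
  rw [inner_map_bumpSum_eq_sum_latticeMatrix hA, norm_mul, Complex.norm_real,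
    Real.norm_of_nonneg (by positivity)]
  refine (mul_le_mul_of_nonneg_left hlattice (by positivity)).trans_eq ?_
  ring

end LatticeMatrix

/-! ### Approximation by sums of bumps -/

section Approximation

variable {n : ℕ} {ε : ℝ}

/-- The average of `f` against the bump `φ_y` at scale `ε`, that is `⟨f, φ_y⟩ / ∫ φ_y`. -/
def bumpAverage (hε : 0 < ε) (f : compactC1 n) (y : Fin n → ℤ) : ℂ :=
  inner ℂ (toL2 (bump hε y)) (toL2 f) / ((ε ^ n : ℝ) : ℂ)

/-- The approximation of `f` at scale `ε` by the sum of the bumps centred in the cube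
`[-2^N, 2^N)ⁿ` of the lattice, with the averages of `f` as coefficients. -/
def bumpApprox (hε : 0 < ε) (N : ℕ) (f : compactC1 n) : compactC1 n :=
  bumpSum hε (levelBox n 1 N 0) (bumpAverage hε f)

variable {f : compactC1 n} {R : ℝ} {N : ℕ}

lemma inner_toL2_bump (hε : 0 < ε) (f : compactC1 n) (y : Fin n → ℤ) :
    inner ℂ (toL2 (bump hε y)) (toL2 f) = ∫ x, f.1 x * (bump hε y).1 x := by
  rw [inner_toL2_left]
  refine integral_congr_ae ?_
  filter_upwards [coeFn_toL2 f] with x hx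
  rw [hx]
  exact congrArg (f.1 x * ·) (Complex.conj_ofReal _)

lemma norm_bumpAverage_sub_le (hε : 0 < ε) {y : Fin n → ℤ} {w : ℂ} {D : ℝ}
    (hD : ∀ u ∈ closedCube (latticePoint ε y) ε, ‖f.1 u - w‖ ≤ D) :
    ‖bumpAverage hε f y - w‖ ≤ D := by
  have hV : ((ε ^ n : ℝ) : ℂ) ≠ 0 := Complex.ofReal_ne_zero.2 (by positivity)
  have hconst : ∫ u, w * (bump hε y).1 u = w * ((ε ^ n : ℝ) : ℂ) := by
    rw [integral_const_mul, integral_bump, Complex.ofReal_pow]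
  have hφ := integrable_compactC1 (bump hε y)
  have hfφ : Integrable fun u => f.1 u * (bump hε y).1 u :=
    (f.2.1.continuous.mul (bump hε y).2.1.continuous).integrable_of_hasCompactSupport
      f.2.2.mul_right
  have hdiff := norm_integral_mul_sub_integral_mul_le hφ hfφ (hφ.const_mul w) fun u hu =>
    hD u (tsupport_bump_subset hε y (subset_tsupport _ hu))
  rw [hconst, integral_norm_bump] at hdiff
  rw [bumpAverage, inner_toL2_bump, div_sub' hV, mul_comm _ w]
  exact norm_div_ofReal_le (by positivity) hdiff

lemma mul_sum_norm_bumpAverage_sq_le (hε : 0 < ε) (S : Finset (Fin n → ℤ)) :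
    ε ^ n * ∑ y ∈ S, ‖bumpAverage hε f y‖ ^ 2 ≤ ‖toL2 f‖ ^ 2 := by
  have hV : 0 < ε ^ n := by positivity
  have hbessel := sum_norm_inner_bump_sq_le hε S (toL2 f)
  simp only [bumpAverage, norm_div, Complex.norm_real, Real.norm_of_nonneg hV.le, div_pow]
  rw [← Finset.sum_div, sq (ε ^ n), ← mul_div_assoc, mul_div_mul_left _ _ hV.ne', div_le_iff₀ hV,
    mul_comm]
  exact hbessel

lemma norm_bumpAverage_sub_apply_le (hε : 0 < ε) {Λ : NNReal} (hf : LipschitzWith Λ f.1)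
    {y : Fin n → ℤ} {z : ℝ^n} {t : ℝ} (ht : 0 ≤ t)
    (hz : z ∈ closedCube (latticePoint ε y) (ε * t)) :
    ‖bumpAverage hε f y - f.1 z‖ ≤ Λ * (√n * (ε * (1 + t))) := by
  refine norm_bumpAverage_sub_le hε fun u hu => ?_
  rw [← dist_eq_norm]
  refine (hf.dist_le_mul u z).trans ?_
  gcongr
  rw [dist_eq_norm]
  refine euclideanNorm_le_sqrt_mul (by positivity) fun i => ?_
  have htri := abs_sub_le (u i) (latticePoint ε y i) (z i)
  rw [abs_sub_comm (latticePoint ε y i)] at htri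
  rw [PiLp.sub_apply]
  linarith [hu i, hz i]

lemma latticePoint_mem_closedCube (hε : 0 < ε) {y y' : Fin n → ℤ} {t : ℝ} (h : ‖y - y'‖ ≤ t) :
    latticePoint ε y ∈ closedCube (latticePoint ε y') (ε * t) := fun i => by
  rw [latticePoint_apply, latticePoint_apply, ← mul_sub, abs_mul, abs_of_pos hε]
  gcongr
  simpa using (abs_apply_le_norm (y - y') i).trans h

lemma norm_bumpAverage_sub_bumpAverage_le (hε : 0 < ε) {Λ : NNReal} (hf : LipschitzWith Λ f.1)
    {y y' : Fin n → ℤ} (h : ‖y - y'‖ ≤ 2) :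
    ‖bumpAverage hε f y - bumpAverage hε f y'‖ ≤ Λ * (√n * 4) * ε := by
  have hy := norm_bumpAverage_sub_apply_le hε hf (z := latticePoint ε y) le_rfl
    (latticePoint_mem_closedCube hε (y' := y) (by simp))
  have hy' := norm_bumpAverage_sub_apply_le hε hf zero_le_two (latticePoint_mem_closedCube hε h)
  rw [norm_sub_rev] at hy'
  calc _ ≤ _ := norm_sub_le_norm_sub_add_norm_sub _ (f.1 (latticePoint ε y)) _
    _ ≤ _ := add_le_add hy hy'
    _ = _ := by ring

lemma latticePoint_zero (ε : ℝ) : latticePoint ε (0 : Fin n → ℤ) = 0 := by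
  ext i
  simp [latticePoint_apply]

lemma norm_le_of_bumpAverage_ne_zero (hε : 0 < ε) (hR : 0 ≤ R)
    (hfR : Function.support f.1 ⊆ closedCube 0 R) {y : Fin n → ℤ}
    (hy : bumpAverage hε f y ≠ 0) : ‖y‖ ≤ R / ε + 1 := by
  obtain ⟨u, huy, hfu⟩ : ∃ u ∈ closedCube (latticePoint ε y) ε, f.1 u ≠ 0 := by
    by_contra! hzero
    have hle := norm_bumpAverage_sub_le hε (f := f) (y := y) (w := 0) (D := 0) fun u hu => by
      rw [hzero u hu, sub_zero, norm_zero]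
    exact hy (by simpa using hle)
  have hu₀ := hfR hfu
  rw [← latticePoint_zero ε] at hu₀
  have hdist := mul_norm_sub_le_of_mem_closedCube hε (by positivity) huy hu₀
  rw [sub_zero, sub_self, norm_zero, zero_add, ← le_div_iff₀' hε, add_div, div_self hε.ne'] at hdist
  linarith

lemma bumpAverage_eq_zero_of_notMem (hε : 0 < ε) (hR : 0 ≤ R)
    (hfR : Function.support f.1 ⊆ closedCube 0 R) (hN : R / ε + 1 < 2 ^ N) :
    ∀ y ∉ levelBox n 1 N 0, bumpAverage hε f y = 0 := by
  refine fun y hy => not_imp_comm.1 (fun hne => mem_box.2 fun i => ?_) hy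
  have hlt : |(y i : ℝ)| < 2 ^ N :=
    ((abs_apply_le_norm y i).trans (norm_le_of_bumpAverage_ne_zero hε hR hfR hne)).trans_lt hN
  have hlt' : |y i| < 2 ^ N := by exact_mod_cast hlt
  rw [abs_lt] at hlt'
  push_cast
  rw [one_mul, Nat.sub_zero]
  exact ⟨hlt'.1.le, hlt'.2⟩

lemma tsupport_bumpApprox_subset (hε : 0 < ε) (hε1 : ε ≤ 1) (hR : 0 ≤ R)
    (hfR : Function.support f.1 ⊆ closedCube 0 R) (N : ℕ) :
    tsupport (bumpApprox hε N f).1 ⊆ closedCube 0 (R + 2) := by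
  refine (tsupport_bumpSum_subset hε (levelBox n 1 N 0) 0 (R := R / ε + 1) fun y hy => ?_).trans ?_
  · rw [sub_zero]
    exact norm_le_of_bumpAverage_ne_zero hε hR hfR hy
  · rw [latticePoint_zero]
    refine fun x hx i => (hx i).trans ?_
    have hside : ε * (R / ε + 1 + 1) = R + 2 * ε := by field_simp; ring
    linarith

lemma norm_bumpApprox_sub_le (hε : 0 < ε) (hR : 0 ≤ R)
    (hfR : Function.support f.1 ⊆ closedCube 0 R) (hN : R / ε + 1 < 2 ^ N) {Λ : NNReal}
    (hf : LipschitzWith Λ f.1) (z : ℝ^n) :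
    ‖(bumpApprox hε N f).1 z - f.1 z‖ ≤ Λ * (√n * 2) * ε := by
  have hfloor : ∀ i, ((⌊z i / ε⌋ : ℤ) : ℝ) ≤ z i / ε ∧ z i / ε ≤ (⌈z i / ε⌉ : ℤ) :=
    fun i => ⟨Int.floor_le _, Int.le_ceil _⟩
  rw [bumpApprox, coe_bumpSum, partitionSum_eq_add_sum_Icc
    (bumpAverage_eq_zero_of_notMem hε hR hfR hN) hfloor (f.1 z), add_sub_cancel_left]
  calc _ ≤ ∑ y ∈ Finset.Icc (fun i => ⌊z i / ε⌋) fun i => ⌈z i / ε⌉,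
        Λ * (√n * 2) * ε * partitionBump ε y z := by
        refine (norm_sum_le _ _).trans (Finset.sum_le_sum fun y _ => ?_)
        rw [norm_mul, norm_partitionBump]
        rcases eq_or_ne (partitionBump ε y z) 0 with hzero | hne
        · simp [hzero]
        refine mul_le_mul_of_nonneg_right ?_ (partitionBump_nonneg ε y z)
        refine (norm_bumpAverage_sub_apply_le hε hf zero_le_one ?_).trans_eq (by ring)
        rw [mul_one]
        exact mem_closedCube_of_partitionBump_ne_zero hε hne
    _ = _ := by rw [← Finset.mul_sum, sum_Icc_partitionBump hfloor, mul_one]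

lemma norm_toL2_le_of_support_subset {g : compactC1 n} {s : Set ℝ^n} (hs : IsCompact s) {D : ℝ}
    (hD₀ : 0 ≤ D) (hg : Function.support g.1 ⊆ s) (hD : ∀ x, ‖g.1 x‖ ≤ D) :
    ‖toL2 g‖ ≤ √(volume.real s) * D := by
  refine (abs_le_of_sq_le_sq' ?_ (by positivity)).2
  calc ‖toL2 g‖ ^ 2 = ∫ x, ‖g.1 x‖ ^ 2 := norm_toL2_sq g
    _ ≤ ∫ x, s.indicator (fun _ => D ^ 2) x := by
        refine integral_mono_of_nonneg (Filter.Eventually.of_forall fun x => by positivity)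
          ((integrable_indicator_iff hs.measurableSet).2 (integrableOn_const hs.measure_lt_top.ne))
          (Filter.Eventually.of_forall fun x => Set.le_indicator_apply (fun _ => ?_) fun hx => ?_)
        · exact pow_le_pow_left₀ (norm_nonneg _) (hD x) 2
        · simp [Function.notMem_support.1 fun hgx => hx (hg hgx)]
    _ = (√(volume.real s) * D) ^ 2 := by
        rw [integral_indicator_const _ hs.measurableSet, smul_eq_mul, mul_pow,
          Real.sq_sqrt measureReal_nonneg]

lemma norm_toL2_sub_bumpApprox_le (hε : 0 < ε) (hε1 : ε ≤ 1) (hR : 0 ≤ R)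
    (hfR : Function.support f.1 ⊆ closedCube 0 R) (hN : R / ε + 1 < 2 ^ N) {Λ : NNReal}
    (hf : LipschitzWith Λ f.1) :
    ‖toL2 f - toL2 (bumpApprox hε N f)‖ ≤
      √(volume.real (closedCube (0 : ℝ^n) (R + 2))) * (Λ * (√n * 2) * ε) := by
  rw [← map_sub]
  refine norm_toL2_le_of_support_subset (isCompact_closedCube 0 (by positivity)) (by positivity)
    ((Function.support_sub _ _).trans (Set.union_subset (fun x hx i => (hfR hx i).trans ?_) ?_))
    fun x => ?_
  · linarith
  · exact (subset_tsupport _).trans (tsupport_bumpApprox_subset hε hε1 hR hfR N)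
  · exact (norm_sub_rev _ _).trans_le (norm_bumpApprox_sub_le hε hR hfR hN hf x)

lemma IsBumpBounded.norm_map_bumpApprox_sq_le {A : ℝ} {T : compactC1 n →ₗ[ℂ] L²(ℝ^n)}
    (hT : IsBumpBounded A T) (hε : 0 < ε) (hε1 : ε ≤ 1) (hR : 0 ≤ R)
    (hfR : Function.support f.1 ⊆ closedCube 0 R) (hN : R / ε + 1 < 2 ^ N) {Λ : NNReal}
    (hf : LipschitzWith Λ f.1) {M : ℝ} (hM : 0 < M) (hfM : ∀ x, ‖f.1 x‖ ≤ M) :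
    ‖T (bumpApprox hε N f)‖ ^ 2 ≤
      (M + 5 ^ n * (Λ * (√n * 4)) * smoothHatLip * ((n + 1) * (R + 2))) ^ 2 * A ^ 2 *
        ((n + 1) * (R + 2)) ^ n := by
  have hr : 0 < (n + 1) * (R + 2) := by positivity
  refine hT.norm_map_sq_le (c := 0) hr (by positivity) ?_ (fun x => ?_) fun i x => ?_
  · refine (tsupport_bumpApprox_subset hε hε1 hR hfR N).trans ((closedCube_subset_closedBall _
      (by positivity)).trans (closedBall_subset_closedBall ?_))
    gcongr
    exact sqrt_natCast_le_add_one n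
  · rw [bumpApprox, coe_bumpSum]
    refine (norm_partitionSum_le ε _ hM.le (fun y => ?_) x).trans
      (le_add_of_nonneg_right (by positivity))
    simpa using norm_bumpAverage_sub_le hε (w := 0) fun u _ => by simpa using hfM u
  · rw [bumpApprox, coe_bumpSum]
    refine (norm_fderiv_partitionSum_le hε (bumpAverage_eq_zero_of_notMem hε hR hfR hN)
      (by positivity) (fun y y' h => norm_bumpAverage_sub_bumpAverage_le hε hf h) x i).trans ?_
    rw [le_div_iff₀ hr]
    refine le_trans (le_of_eq ?_) (le_add_of_nonneg_left hM.le)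
    field_simp

lemma exists_support_subset_closedCube (f : compactC1 n) :
    ∃ R, 0 ≤ R ∧ Function.support f.1 ⊆ closedCube 0 R := by
  obtain ⟨R, hR⟩ := f.2.2.isCompact.isBounded.subset_closedBall (0 : ℝ^n)
  refine ⟨|R|, abs_nonneg R, fun x hx i => ?_⟩
  have hxR := mem_closedBall_zero_iff.1 (hR (subset_tsupport _ hx))
  simpa using (abs_apply_le_euclideanNorm x i).trans (hxR.trans (le_abs_self R))

lemma IsBumpBounded.exists_bumpApprox_bound {A : ℝ} {T : compactC1 n →ₗ[ℂ] L²(ℝ^n)}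
    (hT : IsBumpBounded A T) (f : compactC1 n) :
    ∃ B, 0 ≤ B ∧ ∀ ε (hε : 0 < ε), ε ≤ 1 → ∀ᶠ N in Filter.atTop,
      (∀ y ∉ levelBox n 1 N 0, bumpAverage hε f y = 0) ∧ ‖T (bumpApprox hε N f)‖ ≤ B ∧
        ‖toL2 f - toL2 (bumpApprox hε N f)‖ ≤ B * ε := by
  obtain ⟨Λ, hΛ⟩ := f.2.1.lipschitzWith_of_hasCompactSupport f.2.2 one_ne_zero
  obtain ⟨M, hM⟩ := f.2.1.continuous.bounded_above_of_compact_support f.2.2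
  obtain ⟨R, hR, hfR⟩ := exists_support_subset_closedCube f
  set B₁ := √((|M| + 1 + 5 ^ n * (Λ * (√n * 4)) * smoothHatLip * ((n + 1) * (R + 2))) ^ 2 * A ^ 2 *
    ((n + 1) * (R + 2)) ^ n)
  set B₂ := √(volume.real (closedCube (0 : ℝ^n) (R + 2))) * (Λ * (√n * 2))
  refine ⟨max B₁ B₂, le_max_of_le_left (Real.sqrt_nonneg _), fun ε hε hε1 => ?_⟩
  filter_upwards [(tendsto_pow_atTop_atTop_of_one_lt (one_lt_two (α := ℝ))).eventually_gt_atTop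
    (R / ε + 1)] with N hN
  refine ⟨bumpAverage_eq_zero_of_notMem hε hR hfR hN, le_max_of_le_left (Real.le_sqrt_of_sq_le ?_),
    (norm_toL2_sub_bumpApprox_le hε hε1 hR hfR hN hΛ).trans ?_⟩
  · exact hT.norm_map_bumpApprox_sq_le hε hε1 hR hfR hN hΛ (by positivity) fun x => by
      linarith [hM x, le_abs_self M]
  · rw [← mul_assoc]
    gcongr
    exact le_max_right _ _

end Approximation

/-! ### The operator bound -/

section OperatorBound

variable {n : ℕ} {T S : compactC1 n →ₗ[ℂ] L²(ℝ^n)} {A : ℝ} {K : ℝ^n → ℝ^n → ℂ}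

lemma IsCalderonZygmund.norm_inner_map_bumpApprox_le (h : IsCalderonZygmund T S A K) {ε : ℝ}
    (hε : 0 < ε) {N : ℕ} {f g : compactC1 n}
    (hf : ∀ y ∉ levelBox n 1 N 0, bumpAverage hε f y = 0)
    (hg : ∀ y ∉ levelBox n 1 N 0, bumpAverage hε g y = 0) :
    ‖inner ℂ (toL2 (bumpApprox hε N g)) (T (bumpApprox hε N f))‖ ≤
      A * latticeT1Bound n (latticeMatrixBound n) * (‖toL2 f‖ ^ 2 + ‖toL2 g‖ ^ 2) := by
  have hA := h.isCZKernel.pos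
  have hC := latticeT1Bound_pos (n := n) (latticeMatrixBound_pos n)
  refine (h.norm_inner_map_bumpSum_le hε hf hg).trans ?_
  gcongr <;> exact mul_sum_norm_bumpAverage_sq_le hε _

lemma IsCalderonZygmund.inner_map_eq_add_add (h : IsCalderonZygmund T S A K)
    (f g F G : compactC1 n) :
    inner ℂ (toL2 g) (T f) = inner ℂ (S g) (toL2 f - toL2 F) +
      inner ℂ (toL2 g - toL2 G) (T F) + inner ℂ (toL2 G) (T F) := by
  rw [inner_sub_right, inner_sub_left, ← h.adjoint, ← h.adjoint]
  ring

lemma IsCalderonZygmund.norm_inner_map_le (h : IsCalderonZygmund T S A K) (f g : compactC1 n) :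
    ‖inner ℂ (toL2 g) (T f)‖ ≤
      A * latticeT1Bound n (latticeMatrixBound n) * (‖toL2 f‖ ^ 2 + ‖toL2 g‖ ^ 2) := by
  obtain ⟨Bf, -, Hf⟩ := h.isBumpBounded.exists_bumpApprox_bound f
  obtain ⟨Bg, hBg, Hg⟩ := h.isBumpBounded.exists_bumpApprox_bound g
  set C := A * latticeT1Bound n (latticeMatrixBound n) * (‖toL2 f‖ ^ 2 + ‖toL2 g‖ ^ 2)
  have hscale : ∀ ε ∈ Set.Ioc (0 : ℝ) 1,
      ‖inner ℂ (toL2 g) (T f)‖ ≤ (‖S g‖ * Bf + Bg * Bf) * ε + C := by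
    rintro ε ⟨hε, hε1⟩
    obtain ⟨N, ⟨hf₀, hTF, hfF⟩, hg₀, -, hgG⟩ := ((Hf ε hε hε1).and (Hg ε hε hε1)).exists
    set F := bumpApprox hε N f
    set G := bumpApprox hε N g
    rw [h.inner_map_eq_add_add f g F G]
    calc _ ≤ ‖S g‖ * ‖toL2 f - toL2 F‖ + ‖toL2 g - toL2 G‖ * ‖T F‖ +
          ‖inner ℂ (toL2 G) (T F)‖ := by
          refine norm_add₃_le.trans ?_
          gcongr <;> exact norm_inner_le_norm _ _
      _ ≤ ‖S g‖ * (Bf * ε) + Bg * ε * Bf + C := by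
          gcongr
          exact h.norm_inner_map_bumpApprox_le hε hf₀ hg₀
      _ = _ := by ring
  have hlim : Filter.Tendsto (fun ε => (‖S g‖ * Bf + Bg * Bf) * ε + C) (nhdsWithin 0 (Set.Ioi 0))
      (nhds ((‖S g‖ * Bf + Bg * Bf) * 0 + C)) :=
    ((continuous_const.mul continuous_id).add continuous_const).continuousWithinAt
  rw [mul_zero, zero_add] at hlim
  refine ge_of_tendsto hlim ?_
  filter_upwards [Ioc_mem_nhdsGT one_pos] using hscale

lemma denseRange_toL2 (n : ℕ) : DenseRange (toL2 : compactC1 n → L²(ℝ^n)) := by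
  refine (Lp.dense_hasCompactSupport_contDiff (F := ℂ) (p := 2) (by simp)).mono ?_
  rintro v ⟨g, hvg, hg, hg'⟩
  exact ⟨⟨g, hg'.of_le (by exact_mod_cast le_top), hg⟩, Lp.ext ((coeFn_toL2 _).trans hvg.symm)⟩

/-- Testing against a small multiple of `w` turns the quadratic bound into a linear one. -/
lemma norm_le_of_forall_norm_inner_le {E : Type*} [NormedAddCommGroup E] [InnerProductSpace ℂ E]
    {w : E} {C a : ℝ} (hC : 0 < C) (ha : 0 ≤ a)
    (h : ∀ v : E, ‖inner ℂ v w‖ ≤ C * (a ^ 2 + ‖v‖ ^ 2)) : ‖w‖ ≤ 2 * C * a := by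
  have hs : 0 < 1 / (2 * C) := by positivity
  have htest := h (((1 / (2 * C) : ℝ) : ℂ) • w)
  rw [inner_smul_left, inner_self_eq_norm_sq_to_K, norm_smul, norm_mul, RCLike.norm_conj,
    Complex.norm_real, Real.norm_of_nonneg hs.le, norm_pow, RCLike.norm_ofReal,
    abs_of_nonneg (norm_nonneg _)] at htest
  have hquarter : ‖w‖ ^ 2 / (4 * C) ≤ C * a ^ 2 := by
    have hleft : 1 / (2 * C) * ‖w‖ ^ 2 = 2 * (‖w‖ ^ 2 / (4 * C)) := by field_simp; ring
    have hright : C * (a ^ 2 + (1 / (2 * C) * ‖w‖) ^ 2) = C * a ^ 2 + ‖w‖ ^ 2 / (4 * C) := by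
      field_simp; ring
    linarith
  rw [div_le_iff₀ (by positivity)] at hquarter
  exact (abs_le_of_sq_le_sq' (hquarter.trans_eq (by ring)) (by positivity)).2

lemma IsCalderonZygmund.norm_map_le (h : IsCalderonZygmund T S A K) (f : compactC1 n) :
    ‖T f‖ ≤ 2 * latticeT1Bound n (latticeMatrixBound n) * A * ‖toL2 f‖ := by
  have hA := h.isCZKernel.pos
  have hC := latticeT1Bound_pos (n := n) (latticeMatrixBound_pos n)
  refine (norm_le_of_forall_norm_inner_le (C := A * latticeT1Bound n (latticeMatrixBound n))
    (by positivity) (norm_nonneg (toL2 f)) fun v => ?_).trans_eq (by ring)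
  exact (denseRange_toL2 n).induction_on v (isClosed_le (by fun_prop) (by fun_prop))
    (h.norm_inner_map_le f)

lemma exists_clm_extension {C : ℝ} (hC : 0 ≤ C) (h : ∀ f, ‖T f‖ ≤ C * ‖toL2 f‖) :
    ∃ Tbar : L²(ℝ^n) →L[ℂ] L²(ℝ^n), ‖Tbar‖ ≤ C ∧ ∀ f, Tbar (toL2 f) = T f :=
  ⟨T.extendOfNorm toL2, LinearMap.opNorm_extendOfNorm_le (denseRange_toL2 n) hC h,
    LinearMap.extendOfNorm_eq (denseRange_toL2 n) ⟨C, h⟩⟩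

end OperatorBound

/-- **A `T(1)` theorem on `ℝⁿ`.**  For every `n ≥ 1` there is `C₀ > 0` such that:
if `T` is linear on `C¹_c(ℝⁿ)` with formal adjoint `T*`, satisfies the bump estimates
`‖Tω‖₂, ‖T*ω‖₂ ≤ A r^{n/2}` for all `r`-bump functions, and is represented off the
diagonal by a kernel `K` which is `C¹` off the diagonal and satisfies the standard
Calderón–Zygmund size and first-derivative estimates with constant `A`, then `T`
extends to a bounded operator on `L²(ℝⁿ)` of norm at most `C₀ A`. -/
theorem statement_0 (n : ℕ) (hn : 1 ≤ n) :
    ∃ C₀ : ℝ, 0 < C₀ ∧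
    ∀ (T Tstar : (EuclideanSpace ℝ (Fin n) → ℂ) →ₗ[ℂ]
        Lp ℂ 2 (volume : Measure (EuclideanSpace ℝ (Fin n))))
      (A : ℝ), 0 < A →
      -- `T*` is a formal adjoint of `T` on `C¹_c`
      (∀ f g : EuclideanSpace ℝ (Fin n) → ℂ,
        ContDiff ℝ 1 f → HasCompactSupport f → ContDiff ℝ 1 g → HasCompactSupport g →
        ∫ x, (T f : EuclideanSpace ℝ (Fin n) → ℂ) x * (starRingEnd ℂ) (g x) =
          ∫ x, f x * (starRingEnd ℂ) ((Tstar g : EuclideanSpace ℝ (Fin n) → ℂ) x)) →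
      -- (i) bump estimates
      (∀ r : ℝ, 0 < r → ∀ ω, IsBump n r ω →
        ‖T ω‖ ≤ A * r ^ ((n : ℝ) / 2) ∧ ‖Tstar ω‖ ≤ A * r ^ ((n : ℝ) / 2)) →
      -- (ii), (iii) kernel representation and Calderón–Zygmund estimates
      (∃ K : EuclideanSpace ℝ (Fin n) → EuclideanSpace ℝ (Fin n) → ℂ,
        ContDiffOn ℝ 1 (fun p : EuclideanSpace ℝ (Fin n) × EuclideanSpace ℝ (Fin n) =>
          K p.1 p.2) {p | p.1 ≠ p.2} ∧
        (∀ F, ContDiff ℝ 1 F → HasCompactSupport F →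
          ∀ᵐ x ∂(volume : Measure (EuclideanSpace ℝ (Fin n))), x ∉ tsupport F →
            (T F : EuclideanSpace ℝ (Fin n) → ℂ) x = ∫ y, K x y * F y) ∧
        (∀ x y, x ≠ y → ‖K x y‖ ≤ A / ‖x - y‖ ^ n) ∧
        (∀ i : Fin n, ∀ x y, x ≠ y →
          ‖fderiv ℝ (fun x' => K x' y) x (EuclideanSpace.single i 1)‖ ≤ A / ‖x - y‖ ^ (n + 1) ∧
          ‖fderiv ℝ (fun y' => K x y') y (EuclideanSpace.single i 1)‖ ≤ A / ‖x - y‖ ^ (n + 1))) →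
      ∃ Tbar : Lp ℂ 2 (volume : Measure (EuclideanSpace ℝ (Fin n))) →L[ℂ]
          Lp ℂ 2 (volume : Measure (EuclideanSpace ℝ (Fin n))),
        ‖Tbar‖ ≤ C₀ * A ∧
        ∀ f, ContDiff ℝ 1 f → HasCompactSupport f →
          ∀ hm : MemLp f 2 (volume : Measure (EuclideanSpace ℝ (Fin n))),
            Tbar (hm.toLp f) = T f := by
  have hC := latticeT1Bound_pos (n := n) (latticeMatrixBound_pos n)
  refine ⟨2 * latticeT1Bound n (latticeMatrixBound n), by positivity, ?_⟩
  rintro T Tstar A hA hadj hbump ⟨K, hdiff, hrep, hsize, hderiv⟩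
  have h : IsCalderonZygmund (T ∘ₗ (compactC1 n).subtype) (Tstar ∘ₗ (compactC1 n).subtype) A K :=
    { isCZKernel := ⟨hA, hdiff, hsize, hderiv⟩
      isKernelOf := fun F => hrep F.1 F.2.1 F.2.2
      adjoint := fun f g => by
        rw [inner_toL2_left, inner_toL2_right]
        exact hadj f.1 g.1 f.2.1 f.2.2 g.2.1 g.2.2
      isBumpBounded := fun r hr ω hω => (hbump r hr ω.1 hω).1
      isBumpBounded_adjoint := fun r hr ω hω => (hbump r hr ω.1 hω).2 }
  obtain ⟨Tbar, hnorm, hTbar⟩ := exists_clm_extension (by positivity) h.norm_map_le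
  exact ⟨Tbar, hnorm, fun f hf hfc _ => hTbar ⟨f, hf, hfc⟩⟩
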